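/- Every finite dimensional compact metric space K satisfies 2·dim K − 1 ≤ dim K² ≤ 2·dim K; consequently either dim K² = 2·dim K or dim K² = 2·dim K − 1. -/

import Mathlib

open Filter Set
open scoped ENNReal

namespace MeanDimPaper

variable {X : Type*} [TopologicalSpace X]

/-- `α` is an open cover of `X`. -/
def IsOpenCover (α : Set (Set X)) : Prop :=
  (∀ U ∈ α, IsOpen U) ∧ ⋃₀ α = Set.univ

/-- The order of a cover `α`: the maximum `n ≥ 0` such that there exist `n + 1`
pairwise distinct members of `α` with nonempty common intersection. -/
noncomputable def ord (α : Set (Set X)) : ℕ∞ :=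
  ⨆ n ∈ {n : ℕ | ∃ f : Fin (n + 1) → Set X,
      Function.Injective f ∧ (∀ i, f i ∈ α) ∧ (⋂ i, f i).Nonempty}, (n : ℕ∞)

/-- `β` refines `α`: every member of `β` is contained in some member of `α`. -/
def Refines (β α : Set (Set X)) : Prop := ∀ V ∈ β, ∃ U ∈ α, V ⊆ U

/-- `D(α)`: the minimum of `ord β` over open covers `β` refining `α`. -/
noncomputable def covD (α : Set (Set X)) : ℕ∞ :=
  ⨅ β ∈ {β : Set (Set X) | IsOpenCover β ∧ Refines β α}, ord β

/-- Topological (covering) dimension: the supremum of `D(α)` over open covers `α`. -/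
noncomputable def topDim (X : Type*) [TopologicalSpace X] : ℕ∞ :=
  ⨆ α ∈ {α : Set (Set X) | IsOpenCover α}, covD α

/-- Diameter of a set with respect to a distance function `d`. -/
noncomputable def diamD (d : X → X → ℝ) (U : Set X) : ℝ :=
  sSup {r | ∃ x ∈ U, ∃ y ∈ U, r = d x y}

/-- Mesh of a cover: the supremum of the diameters of its members. -/
noncomputable def mesh (d : X → X → ℝ) (α : Set (Set X)) : ℝ :=
  sSup (diamD d '' α)

/-- `widim_ε(X, d)`: the minimum of `D(α)` over open covers `α` with `mesh(α, d) < ε`. -/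
noncomputable def widim (ε : ℝ) (d : X → X → ℝ) : ℕ∞ :=
  ⨅ α ∈ {α : Set (Set X) | IsOpenCover α ∧ mesh d α < ε}, covD α

/-- `d` is a metric on `X` compatible with the topology of `X`. -/
structure IsCompatMetric {X : Type*} [TopologicalSpace X] (d : X → X → ℝ) : Prop where
  refl : ∀ x, d x x = 0
  eq_of : ∀ x y, d x y = 0 → x = y
  symm : ∀ x y, d x y = d y x
  triangle : ∀ x y z, d x z ≤ d x y + d y z
  isOpen_iff : ∀ U : Set X, IsOpen U ↔ ∀ x ∈ U, ∃ ε > 0, ∀ y, d x y < ε → y ∈ U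

/-- The dynamical distance `d_n(x, y) = max_{0 ≤ i < n} d(Tⁱ x, Tⁱ y)`. -/
noncomputable def dynDist (d : X → X → ℝ) (T : X → X) (n : ℕ) (x y : X) : ℝ :=
  sSup {r | ∃ i < n, r = d (T^[i] x) (T^[i] y)}

/-- Mean dimension `mdim(X, T)` computed with the metric `d`:
`lim_{ε → 0} lim_{n → ∞} widim_ε(X, d_n) / n`.  The inner limit exists (by
subadditivity of `n ↦ widim_ε(X, d_n)`) so it coincides with the liminf, and the inner
quantity is monotone as `ε` decreases, so the limit as `ε → 0` is the supremum over
`ε > 0`. -/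
noncomputable def mdim (T : X → X) (d : X → X → ℝ) : ℝ≥0∞ :=
  ⨆ (ε : ℝ) (_ : 0 < ε),
    Filter.liminf (fun n : ℕ => (widim ε (dynDist d T n) : ℝ≥0∞) / (n : ℝ≥0∞)) Filter.atTop

/-- The full shift `σ` on the alphabet `K`: `σ((xₙ)ₙ) = (xₙ₊₁)ₙ`. -/
def shift (K : Type*) : (ℤ → K) → ℤ → K := fun x n => x (n + 1)

section
/-- `FCov n U`: `U` is an indexed open cover of order at most `n`. -/
def FCov {Y : Type*} [TopologicalSpace Y] (n : ℕ) {ι : Type*} (U : ι → Set Y) : Prop :=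
  (∀ i, IsOpen (U i)) ∧ (∀ x, ∃ i, x ∈ U i) ∧
    ∀ x (s : Finset ι), (∀ v ∈ s, x ∈ U v) → s.card ≤ n + 1

/-- Covering dimension at most `n`, via finite indexed covers. -/
def DimLE (n : ℕ) (Y : Type*) [TopologicalSpace Y] : Prop :=
  ∀ (k : ℕ) (U : Fin k → Set Y), (∀ i, IsOpen (U i)) → (∀ x, ∃ i, x ∈ U i) →
    ∃ (k' : ℕ) (U' : Fin k' → Set Y), FCov n U' ∧ ∀ i, ∃ j, U' i ⊆ U j

theorem FCov.reindex {Y : Type*} [TopologicalSpace Y] {n : ℕ} {ι κ : Type*} {U : ι → Set Y}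
    (h : FCov n U) (e : κ ≃ ι) : FCov n (U ∘ e) := by
  refine ⟨fun i => h.1 _, fun x => ?_, fun x s hs => ?_⟩
  · obtain ⟨i, hi⟩ := h.2.1 x
    exact ⟨e.symm i, by simpa using hi⟩
  · have := h.2.2 x (s.map e.toEmbedding) (by
      intro v hv
      obtain ⟨w, hw, rfl⟩ := Finset.mem_map.1 hv
      exact hs w hw)
    simpa using this

theorem DimLE.fintype {Y : Type*} [TopologicalSpace Y] {n : ℕ} (h : DimLE n Y)
    {ι : Type*} [Finite ι] (U : ι → Set Y) (ho : ∀ i, IsOpen (U i)) (hc : ∀ x, ∃ i, x ∈ U i) :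
    ∃ (k' : ℕ) (U' : Fin k' → Set Y), FCov n U' ∧ ∀ i, ∃ j, U' i ⊆ U j := by
  obtain ⟨k, ⟨e⟩⟩ := Finite.exists_equiv_fin ι
  obtain ⟨k', U', h1, h2⟩ := h k (U ∘ e.symm) (fun i => ho _) (fun x => by
    obtain ⟨i, hi⟩ := hc x
    exact ⟨e i, by simpa using hi⟩)
  exact ⟨k', U', h1, fun i => (h2 i).imp' e.symm fun _ hj => hj⟩

theorem DimLE.of_fintype {Y : Type*} [TopologicalSpace Y] {n : ℕ}
    (h : ∀ (k : ℕ) (U : Fin k → Set Y), (∀ i, IsOpen (U i)) → (∀ x, ∃ i, x ∈ U i) →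
      ∃ (ι : Type) (_ : Finite ι) (U' : ι → Set Y), FCov n U' ∧ ∀ i, ∃ j, U' i ⊆ U j) :
    DimLE n Y := by
  intro k U ho hc
  obtain ⟨ι, _, U', h1, h2⟩ := h k U ho hc
  obtain ⟨k', ⟨e⟩⟩ := Finite.exists_equiv_fin ι
  exact ⟨k', U' ∘ e.symm, h1.reindex e.symm, fun i => h2 _⟩

/-- refinement with a monotone index map -/
theorem DimLE.monotone_refine {Y : Type*} [TopologicalSpace Y] {n : ℕ} (h : DimLE n Y)
    {k : ℕ} (U : Fin k → Set Y) (ho : ∀ i, IsOpen (U i)) (hc : ∀ x, ∃ i, x ∈ U i)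
    {ι : Type*} [Finite ι] (W : ι → Set Y) (hWo : ∀ i, IsOpen (W i)) (hWc : ∀ x, ∃ i, x ∈ W i) :
    ∃ (k' : ℕ) (U' : Fin k' → Set Y) (t : Fin k' → Fin k), FCov n U' ∧ Monotone t ∧
      (∀ i, U' i ⊆ U (t i)) ∧ ∀ i, ∃ j, U' i ⊆ W j := by
  obtain ⟨k', U', h1, h2⟩ := h.fintype (fun p : Fin k × ι => U p.1 ∩ W p.2)
    (fun p => (ho _).inter (hWo _)) (fun x => by
      obtain ⟨i, hi⟩ := hc x
      obtain ⟨j, hj⟩ := hWc x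
      exact ⟨(i, j), hi, hj⟩)
  choose t ht using h2
  refine ⟨k', U' ∘ Tuple.sort (fun i => (t i).1), (fun i => (t i).1) ∘ Tuple.sort (fun i => (t i).1),
    h1.reindex _, Tuple.monotone_sort _, fun i => ?_,
    fun i => ⟨(t (Tuple.sort (fun i => (t i).1) i)).2, ?_⟩⟩
  · exact (ht _).trans inter_subset_left
  · exact (ht _).trans inter_subset_right

theorem DimLE.of_topDim {Y : Type*} [TopologicalSpace Y] [CompactSpace Y] {n : ℕ}
    (h : topDim Y ≤ n) : DimLE n Y := by
  apply DimLE.of_fintype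
  intro k U ho hc
  have hcov : IsOpenCover (range U) := by
    refine ⟨by rintro _ ⟨i, rfl⟩; exact ho i, ?_⟩
    rw [sUnion_range, eq_univ_iff_forall]
    intro x; simpa using hc x
  have h1 : covD (range U) < (n + 1 : ℕ) := by
    refine lt_of_le_of_lt (le_trans ?_ h) (by exact_mod_cast Nat.lt_succ_self n)
    unfold topDim
    exact le_iSup₂ (f := fun (α : Set (Set Y)) (_ : α ∈ {α : Set (Set Y) | IsOpenCover α}) => covD α)
      (range U) hcov
  unfold covD at h1
  simp only [iInf_lt_iff] at h1
  obtain ⟨β, ⟨hβ, hr⟩, hord⟩ := h1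
  obtain ⟨T, hT, hTc⟩ := isCompact_univ.elim_finite_subcover (fun b : β => (b : Set Y))
    (fun b => hβ.1 _ b.2) (by rw [← sUnion_eq_iUnion, hβ.2]) |>.imp fun T hT => (⟨trivial, hT⟩ : True ∧ _)
  classical
  let TS : Set (Set Y) := Subtype.val '' (T : Set β)
  have hTSf : TS.Finite := (Finset.finite_toSet T).image _
  have : Finite TS := hTSf
  obtain ⟨m, ⟨e⟩⟩ := Finite.exists_equiv_fin TS
  refine ⟨Fin m, inferInstance, fun i => (e.symm i : Set Y), ⟨?_, ?_, ?_⟩, ?_⟩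
  · intro i
    obtain ⟨b, -, hb⟩ := (e.symm i).2
    show IsOpen (e.symm i : Set Y)
    exact hb ▸ hβ.1 _ b.2
  · intro x
    have := hTc (mem_univ x)
    simp only [mem_iUnion] at this
    obtain ⟨b, hb, hx⟩ := this
    exact ⟨e ⟨b, b, hb, rfl⟩, by simpa using hx⟩
  · intro x s hs
    by_contra hcon
    push Not at hcon
    obtain ⟨s', hs', hcard⟩ := Finset.exists_subset_card_eq (s := s) (n := n + 1 + 1) (by omega)
    have : ((n + 1 : ℕ) : ℕ∞) ≤ ord β := by
      unfold ord
      refine le_iSup₂ (f := fun (n : ℕ) (_ : n ∈ {n : ℕ | ∃ f : Fin (n + 1) → Set Y,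
      Function.Injective f ∧ (∀ i, f i ∈ β) ∧ (⋂ i, f i).Nonempty}) => (n : ℕ∞)) (n + 1) ?_
      refine ⟨fun j => (e.symm (s'.orderEmbOfFin hcard j) : Set Y), ?_, ?_, x, ?_⟩
      · exact Subtype.val_injective.comp (e.symm.injective.comp (s'.orderEmbOfFin hcard).injective)
      · intro j
        obtain ⟨b, -, hb⟩ := (e.symm (s'.orderEmbOfFin hcard j)).2
        show (e.symm (s'.orderEmbOfFin hcard j) : Set Y) ∈ β
        exact hb ▸ b.2
      · simp only [mem_iInter]
        intro j
        exact hs _ (hs' (s'.orderEmbOfFin_mem hcard j))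
    exact absurd hord (not_lt.2 this)
  · intro i
    obtain ⟨b, -, hb⟩ := (e.symm i).2
    obtain ⟨V, ⟨j, rfl⟩, hV⟩ := hr _ b.2
    refine ⟨j, ?_⟩
    show (e.symm i : Set Y) ⊆ U j
    exact hb ▸ hV

theorem DimLE.topDim_le {Y : Type*} [TopologicalSpace Y] [CompactSpace Y] {n : ℕ}
    (h : DimLE n Y) : topDim Y ≤ n := by
  unfold topDim
  refine iSup₂_le fun α hα => ?_
  obtain ⟨T, hTc⟩ := isCompact_univ.elim_finite_subcover (fun b : α => (b : Set Y))
    (fun b => hα.1 _ b.2) (by rw [← sUnion_eq_iUnion, hα.2])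
  obtain ⟨k', U', h1, h2⟩ := h.fintype (fun b : T => ((b : α) : Set Y)) (fun b => hα.1 _ b.1.2)
    (fun x => by
      have := hTc (mem_univ x)
      simp only [mem_iUnion] at this
      obtain ⟨b, hb, hx⟩ := this
      exact ⟨⟨b, hb⟩, hx⟩)
  unfold covD
  refine iInf₂_le_of_le (range U') ⟨⟨?_, ?_⟩, ?_⟩ ?_
  · rintro _ ⟨i, rfl⟩; exact h1.1 i
  · rw [sUnion_range, eq_univ_iff_forall]
    intro x; simpa using h1.2.1 x
  · rintro _ ⟨i, rfl⟩
    obtain ⟨j, hj⟩ := h2 i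
    exact ⟨_, j.1.2, hj⟩
  · unfold ord
    refine iSup₂_le ?_
    rintro m ⟨f, hf, hfr, x, hx⟩
    choose g hg using hfr
    have hgi : Function.Injective g := fun a b hab => hf (by rw [← hg, ← hg, hab])
    have := h1.2.2 x (Finset.univ.map ⟨g, hgi⟩) (by
      intro v hv
      simp only [Finset.mem_map, Finset.mem_univ, true_and] at hv
      obtain ⟨a, rfl⟩ := hv
      show x ∈ U' (g a)
      rw [hg]
      exact mem_iInter.1 hx a)
    simp at this
    exact_mod_cast this

theorem DimLE.closedEmbedding {Y Z : Type*} [TopologicalSpace Y] [TopologicalSpace Z] {n : ℕ}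
    (h : DimLE n Y) {f : Z → Y} (hf : Topology.IsClosedEmbedding f) : DimLE n Z := by
  intro k U ho hc
  by_cases hk : Nonempty (Fin k)
  · obtain ⟨i0⟩ := hk
    have : ∀ i, ∃ O, IsOpen O ∧ f ⁻¹' O = U i := fun i => hf.isInducing.isOpen_iff.1 (ho i)
    choose O hO hOU using this
    obtain ⟨k', U', h1, h2⟩ := h k (fun i => O i ∪ (range f)ᶜ)
      (fun i => (hO i).union hf.isClosed_range.isOpen_compl) (fun y => by
        by_cases hy : y ∈ range f
        · obtain ⟨z, rfl⟩ := hy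
          obtain ⟨i, hi⟩ := hc z
          refine ⟨i, Or.inl ?_⟩
          rw [← hOU] at hi; exact hi
        · exact ⟨i0, Or.inr hy⟩)
    refine ⟨k', fun i => f ⁻¹' U' i, ⟨fun i => (h1.1 i).preimage hf.continuous, fun x => h1.2.1 _,
      fun x s hs => h1.2.2 (f x) s hs⟩, fun i => ?_⟩
    obtain ⟨j, hj⟩ := h2 i
    refine ⟨j, fun z hz => ?_⟩
    rcases hj hz with h' | h'
    · rw [← hOU]; exact h'
    · exact absurd (mem_range_self z) h'
  · refine ⟨k, U, ⟨ho, hc, fun x => ?_⟩, fun i => ⟨i, subset_rfl⟩⟩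
    obtain ⟨i, -⟩ := hc x
    exact absurd ⟨i⟩ hk

/-- Lebesgue number lemma for products. -/
theorem exists_cover_prod {Y : Type*} [MetricSpace Y] [CompactSpace Y] {ι : Type*}
    (W : ι → Set (Y × Y)) (ho : ∀ i, IsOpen (W i)) (hc : ∀ x, ∃ i, x ∈ W i) :
    ∃ (T : Finset Y) (U : T → Set Y), (∀ i, IsOpen (U i)) ∧ (∀ x, ∃ i, x ∈ U i) ∧
      ∀ a b, ∃ y, U a ×ˢ U b ⊆ W y := by
  obtain ⟨δ, hδ, hL⟩ := lebesgue_number_lemma_of_metric (isCompact_univ (X := Y × Y)) ho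
    (fun x _ => mem_iUnion.2 (hc x))
  obtain ⟨T, hT⟩ := isCompact_univ.elim_finite_subcover (fun y : Y => Metric.ball y δ)
    (fun y => Metric.isOpen_ball) (fun y _ => mem_iUnion.2 ⟨y, Metric.mem_ball_self hδ⟩)
  refine ⟨T, fun y => Metric.ball y δ, fun y => Metric.isOpen_ball, fun x => ?_, fun a b => ?_⟩
  · have := hT (mem_univ x)
    simp only [mem_iUnion] at this
    obtain ⟨y, hy, hx⟩ := this
    exact ⟨⟨y, hy⟩, hx⟩
  · obtain ⟨i, hi⟩ := hL (a.1, b.1) (mem_univ _)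
    refine ⟨i, ?_⟩
    rw [ball_prod_same]; exact hi

end

section
/-- an open set in a metric space is the positivity set of a continuous nonnegative function -/
theorem exists_pos_fun {Y : Type*} [MetricSpace Y] (U : Set Y) (hU : IsOpen U) :
    ∃ f : Y → ℝ, Continuous f ∧ (∀ x, 0 ≤ f x) ∧ ∀ x, 0 < f x ↔ x ∈ U := by
  by_cases h : (Uᶜ).Nonempty
  · refine ⟨fun x => Metric.infDist x Uᶜ, Metric.continuous_infDist_pt _,
      fun x => Metric.infDist_nonneg, fun x => ?_⟩
    rw [← hU.isClosed_compl.notMem_iff_infDist_pos h]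
    simp
  · refine ⟨fun _ => 1, continuous_const, fun _ => zero_le_one, fun x => ?_⟩
    rw [not_nonempty_iff_eq_empty, compl_empty_iff] at h
    simp [h]

/-- a coloured refinement of `U` with `N` colours and every point having at least `r` colours -/
def ColorCov {Y : Type*} [TopologicalSpace Y] {κ : Type*} (U : κ → Set Y) (N r : ℕ) : Prop :=
  ∃ (ι : Type) (_ : Finite ι) (V : Fin N → ι → Set Y),
    (∀ c i, IsOpen (V c i)) ∧ (∀ c i x, x ∈ V c i → ∃ j, V c i ⊆ U j) ∧
    (∀ c i j x, x ∈ V c i → x ∈ V c j → i = j) ∧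
    ∀ x, ∃ J : Finset (Fin N), J.card = r ∧ ∀ c ∈ J, ∃ i, x ∈ V c i

theorem ColorCov.base {Y : Type*} [MetricSpace Y] {n k : ℕ} {U : Fin k → Set Y}
    (h : FCov n U) : ColorCov U (n + 1) 1 := by
  classical
  have := fun i => exists_pos_fun (U i) (h.1 i)
  choose f hfc hf0 hf using this
  let W : Finset (Fin k) → Set Y := fun S =>
    (⋂ a ∈ S, {x | 0 < f a x}) ∩ ⋂ a ∈ S, ⋂ b ∈ Sᶜ, {x | f b x < f a x}
  have hW : ∀ S x, x ∈ W S ↔ (∀ a ∈ S, 0 < f a x) ∧ ∀ a ∈ S, ∀ b, b ∉ S → f b x < f a x := by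
    intro S x; simp [W]
  have hWo : ∀ S, IsOpen (W S) := by
    intro S
    refine IsOpen.inter ?_ ?_
    · exact isOpen_biInter_finset fun a _ => isOpen_lt continuous_const (hfc a)
    · exact isOpen_biInter_finset fun a _ => isOpen_biInter_finset fun b _ =>
        isOpen_lt (hfc b) (hfc a)
  refine ⟨Finset (Fin k), inferInstance, fun c S => if S.card = c + 1 then W S else ∅,
    ?_, ?_, ?_, ?_⟩
  · intro c S
    beta_reduce
    split_ifs
    · exact hWo S
    · exact isOpen_empty
  · intro c S x hx
    beta_reduce at hx ⊢
    split_ifs at hx ⊢ with hc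
    · obtain ⟨a, ha⟩ : S.Nonempty := by rw [← Finset.card_pos]; omega
      exact ⟨a, fun y hy => (hf a y).1 (((hW S y).1 hy).1 a ha)⟩
    · simp at hx
  · intro c S S' x hx hx'
    beta_reduce at hx hx'
    split_ifs at hx hx' with hc hc'
    · rw [hW] at hx hx'
      by_contra hne
      have h1 : ¬ S ⊆ S' := fun hs => hne (Finset.eq_of_subset_of_card_le hs (by omega))
      have h2 : ¬ S' ⊆ S := fun hs => hne (Finset.eq_of_subset_of_card_le hs (by omega)).symm
      obtain ⟨a, ha, ha'⟩ := Finset.not_subset.1 h1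
      obtain ⟨b, hb, hb'⟩ := Finset.not_subset.1 h2
      exact lt_asymm (hx.2 a ha b hb') (hx'.2 b hb a ha')
    all_goals simp at hx hx'
  · intro x
    obtain ⟨i, hi⟩ := h.2.1 x
    let S : Finset (Fin k) := Finset.univ.filter fun a => 0 < f a x
    have hS : S.card ≤ n + 1 := h.2.2 x S (fun v hv => (hf v x).1 (by simpa [S] using hv))
    have hS0 : 0 < S.card := Finset.card_pos.2 ⟨i, by simp [S, hf, hi]⟩
    refine ⟨{⟨S.card - 1, by omega⟩}, by simp, ?_⟩
    intro c hc
    rw [Finset.mem_singleton] at hc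
    subst hc
    refine ⟨S, ?_⟩
    have : S.card = S.card - 1 + 1 := by omega
    beta_reduce
    rw [if_pos this, hW]
    refine ⟨fun a ha => by simpa [S] using ha, fun a ha b hb => ?_⟩
    have ha' : 0 < f a x := by simpa [S] using ha
    have hb' : ¬ 0 < f b x := by simpa [S] using hb
    linarith

theorem ColorCov.step {Y : Type*} [MetricSpace Y] {κ : Type*} {U : κ → Set Y} {N r : ℕ}
    (hr : 0 < r) (h : ColorCov U N r) : ColorCov U (N + 1) (r + 1) := by
  classical
  obtain ⟨ι, _, V, hVo, hVU, hVd, hVc⟩ := h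
  let VV : Fin N → Set Y := fun c => ⋃ i, V c i
  have hVV : ∀ c, IsOpen (VV c) := fun c => isOpen_iUnion (hVo c)
  let 𝒥 := {J : Finset (Fin N) // J.card = r}
  let G : 𝒥 → Set Y := fun J => ⋂ c ∈ J.1, VV c
  have hG : ∀ J x, x ∈ G J ↔ ∀ c ∈ J.1, x ∈ VV c := by intro J x; simp [G]
  obtain ⟨H, hHc, hHcl, hHG⟩ := exists_iUnion_eq_closed_subset (u := G)
    (fun J => isOpen_biInter_finset fun c _ => hVV c) (fun x => Set.toFinite _) (by
      rw [eq_univ_iff_forall]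
      intro x
      obtain ⟨J, hJ, hJx⟩ := hVc x
      exact mem_iUnion.2 ⟨⟨J, hJ⟩, (hG _ _).2 fun c hc => mem_iUnion.2 (hJx c hc)⟩)
  let O : 𝒥 → Set Y := fun J => G J ∩ ⋂ K ∈ {K : 𝒥 | K ≠ J}, (H K)ᶜ
  have hOo : ∀ J, IsOpen (O J) := fun J =>
    IsOpen.inter (isOpen_biInter_finset fun c _ => hVV c)
      ((Set.toFinite _).isOpen_biInter fun K _ => (hHcl K).isOpen_compl)
  have hOH : ∀ J K x, x ∈ O J → x ∈ H K → K = J := by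
    intro J K x hx hK
    by_contra hne
    have := hx.2
    simp only [mem_iInter] at this
    exact this K hne hK
  have hJne : ∀ J : 𝒥, ∃ c, c ∈ J.1 := fun J => by
    obtain ⟨c, hc⟩ : J.1.Nonempty := by rw [← Finset.card_pos]; have := J.2; omega
    exact ⟨c, hc⟩
  choose c0 hc0 using hJne
  refine ⟨ι ⊕ (𝒥 × ι), inferInstance, fun c => Fin.lastCases
    (Sum.elim (fun _ => ∅) (fun p => O p.1 ∩ V (c0 p.1) p.2))
    (fun c => Sum.elim (fun i => V c i) fun _ => ∅) c, ?_, ?_, ?_, ?_⟩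
  · intro c
    induction c using Fin.lastCases with
    | last =>
      rintro (i | ⟨J, i⟩)
      · simp
      · simpa using (hOo J).inter (hVo _ i)
    | cast c =>
      rintro (i | ⟨J, i⟩)
      · simpa using hVo c i
      · simp
  · intro c
    induction c using Fin.lastCases with
    | last =>
      rintro (i | ⟨J, i⟩) x
      · simp
      · simp only [Fin.lastCases_last, Sum.elim_inr]
        rintro ⟨h1, h2⟩
        obtain ⟨j, hj⟩ := hVU _ _ x h2
        exact ⟨j, inter_subset_right.trans hj⟩
    | cast c =>
      rintro (i | ⟨J, i⟩) x
      · simpa using hVU c i x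
      · simp
  · intro c
    induction c using Fin.lastCases with
    | last =>
      rintro (i | ⟨J, i⟩) (j | ⟨K, j⟩) x
      · simp
      · simp
      · simp
      · simp only [Fin.lastCases_last, Sum.elim_inr]
        rintro ⟨h1, h2⟩ ⟨h3, h4⟩
        have hx : x ∈ ⋃ J, H J := by rw [hHc]; trivial
        obtain ⟨L, hL⟩ := mem_iUnion.1 hx
        obtain rfl := hOH _ _ _ h1 hL
        obtain rfl := hOH _ _ _ h3 hL
        rw [hVd _ _ _ _ h2 h4]
    | cast c =>
      rintro (i | ⟨J, i⟩) (j | ⟨K, j⟩) x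
      · simpa using hVd c i j x
      · simp
      · simp
      · simp
  · intro x
    let S : Finset (Fin N) := Finset.univ.filter fun c => x ∈ VV c
    obtain ⟨J, hJ, hJx⟩ := hVc x
    have hJS : J ⊆ S := fun c hc => by simpa [S, VV] using hJx c hc
    have hmem : ∀ c ∈ S, ∃ i, x ∈ V c i := fun c hc => by simpa [S, VV] using hc
    have hcard := Finset.card_le_card hJS
    by_cases hS : r + 1 ≤ S.card
    · obtain ⟨S', hS', hc'⟩ := Finset.exists_subset_card_eq hS
      refine ⟨S'.map Fin.castSuccEmb, by simpa using hc', ?_⟩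
      intro c hc
      obtain ⟨d, hd, rfl⟩ := Finset.mem_map.1 hc
      obtain ⟨i, hi⟩ := hmem d (hS' hd)
      exact ⟨Sum.inl i, by simpa using hi⟩
    · have hSc : S.card = r := by omega
      have hSx : x ∈ G ⟨S, hSc⟩ := (hG _ _).2 fun c hc => by simpa [S] using hc
      have hxO : x ∈ O ⟨S, hSc⟩ := by
        refine ⟨hSx, ?_⟩
        simp only [mem_iInter]
        rintro K hK hxK
        apply hK
        have h1 := (hG _ _).1 (hHG K hxK)
        apply Subtype.ext
        exact Finset.eq_of_subset_of_card_le (fun c hc => by simpa [S] using h1 c hc)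
          (by rw [K.2]; exact hSc.le)
      refine ⟨insert (Fin.last N) (S.map Fin.castSuccEmb), ?_, ?_⟩
      · rw [Finset.card_insert_of_notMem, Finset.card_map, hSc]
        intro hcon
        obtain ⟨d, hd, he⟩ := Finset.mem_map.1 hcon
        exact absurd he (Fin.castSucc_lt_last d).ne
      · intro c hc
        rcases Finset.mem_insert.1 hc with rfl | hc
        · obtain ⟨i, hi⟩ := hmem (c0 ⟨S, hSc⟩) (hc0 ⟨S, hSc⟩)
          exact ⟨Sum.inr (⟨S, hSc⟩, i), by simpa using ⟨hxO, hi⟩⟩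
        · obtain ⟨d, hd, rfl⟩ := Finset.mem_map.1 hc
          obtain ⟨i, hi⟩ := hmem d hd
          exact ⟨Sum.inl i, by simpa using hi⟩

theorem DimLE.prod_self {Y : Type*} [MetricSpace Y] [CompactSpace Y] {n : ℕ}
    (h : DimLE n Y) : DimLE (2 * n) (Y × Y) := by
  classical
  apply DimLE.of_fintype
  intro k W hWo hWc
  obtain ⟨T, U, hUo, hUc, hUW⟩ := exists_cover_prod W hWo hWc
  obtain ⟨k', U', h1, h2⟩ := h.fintype U hUo hUc
  have hcol : ∀ m, ColorCov U' (n + 1 + m) (1 + m) := by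
    intro m
    induction m with
    | zero => exact ColorCov.base h1
    | succ m ih => exact ColorCov.step (N := n + 1 + m) (r := 1 + m) (by omega) ih
  obtain ⟨ι, _, V, hVo, hVU, hVd, hVc⟩ := hcol n
  by_cases hk : Nonempty (Fin k)
  · obtain ⟨y0⟩ := hk
    refine ⟨Fin (n + 1 + n) × ι × ι, inferInstance, fun p => V p.1 p.2.1 ×ˢ V p.1 p.2.2,
      ⟨fun p => (hVo _ _).prod (hVo _ _), ?_, ?_⟩, ?_⟩
    · rintro ⟨x, y⟩
      obtain ⟨J, hJ, hJx⟩ := hVc x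
      obtain ⟨L, hL, hLy⟩ := hVc y
      have : (J ∩ L).Nonempty := by
        rw [← Finset.card_pos]
        have h3 := Finset.card_union_add_card_inter J L
        have h4 := Finset.card_le_univ (J ∪ L)
        simp at h4
        omega
      obtain ⟨c, hc⟩ := this
      rw [Finset.mem_inter] at hc
      obtain ⟨i, hi⟩ := hJx c hc.1
      obtain ⟨j, hj⟩ := hLy c hc.2
      exact ⟨(c, i, j), hi, hj⟩
    · rintro ⟨x, y⟩ s hs
      have hinj : Set.InjOn (fun p : Fin (n + 1 + n) × ι × ι => p.1) s := by
        rintro ⟨c, i, j⟩ hp ⟨c', i', j'⟩ hp' hcc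
        simp only at hcc
        subst hcc
        have h3 := hs _ hp
        have h4 := hs _ hp'
        simp only [mem_prod] at h3 h4
        rw [hVd _ _ _ _ h3.1 h4.1, hVd _ _ _ _ h3.2 h4.2]
      have h3 := Finset.card_image_of_injOn hinj
      have h4 := Finset.card_le_univ (s.image fun p => p.1)
      simp at h4 h3
      omega
    · rintro ⟨c, i, j⟩
      by_cases hne : (V c i ×ˢ V c j).Nonempty
      · obtain ⟨⟨x, y⟩, hx, hy⟩ := hne
        obtain ⟨a, ha⟩ := hVU c i x hx
        obtain ⟨b, hb⟩ := hVU c j y hy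
        obtain ⟨a', ha'⟩ := h2 a
        obtain ⟨b', hb'⟩ := h2 b
        obtain ⟨w, hw⟩ := hUW a' b'
        exact ⟨w, (prod_mono (ha.trans ha') (hb.trans hb')).trans hw⟩
      · exact ⟨y0, by
          simp only
          rw [not_nonempty_iff_eq_empty.1 hne]
          exact empty_subset _⟩
  · refine ⟨Fin k, inferInstance, W, ⟨hWo, hWc, fun x => ?_⟩, fun i => ⟨i, subset_rfl⟩⟩
    obtain ⟨i, -⟩ := hWc x
    exact absurd ⟨i⟩ hk

end

section
section Chains

/-- integral chains on lists of vertices -/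
abbrev Ch (V : Type*) := List V →₀ ℤ

variable {V V' : Type*}

/-- the basis chain of a list -/
noncomputable abbrev sl (l : List V) : Ch V := Finsupp.single l 1

theorem Ch.ext_lin {Q : Type*} [AddCommGroup Q] [Module ℤ Q] {f g : Ch V →ₗ[ℤ] Q}
    (h : ∀ l, f (sl l) = g (sl l)) : f = g := by
  apply Finsupp.lhom_ext'
  intro l
  ext
  simpa using h l

/-- linear extension of a function on lists -/
noncomputable def lin {Q : Type*} [AddCommGroup Q] (f : List V → Q) : Ch V →ₗ[ℤ] Q :=
  Finsupp.linearCombination ℤ f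

@[simp] theorem lin_sl {Q : Type*} [AddCommGroup Q] (f : List V → Q) (l : List V) :
    lin f (sl l) = f l := by
  rw [lin, Finsupp.linearCombination_single, one_smul]

noncomputable def consL (v : V) : Ch V →ₗ[ℤ] Ch V := lin fun l => sl (v :: l)

@[simp] theorem consL_sl (v : V) (l : List V) : consL v (sl l) = sl (v :: l) := by
  simp [consL]

noncomputable def bdL : List V → Ch V
  | [] => 0
  | v :: l => sl l - consL v (bdL l)

noncomputable def bd : Ch V →ₗ[ℤ] Ch V := lin bdL

@[simp] theorem bd_sl (l : List V) : bd (sl l) = bdL l := by simp [bd]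

theorem bd_consL (v : V) (x : Ch V) : bd (consL v x) = x - consL v (bd x) := by
  have : bd ∘ₗ consL v = LinearMap.id - consL v ∘ₗ bd := by
    apply Ch.ext_lin
    intro l
    simp [bdL]
  exact LinearMap.congr_fun this x

theorem bd_bdL (l : List V) : bd (bdL l) = 0 := by
  induction l with
  | nil => simp [bdL]
  | cons v l ih =>
    simp only [bdL, map_sub, bd_sl, bd_consL, ih, map_zero, sub_zero, sub_self]

theorem bd_bd (x : Ch V) : bd (bd x) = 0 := by
  have : (bd : Ch V →ₗ[ℤ] Ch V) ∘ₗ bd = 0 := by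
    apply Ch.ext_lin
    intro l
    simp [bd_bdL]
  exact LinearMap.congr_fun this x

/-- kill the empty list -/
noncomputable def EE : Ch V →ₗ[ℤ] Ch V :=
  LinearMap.id - Finsupp.lsingle [] ∘ₗ Finsupp.lapply []

theorem EE_apply (x : Ch V) : EE x = x - x [] • sl [] := by
  simp [EE]

theorem EE_sl {l : List V} (h : l ≠ []) : EE (sl l) = sl l := by
  rw [EE_apply]; simp [h]

@[simp] theorem EE_nil : EE (sl ([] : List V)) = 0 := by
  rw [EE_apply]; simp

@[simp] theorem EE_consL (v : V) (x : Ch V) : EE (consL v x) = consL v x := by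
  have : EE ∘ₗ consL v = consL v := by
    apply Ch.ext_lin
    intro l
    simp [EE_sl]
  exact LinearMap.congr_fun this x

/-- augmentation -/
noncomputable def ep : Ch V →ₗ[ℤ] ℤ := Finsupp.lapply [] ∘ₗ bd

theorem ep_apply (x : Ch V) : ep x = bd x [] := rfl

noncomputable def dd : Ch V →ₗ[ℤ] Ch V := EE ∘ₗ bd

theorem dd_apply (x : Ch V) : dd x = bd x - ep x • sl [] := by
  simp [dd, EE_apply, ep_apply]

theorem bd_dd (x : Ch V) : bd (dd x) = 0 := by
  rw [dd_apply, map_sub, bd_bd, map_smul, bd_sl]; simp [bdL]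

theorem dd_dd (x : Ch V) : dd (dd x) = 0 := by
  show EE (bd (dd x)) = 0
  rw [bd_dd, map_zero]

theorem ep_dd (x : Ch V) : ep (dd x) = 0 := by
  rw [ep_apply, bd_dd]; rfl

theorem consL_nil_coeff (v : V) (x : Ch V) : consL v x [] = 0 := by
  have : Finsupp.lapply (R := ℤ) ([] : List V) ∘ₗ consL v = 0 := by
    apply Ch.ext_lin
    intro l
    simp
  exact LinearMap.congr_fun this x

theorem ep_singleton (v : V) : ep (sl [v]) = 1 := by
  simp [ep_apply, bdL]

theorem ep_of_length {l : List V} (h : l.length ≠ 1) : ep (sl l) = 0 := by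
  rcases l with _ | ⟨v, _ | ⟨w, l⟩⟩
  · simp [ep_apply, bdL]
  · simp at h
  · rw [ep_apply, bd_sl, bdL, Finsupp.sub_apply, consL_nil_coeff]; simp

/-- projection to a point -/
noncomputable def PP (v : V) : Ch V →ₗ[ℤ] Ch V := ep.smulRight (sl [v])

@[simp] theorem PP_apply (v : V) (x : Ch V) : PP v x = ep x • sl [v] := rfl

theorem dd_consL (v : V) (x : Ch V) : dd (consL v x) + consL v (dd x) = EE x - PP v x := by
  rw [dd_apply x, map_sub, map_smul, consL_sl]
  show EE (bd (consL v x)) + _ = _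
  rw [bd_consL, map_sub, EE_consL, PP_apply]
  abel

/-- sign operator -/
noncomputable def sg : Ch V →ₗ[ℤ] Ch V := lin fun l => (-1 : ℤ) ^ (l.length + 1) • sl l

@[simp] theorem sg_sl (l : List V) : sg (sl l) = (-1 : ℤ) ^ (l.length + 1) • sl l := by
  simp [sg]

theorem sg_consL (v : V) (x : Ch V) : sg (consL v x) = - consL v (sg x) := by
  have : sg ∘ₗ consL v = - (consL v ∘ₗ sg) := by
    apply Ch.ext_lin
    intro l
    simp [pow_succ, -Finsupp.smul_single]
  exact LinearMap.congr_fun this x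

theorem bd_sg (x : Ch V) : bd (sg x) = - sg (bd x) := by
  have : bd ∘ₗ sg = - ((sg : Ch V →ₗ[ℤ] Ch V) ∘ₗ bd) := by
    apply Ch.ext_lin
    intro l
    induction l with
    | nil => simp [bdL]
    | cons v l ih =>
      simp only [LinearMap.comp_apply, LinearMap.neg_apply, bd_sl, sg_sl, map_smul] at ih ⊢
      have : sg (consL v (bdL l)) = consL v ((-1 : ℤ) ^ (l.length + 1) • bdL l) := by
        rw [sg_consL, ih]; simp
      simp only [bdL, map_sub, this, sg_sl, List.length_cons, map_smul, smul_sub]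
      simp only [pow_succ]
      simp
      abel
  exact LinearMap.congr_fun this x

theorem sg_EE (x : Ch V) : sg (EE x) = EE (sg x) := by
  have : (sg : Ch V →ₗ[ℤ] Ch V) ∘ₗ EE = EE ∘ₗ sg := by
    apply Ch.ext_lin
    intro l
    by_cases h : l = []
    · subst h; simp
    · simp [EE_sl h, -Finsupp.smul_single]
  exact LinearMap.congr_fun this x

theorem dd_sg (x : Ch V) : dd (sg x) = - sg (dd x) := by
  show EE (bd (sg x)) = - sg (EE (bd x))
  rw [bd_sg, map_neg, sg_EE]

theorem sg_sg (x : Ch V) : sg (sg x) = x := by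
  have : (sg : Ch V →ₗ[ℤ] Ch V) ∘ₗ sg = LinearMap.id := by
    apply Ch.ext_lin
    intro l
    simp [smul_smul, ← mul_pow, -Finsupp.smul_single]
  exact LinearMap.congr_fun this x

theorem sg_PP (v : V) (x : Ch V) : sg (PP v x) = PP v x := by
  simp [-Finsupp.smul_single]

theorem PP_sg (v : V) (x : Ch V) : PP v (sg x) = PP v x := by
  have : PP v ∘ₗ sg = PP v := by
    apply Ch.ext_lin
    intro l
    by_cases h : l.length = 1
    · simp [h]
    · simp [ep_of_length h, -Finsupp.smul_single]
  exact LinearMap.congr_fun this x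

theorem dd_PP (v : V) (x : Ch V) : dd (PP v x) = 0 := by
  rw [PP_apply, map_smul]
  show _ • EE (bd _) = _
  simp [bdL]

theorem PP_dd (v : V) (x : Ch V) : PP v (dd x) = 0 := by
  rw [PP_apply, ep_dd, zero_smul]

/-- functoriality -/
noncomputable def mapC (f : V → V') : Ch V →ₗ[ℤ] Ch V' := lin fun l => sl (l.map f)

@[simp] theorem mapC_sl (f : V → V') (l : List V) : mapC f (sl l) = sl (l.map f) := by simp [mapC]

theorem mapC_consL (f : V → V') (v : V) (x : Ch V) :
    mapC f (consL v x) = consL (f v) (mapC f x) := by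
  have : mapC f ∘ₗ consL v = consL (f v) ∘ₗ mapC f := by
    apply Ch.ext_lin
    intro l
    simp
  exact LinearMap.congr_fun this x

theorem bd_mapC (f : V → V') (x : Ch V) : bd (mapC f x) = mapC f (bd x) := by
  have : bd ∘ₗ mapC f = mapC f ∘ₗ bd := by
    apply Ch.ext_lin
    intro l
    induction l with
    | nil => simp [bdL]
    | cons v l ih =>
      simp only [LinearMap.comp_apply, bd_sl, mapC_sl] at ih ⊢
      simp [bdL, mapC_consL, ih]
  exact LinearMap.congr_fun this x

theorem mapC_nil_coeff (f : V → V') (x : Ch V) : mapC f x [] = x [] := by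
  have : Finsupp.lapply (R := ℤ) ([] : List V') ∘ₗ mapC f = Finsupp.lapply (R := ℤ) [] := by
    apply Ch.ext_lin
    intro l
    cases l <;> simp
  exact LinearMap.congr_fun this x

theorem ep_mapC (f : V → V') (x : Ch V) : ep (mapC f x) = ep x := by
  rw [ep_apply, bd_mapC, mapC_nil_coeff, ep_apply]

theorem dd_mapC (f : V → V') (x : Ch V) : dd (mapC f x) = mapC f (dd x) := by
  rw [dd_apply, dd_apply, ep_mapC, bd_mapC, map_sub, map_smul, mapC_sl]; rfl

/-- the span of the basis chains of lists satisfying a predicate -/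
noncomputable def spn (p : List V → Prop) : Submodule ℤ (Ch V) :=
  Submodule.span ℤ (sl '' {l | p l})

theorem sl_mem_spn {p : List V → Prop} {l : List V} (h : p l) : sl l ∈ spn p :=
  Submodule.subset_span ⟨l, h, rfl⟩

theorem spn_mono {p q : List V → Prop} (h : ∀ l, p l → q l) : spn p ≤ spn q :=
  Submodule.span_mono (Set.image_mono fun l hl => h l hl)

theorem map_mem_of_spn {Q : Type*} [AddCommGroup Q] [Module ℤ Q] (f : Ch V →ₗ[ℤ] Q) {p : List V → Prop}
    {S : Submodule ℤ Q} (h : ∀ l, p l → f (sl l) ∈ S) {x : Ch V} (hx : x ∈ spn p) : f x ∈ S := by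
  have : spn p ≤ S.comap f := by
    refine Submodule.span_le.2 ?_
    rintro _ ⟨l, hl, rfl⟩
    exact h l hl
  exact this hx

theorem eqOn_of_spn {Q : Type*} [AddCommGroup Q] [Module ℤ Q] {f g : Ch V →ₗ[ℤ] Q} {p : List V → Prop}
    (h : ∀ l, p l → f (sl l) = g (sl l)) {x : Ch V} (hx : x ∈ spn p) : f x = g x := by
  have : spn p ≤ LinearMap.eqLocus f g := by
    refine Submodule.span_le.2 ?_
    rintro _ ⟨l, hl, rfl⟩
    exact h l hl
  exact this hx

theorem bdL_mem (l : List V) : bdL l ∈ spn fun τ => τ.Sublist l ∧ τ.length + 1 = l.length := by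
  induction l with
  | nil => simp [bdL]
  | cons v l ih =>
    rw [bdL]
    refine Submodule.sub_mem _ (sl_mem_spn ⟨List.sublist_cons_self _ _, by simp⟩) ?_
    refine map_mem_of_spn _ ?_ ih
    rintro τ ⟨h1, h2⟩
    rw [consL_sl]
    exact sl_mem_spn ⟨h1.cons_cons v, by simp [h2]⟩

theorem ddL_mem (l : List V) :
    dd (sl l) ∈ spn fun τ => τ ≠ [] ∧ τ.Sublist l ∧ τ.length + 1 = l.length := by
  show EE (bd (sl l)) ∈ _
  rw [bd_sl]
  refine map_mem_of_spn _ ?_ (bdL_mem l)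
  rintro τ ⟨h1, h2⟩
  by_cases h : τ = []
  · subst h; simp
  · rw [EE_sl h]; exact sl_mem_spn ⟨h, h1, h2⟩

end Chains

end

section
section Carrier

variable {P Q ι : Type*} [AddCommGroup P] [AddCommGroup Q] [Module ℤ P] [Module ℤ Q]

theorem lin_mem_of_span {s : Set P} {x : P} (hx : x ∈ Submodule.span ℤ s) (f : P →ₗ[ℤ] Q)
    (S : Submodule ℤ Q) (h : ∀ y ∈ s, f y ∈ S) : f x ∈ S := by
  have : Submodule.span ℤ s ≤ S.comap f := Submodule.span_le.2 h
  exact this hx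

theorem lin_eq_of_span {s : Set P} {x : P} (hx : x ∈ Submodule.span ℤ s) (f g : P →ₗ[ℤ] Q)
    (h : ∀ y ∈ s, f y = g y) : f x = g x := by
  have : Submodule.span ℤ s ≤ LinearMap.eqLocus f g := Submodule.span_le.2 h
  exact this hx

theorem carrier_exists (b : Module.Basis ι ℤ P) (deg : ι → ℕ) (G : ι → Prop)
    (dP : P →ₗ[ℤ] P) (εP : P →ₗ[ℤ] ℤ) (dQ : Q →ₗ[ℤ] Q) (εQ : Q →ₗ[ℤ] ℤ)
    (A : ι → ℕ → Submodule ℤ Q)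
    (hface : ∀ i, G i → dP (b i) ∈ Submodule.span ℤ
      (b '' {k | G k ∧ deg k + 1 = deg i ∧ ∀ q, A k q ≤ A i q}))
    (hdP : ∀ x, dP (dP x) = 0)
    (acyc : ∀ i, G i → ∀ q x, x ∈ A i q → dQ x = 0 → (q = 0 → εQ x = 0) →
      ∃ y ∈ A i (q + 1), dQ y = x)
    (hpt : ∀ i, G i → ∃ x ∈ A i 0, dQ x = 0 ∧ εQ x = 1)
    (hε0 : ∀ i, G i → deg i = 0 → εP (b i) = 1)
    (hε1 : ∀ i, G i → deg i = 1 → εP (dP (b i)) = 0) (N : ℕ) :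
    ∃ φ : P →ₗ[ℤ] Q, ∀ i, G i → deg i < N → φ (b i) ∈ A i (deg i) ∧
      dQ (φ (b i)) = φ (dP (b i)) ∧ (deg i = 0 → εQ (φ (b i)) = 1) := by
  classical
  induction N with
  | zero => exact ⟨0, fun i _ h => absurd h (by omega)⟩
  | succ N ih =>
    obtain ⟨φ, hφ⟩ := ih
    have key : ∀ i, G i → deg i = N → ∃ y ∈ A i N, dQ y = φ (dP (b i)) ∧ (N = 0 → εQ y = 1) := by
      intro i hi hd
      have hf := hface i hi
      rcases N with _ | N
      · have h0 : dP (b i) = 0 := by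
          have : (b '' {k | G k ∧ deg k + 1 = deg i ∧ ∀ q, A k q ≤ A i q}) = ∅ := by
            rw [image_eq_empty, eq_empty_iff_forall_notMem]
            rintro k ⟨-, h, -⟩
            omega
          rw [this] at hf
          simpa using hf
        obtain ⟨x, hx, hx1, hx2⟩ := hpt i hi
        exact ⟨x, hx, by rw [h0, hx1, map_zero], fun _ => hx2⟩
      · suffices hs : ∃ y ∈ A i (N + 1), dQ y = φ (dP (b i)) by
          obtain ⟨y, hy, hy2⟩ := hs
          exact ⟨y, hy, hy2, fun h => absurd h (by omega)⟩
        apply acyc i hi N (φ (dP (b i)))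
        · refine lin_mem_of_span hf φ _ ?_
          rintro _ ⟨k, ⟨hk, hk1, hk2⟩, rfl⟩
          have := (hφ k hk (by omega)).1
          have hkN : deg k = N := by omega
          rw [hkN] at this
          exact hk2 _ this
        · have : (dQ ∘ₗ φ) (dP (b i)) = (φ ∘ₗ dP) (dP (b i)) := by
            refine lin_eq_of_span hf _ _ ?_
            rintro _ ⟨k, ⟨hk, hk1, hk2⟩, rfl⟩
            exact (hφ k hk (by omega)).2.1
          rw [LinearMap.comp_apply, LinearMap.comp_apply, hdP, map_zero] at this
          exact this
        · intro hN
          have : (εQ ∘ₗ φ) (dP (b i)) = εP (dP (b i)) := by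
            refine lin_eq_of_span hf _ _ ?_
            rintro _ ⟨k, ⟨hk, hk1, hk2⟩, rfl⟩
            rw [hε0 k hk (by omega)]
            exact (hφ k hk (by omega)).2.2 (by omega)
          rw [LinearMap.comp_apply, hε1 i hi (by omega)] at this
          exact this
    choose y hy using key
    let ψ : P →ₗ[ℤ] Q := b.constr ℕ fun i => if h : G i ∧ deg i = N then y i h.1 h.2 else φ (b i)
    have hψ : ∀ i, ψ (b i) = if h : G i ∧ deg i = N then y i h.1 h.2 else φ (b i) := fun i => by
      simp [ψ, Module.Basis.constr_basis]
    have hψl : ∀ i, deg i ≠ N → ψ (b i) = φ (b i) := fun i hi => by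
      rw [hψ, dif_neg (fun h => hi h.2)]
    have hψe : ∀ i (h1 : G i) (h2 : deg i = N), ψ (b i) = y i h1 h2 := fun i h1 h2 => by
      rw [hψ, dif_pos ⟨h1, h2⟩]
    have hψd : ∀ i, G i → deg i < N + 1 → ψ (dP (b i)) = φ (dP (b i)) := by
      intro i hi hd
      refine lin_eq_of_span (hface i hi) _ _ ?_
      rintro _ ⟨k, ⟨hk, hk1, hk2⟩, rfl⟩
      exact hψl k (by omega)
    refine ⟨ψ, fun i hi hd => ?_⟩
    rw [hψd i hi hd]
    by_cases hN : deg i = N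
    · rw [hψe i hi hN]
      have := hy i hi hN
      exact ⟨hN.symm ▸ this.1, this.2.1, fun h => this.2.2 (by omega)⟩
    · rw [hψl i hN]
      exact hφ i hi (by omega)

theorem carrier_homotopy (b : Module.Basis ι ℤ P) (deg : ι → ℕ) (G : ι → Prop)
    (dP : P →ₗ[ℤ] P) (dQ : Q →ₗ[ℤ] Q) (εQ : Q →ₗ[ℤ] ℤ)
    (A : ι → ℕ → Submodule ℤ Q)
    (hface : ∀ i, G i → dP (b i) ∈ Submodule.span ℤ
      (b '' {k | G k ∧ deg k + 1 = deg i ∧ ∀ q, A k q ≤ A i q}))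
    (hdP : ∀ x, dP (dP x) = 0)
    (acyc : ∀ i, G i → ∀ q x, x ∈ A i q → dQ x = 0 → (q = 0 → εQ x = 0) →
      ∃ y ∈ A i (q + 1), dQ y = x) (N : ℕ)
    (f : P →ₗ[ℤ] Q) (hf : ∀ i, G i → deg i < N → f (b i) ∈ A i (deg i) ∧
      dQ (f (b i)) = f (dP (b i)) ∧ (deg i = 0 → εQ (f (b i)) = 0)) :
    ∀ M, M ≤ N → ∃ h : P →ₗ[ℤ] Q, ∀ i, G i → deg i < M → h (b i) ∈ A i (deg i + 1) ∧
      dQ (h (b i)) + h (dP (b i)) = f (b i) := by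
  classical
  intro M
  induction M with
  | zero => exact fun _ => ⟨0, fun i _ h => absurd h (by omega)⟩
  | succ M ih =>
    intro hMN
    obtain ⟨φ, hφ⟩ := ih (by omega)
    have key : ∀ i, G i → deg i = M → ∃ y ∈ A i (M + 1), dQ y = f (b i) - φ (dP (b i)) := by
      intro i hi hd
      have hfc := hface i hi
      have hfi := hf i hi (by omega)
      apply acyc i hi M
      · refine Submodule.sub_mem _ (hd ▸ hfi.1) ?_
        refine lin_mem_of_span hfc φ _ ?_
        rintro _ ⟨k, ⟨hk, hk1, hk2⟩, rfl⟩
        have := (hφ k hk (by omega)).1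
        have hkN : deg k + 1 = M := by omega
        rw [hkN] at this
        exact hk2 _ this
      · have : (dQ ∘ₗ φ + φ ∘ₗ dP) (dP (b i)) = f (dP (b i)) := by
          refine lin_eq_of_span hfc _ _ ?_
          rintro _ ⟨k, ⟨hk, hk1, hk2⟩, rfl⟩
          exact (hφ k hk (by omega)).2
        simp only [LinearMap.add_apply, LinearMap.comp_apply, hdP, map_zero, add_zero] at this
        rw [map_sub, this, hfi.2.1, sub_self]
      · intro hM
        have h0 : dP (b i) = 0 := by
          have : (b '' {k | G k ∧ deg k + 1 = deg i ∧ ∀ q, A k q ≤ A i q}) = ∅ := by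
            rw [image_eq_empty, eq_empty_iff_forall_notMem]
            rintro k ⟨-, h, -⟩
            omega
          rw [this] at hfc
          simpa using hfc
        rw [h0, map_zero, sub_zero]
        exact hfi.2.2 (by omega)
    choose y hy using key
    let ψ : P →ₗ[ℤ] Q := b.constr ℕ fun i => if h : G i ∧ deg i = M then y i h.1 h.2 else φ (b i)
    have hψ : ∀ i, ψ (b i) = if h : G i ∧ deg i = M then y i h.1 h.2 else φ (b i) := fun i => by
      simp [ψ, Module.Basis.constr_basis]
    have hψl : ∀ i, deg i ≠ M → ψ (b i) = φ (b i) := fun i hi => by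
      rw [hψ, dif_neg (fun h => hi h.2)]
    have hψe : ∀ i (h1 : G i) (h2 : deg i = M), ψ (b i) = y i h1 h2 := fun i h1 h2 => by
      rw [hψ, dif_pos ⟨h1, h2⟩]
    have hψd : ∀ i, G i → deg i < M + 1 → ψ (dP (b i)) = φ (dP (b i)) := by
      intro i hi hd
      refine lin_eq_of_span (hface i hi) _ _ ?_
      rintro _ ⟨k, ⟨hk, hk1, hk2⟩, rfl⟩
      exact hψl k (by omega)
    refine ⟨ψ, fun i hi hd => ?_⟩
    rw [hψd i hi hd]
    by_cases hN : deg i = M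
    · rw [hψe i hi hN]
      have := hy i hi hN
      exact ⟨hN.symm ▸ this.1, by rw [this.2]; abel⟩
    · rw [hψl i hN]
      exact hφ i hi (by omega)

end Carrier

section Tensor

open TensorProduct

variable {V V' : Type*}

/-- shortcut instance, to select the module structure of the tensor product -/
noncomputable instance ch2Module : Module ℤ (Ch V ⊗[ℤ] Ch V) := TensorProduct.instModule

/-- pairs of chains -/
abbrev Ch2 (V : Type*) := Ch V ⊗[ℤ] Ch V

noncomputable def dQ : Ch2 V →ₗ[ℤ] Ch2 V :=
  TensorProduct.map dd LinearMap.id + TensorProduct.map sg dd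

noncomputable def eQ : Ch2 V →ₗ[ℤ] ℤ := LinearMap.mul' ℤ ℤ ∘ₗ TensorProduct.map ep ep

theorem dQ_tmul (x y : Ch V) : dQ (x ⊗ₜ y) = dd x ⊗ₜ y + sg x ⊗ₜ[ℤ] dd y := by
  simp [dQ]

theorem eQ_tmul (x y : Ch V) : eQ (x ⊗ₜ[ℤ] y) = ep x * ep y := by
  simp [eQ]

theorem dQ_dQ (x : Ch2 V) : dQ (dQ x) = 0 := by
  have : (dQ : Ch2 V →ₗ[ℤ] Ch2 V) ∘ₗ dQ = 0 := by
    apply TensorProduct.ext'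
    intro x y
    simp only [LinearMap.comp_apply, dQ_tmul, map_add, dd_dd, dd_sg, zero_tmul, tmul_zero,
      neg_tmul, LinearMap.zero_apply]
    abel
  exact LinearMap.congr_fun this x

theorem eQ_dQ (x : Ch2 V) : eQ (dQ x) = 0 := by
  have : (eQ : Ch2 V →ₗ[ℤ] ℤ) ∘ₗ dQ = 0 := by
    apply TensorProduct.ext'
    intro x y
    simp [dQ_tmul, eQ_tmul, ep_dd]
  exact LinearMap.congr_fun this x

noncomputable def KQ (v w : V) : Ch2 V →ₗ[ℤ] Ch2 V :=
  TensorProduct.map (consL v) LinearMap.id + TensorProduct.map (PP v) (consL w)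

theorem KQ_tmul (v w : V) (x y : Ch V) :
    KQ v w (x ⊗ₜ y) = consL v x ⊗ₜ y + PP v x ⊗ₜ[ℤ] consL w y := by
  simp [KQ]

theorem dQ_KQ (v w : V) (x y : Ch V) : dQ (KQ v w (x ⊗ₜ y)) + KQ v w (dQ (x ⊗ₜ y)) =
    (EE x - PP v x) ⊗ₜ y + PP v x ⊗ₜ[ℤ] (EE y - PP w y) := by
  rw [← dd_consL v x, ← dd_consL w y]
  rw [KQ_tmul, dQ_tmul, map_add, map_add, dQ_tmul, dQ_tmul, KQ_tmul, KQ_tmul, dd_PP, sg_PP, PP_dd,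
    PP_sg, sg_consL]
  simp only [add_tmul, tmul_add, neg_tmul, zero_tmul]
  abel

/-- basis of pair chains -/
noncomputable def bQ (V : Type*) : Module.Basis (List V × List V) ℤ (Ch2 V) :=
  Module.Basis.tensorProduct Finsupp.basisSingleOne Finsupp.basisSingleOne

theorem bQ_apply (p : List V × List V) : bQ V p = sl p.1 ⊗ₜ sl p.2 := by
  obtain ⟨l, l'⟩ := p
  refine (Module.Basis.tensorProduct_apply _ _ _ _).trans ?_
  simp

variable [LinearOrder V]

/-- carrier on pairs -/
noncomputable def carQ (S S' : Set V) (q : ℕ) : Submodule ℤ (Ch2 V) :=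
  Submodule.span ℤ (bQ V '' {p | p.1 ≠ [] ∧ p.2 ≠ [] ∧ p.1.Pairwise (· ≤ ·) ∧ p.2.Pairwise (· ≤ ·) ∧
    (∀ v ∈ p.1, v ∈ S) ∧ (∀ v ∈ p.2, v ∈ S') ∧ p.1.length + p.2.length = q + 2})

theorem carQ_mono {S S' T T' : Set V} (h : S ⊆ T) (h' : S' ⊆ T') (q : ℕ) :
    carQ S S' q ≤ carQ T T' q := by
  refine Submodule.span_mono (Set.image_mono ?_)
  rintro p ⟨h1, h2, h3, h4, h5, h6, h7⟩
  exact ⟨h1, h2, h3, h4, fun v hv => h (h5 v hv), fun v hv => h' (h6 v hv), h7⟩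

theorem tmul_mem_carQ {S S' : Set V} {q : ℕ} {l l' : List V} (h1 : l ≠ []) (h2 : l' ≠ [])
    (h3 : l.Pairwise (· ≤ ·)) (h4 : l'.Pairwise (· ≤ ·)) (h5 : ∀ v ∈ l, v ∈ S)
    (h6 : ∀ v ∈ l', v ∈ S') (h7 : l.length + l'.length = q + 2) :
    sl l ⊗ₜ sl l' ∈ carQ S S' q :=
  Submodule.subset_span ⟨(l, l'), ⟨h1, h2, h3, h4, h5, h6, h7⟩, bQ_apply _⟩

theorem carQ_acyc {S S' : Set V} {v w : V} (hv : v ∈ S) (hw : w ∈ S') (hv' : ∀ u ∈ S, v ≤ u)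
    (hw' : ∀ u ∈ S', w ≤ u) (q : ℕ) (x : Ch2 V) (hx : x ∈ carQ S S' q) (hd : dQ x = 0)
    (he : q = 0 → eQ x = 0) : ∃ y ∈ carQ S S' (q + 1), dQ y = x := by
  refine ⟨KQ v w x, ?_, ?_⟩
  · refine lin_mem_of_span hx _ _ ?_
    rintro _ ⟨⟨l, l'⟩, ⟨h1, h2, h3, h4, h5, h6, h7⟩, rfl⟩
    simp only at h1 h2 h3 h4 h5 h6 h7
    rw [bQ_apply, KQ_tmul]
    refine Submodule.add_mem _ ?_ ?_
    · rw [consL_sl]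
      refine tmul_mem_carQ (by simp) h2 (List.pairwise_cons.2 ⟨fun u hu => hv' u (h5 u hu), h3⟩) h4
        ?_ h6 (by simp; omega)
      simpa [hv] using h5
    · rw [consL_sl, PP_apply]
      by_cases hl : l.length = 1
      · rw [← smul_tmul']
        refine Submodule.smul_mem _ _ ?_
        refine tmul_mem_carQ (by simp) (by simp) (by simp)
          (List.pairwise_cons.2 ⟨fun u hu => hw' u (h6 u hu), h4⟩) (by simpa using hv) ?_
          (by simp; omega)
        simpa [hw] using h6
      · rw [ep_of_length hl]; simp
  · have h1 : (dQ ∘ₗ KQ v w + KQ v w ∘ₗ dQ) x = ((LinearMap.id : Ch2 V →ₗ[ℤ] Ch2 V) -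
        TensorProduct.map (PP v) (PP w)) x := by
      refine lin_eq_of_span hx _ _ ?_
      rintro _ ⟨⟨l, l'⟩, ⟨h1, h2, h3, h4, h5, h6, h7⟩, rfl⟩
      simp only at h1 h2
      rw [bQ_apply]
      simp only [LinearMap.add_apply, LinearMap.comp_apply, LinearMap.sub_apply, LinearMap.id_apply,
        TensorProduct.map_tmul]
      rw [dQ_KQ, EE_sl h1, EE_sl h2]
      simp only [sub_tmul, tmul_sub]
      abel
    have h2 : (TensorProduct.map (PP v) (PP w)) x = (eQ.smulRight (sl [v] ⊗ₜ[ℤ] sl [w])) x := by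
      refine lin_eq_of_span hx _ _ ?_
      rintro _ ⟨⟨l, l'⟩, -, rfl⟩
      rw [bQ_apply]
      simp only [TensorProduct.map_tmul, LinearMap.smulRight_apply, eQ_tmul, PP_apply]
      rw [tmul_smul, ← smul_tmul', smul_smul, mul_comm]
    have h3 : eQ x = 0 := by
      by_cases hq : q = 0
      · exact he hq
      · have : eQ x = (0 : Ch2 V →ₗ[ℤ] ℤ) x := by
          refine lin_eq_of_span hx _ _ ?_
          rintro _ ⟨⟨l, l'⟩, ⟨h1, h2, h3, h4, h5, h6, h7⟩, rfl⟩
          rw [bQ_apply, eQ_tmul]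
          simp only at h7
          by_cases hl : l.length = 1
          · rw [ep_of_length (l := l') (by omega)]; simp
          · rw [ep_of_length hl]; simp
        simpa using this
    simp only [LinearMap.add_apply, LinearMap.comp_apply, LinearMap.sub_apply, LinearMap.id_apply,
      hd, map_zero, add_zero, h2, LinearMap.smulRight_apply, h3, zero_smul, sub_zero] at h1
    exact h1

theorem carQ_point {S S' : Set V} {v w : V} (hv : v ∈ S) (hw : w ∈ S') :
    ∃ x ∈ carQ S S' 0, dQ x = 0 ∧ eQ x = 1 := by
  refine ⟨sl [v] ⊗ₜ sl [w], tmul_mem_carQ (by simp) (by simp) (by simp) (by simp) (by simpa using hv)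
    (by simpa using hw) (by simp), ?_, ?_⟩
  · have : ∀ v : V, dd (sl [v]) = 0 := fun v => by
      show EE (bd _) = _
      simp [bdL]
    rw [dQ_tmul, this, this]; simp
  · rw [eQ_tmul, ep_singleton, ep_singleton]; rfl

/-- strict carrier -/
noncomputable def carW (S : Set V) (q : ℕ) : Submodule ℤ (Ch V) :=
  spn fun l => l.Pairwise (· < ·) ∧ l.length = q + 1 ∧ ∀ v ∈ l, v ∈ S

theorem carW_mono {S T : Set V} (h : S ⊆ T) (q : ℕ) : carW S q ≤ carW T q :=
  spn_mono fun _ hl => ⟨hl.1, hl.2.1, fun v hv => h (hl.2.2 v hv)⟩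

theorem carW_acyc {S : Set V} {v : V} (hv : v ∈ S) (hv' : ∀ u ∈ S, v ≤ u) (q : ℕ) (x : Ch V)
    (hx : x ∈ carW S q) (hd : dd x = 0)
    (he : q = 0 → ep x = 0) : ∃ y ∈ carW S (q + 1), dd y = x := by
  classical
  let κ : Ch V →ₗ[ℤ] Ch V := lin fun l => if v ∈ l then 0 else sl (v :: l)
  have hκ : ∀ l, κ (sl l) = if v ∈ l then 0 else sl (v :: l) := fun l => by simp [κ]
  refine ⟨κ x, ?_, ?_⟩
  · refine map_mem_of_spn _ ?_ hx
    rintro l ⟨h1, h2, h3⟩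
    rw [hκ]
    split_ifs with hvl
    · exact Submodule.zero_mem _
    · refine sl_mem_spn ⟨List.pairwise_cons.2 ⟨fun u hu => ?_, h1⟩, by simp [h2], ?_⟩
      · exact lt_of_le_of_ne (hv' u (h3 u hu)) (fun h => hvl (h ▸ hu))
      · simpa [hv] using h3
  · have h1 : (dd ∘ₗ κ + κ ∘ₗ dd) x = ((LinearMap.id : Ch V →ₗ[ℤ] Ch V) - PP v) x := by
      refine eqOn_of_spn ?_ hx
      rintro l ⟨h1, h2, h3⟩
      simp only [LinearMap.add_apply, LinearMap.comp_apply, LinearMap.sub_apply, LinearMap.id_apply]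
      by_cases hvl : v ∈ l
      · rw [hκ, if_pos hvl, map_zero, zero_add]
        rcases l with _ | ⟨u, l⟩
        · simp at hvl
        have huv : u = v := by
          rcases List.mem_cons.1 hvl with h | h
          · exact h.symm
          · have := (List.pairwise_cons.1 h1).1 v h
            exact absurd (hv' u (h3 u (by simp))) (not_le.2 this)
        subst huv
        have hul : u ∉ l := fun h => lt_irrefl _ ((List.pairwise_cons.1 h1).1 u h)
        have hκc : ∀ y, κ (consL u y) = 0 := fun y => by
          have : κ ∘ₗ consL u = 0 := by
            apply Ch.ext_lin
            intro m
            simp [hκ]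
          exact LinearMap.congr_fun this y
        rcases l with _ | ⟨w, l⟩
        · rw [PP_apply, ep_singleton]
          show κ (EE (bd _)) = _
          simp [bdL]
        · rw [PP_apply, ep_of_length (by simp)]
          rw [dd_apply, ep_of_length (by simp), bd_sl, bdL, zero_smul, sub_zero, map_sub, hκc, hκ,
            if_neg hul]
          simp
      · rw [hκ, if_neg hvl]
        have h4 : κ (dd (sl l)) = consL v (dd (sl l)) := by
          refine eqOn_of_spn ?_ (ddL_mem l)
          rintro τ ⟨-, h5, -⟩
          rw [hκ, if_neg (fun h => hvl (h5.subset h)), consL_sl]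
        rw [h4, ← consL_sl, dd_consL, EE_sl]
        rintro rfl
        simp at h2
    have h3 : ep x = 0 := by
      by_cases hq : q = 0
      · exact he hq
      · have : ep x = (0 : Ch V →ₗ[ℤ] ℤ) x := by
          refine eqOn_of_spn ?_ hx
          rintro l ⟨h1, h2, h3⟩
          rw [ep_of_length (by omega)]; simp
        simpa using this
    simp only [LinearMap.add_apply, LinearMap.comp_apply, LinearMap.sub_apply, LinearMap.id_apply,
      hd, map_zero, add_zero, PP_apply, h3, zero_smul, sub_zero] at h1
    exact h1

theorem carW_point {S : Set V} {v : V} (hv : v ∈ S) :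
    ∃ x ∈ carW S 0, dd x = 0 ∧ ep x = 1 := by
  refine ⟨sl [v], sl_mem_spn ⟨by simp, by simp, by simpa using hv⟩, ?_, ep_singleton v⟩
  show EE (bd _) = _
  simp [bdL]

end Tensor

end

section
section TT

open TensorProduct

variable {V V' : Type*}

theorem dQ_mem (p : List V × List V) (h1 : p.1 ≠ []) (h2 : p.2 ≠ []) :
    dQ (bQ V p) ∈ Submodule.span ℤ (bQ V '' {r | r.1 ≠ [] ∧ r.2 ≠ [] ∧ r.1.Sublist p.1 ∧
      r.2.Sublist p.2 ∧ r.1.length + r.2.length + 1 = p.1.length + p.2.length}) := by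
  rw [bQ_apply, dQ_tmul]
  refine Submodule.add_mem _ ?_ ?_
  · refine map_mem_of_spn ((TensorProduct.mk ℤ (Ch V) (Ch V)).flip (sl p.2)) ?_ (ddL_mem p.1)
    rintro τ ⟨h3, h4, h5⟩
    refine Submodule.subset_span ⟨(τ, p.2), ⟨h3, h2, h4, List.Sublist.refl _, ?_⟩, ?_⟩
    · simp only; omega
    · rw [bQ_apply]; rfl
  · rw [sg_sl, ← smul_tmul']
    refine Submodule.smul_mem _ _ ?_
    refine map_mem_of_spn (TensorProduct.mk ℤ (Ch V) (Ch V) (sl p.1)) ?_ (ddL_mem p.2)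
    rintro τ ⟨h3, h4, h5⟩
    refine Submodule.subset_span ⟨(p.1, τ), ⟨h1, h3, List.Sublist.refl _, h4, ?_⟩, ?_⟩
    · simp only; omega
    · rw [bQ_apply]; rfl

theorem sg_mapC (f : V → V') (x : Ch V) : sg (mapC f x) = mapC f (sg x) := by
  have : sg ∘ₗ mapC f = mapC f ∘ₗ sg := by
    apply Ch.ext_lin
    intro l
    simp [-Finsupp.smul_single]
  exact LinearMap.congr_fun this x

/-- the induced map on pairs -/
noncomputable def mapQ (f : V → V') : Ch2 V →ₗ[ℤ] Ch2 V' := TensorProduct.map (mapC f) (mapC f)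

theorem mapQ_tmul (f : V → V') (x y : Ch V) : mapQ f (x ⊗ₜ[ℤ] y) = mapC f x ⊗ₜ mapC f y := by
  simp [mapQ]

theorem dQ_mapQ (f : V → V') (x : Ch2 V) : dQ (mapQ f x) = mapQ f (dQ x) := by
  have : dQ ∘ₗ mapQ f = mapQ f ∘ₗ dQ := by
    apply TensorProduct.ext'
    intro x y
    simp only [LinearMap.comp_apply, mapQ_tmul, dQ_tmul, map_add, dd_mapC, sg_mapC]
  exact LinearMap.congr_fun this x

/-- sorted lists spanning a simplex of the nerve, with a common point in `A` -/
def NV {Y : Type*} {k : ℕ} (U : Fin k → Set Y) (A : Set Y) (l : List (Fin k)) : Prop :=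
  l ≠ [] ∧ l.Pairwise (· ≤ ·) ∧ ∃ x ∈ A, ∀ v ∈ l, x ∈ U v

theorem NV.sublist {Y : Type*} {k : ℕ} {U : Fin k → Set Y} {A : Set Y} {l τ : List (Fin k)}
    (h : NV U A l) (hτ : τ ≠ []) (hs : τ.Sublist l) : NV U A τ := by
  obtain ⟨h1, h2, x, hx, h3⟩ := h
  exact ⟨hτ, h2.sublist hs, x, hx, fun v hv => h3 v (hs.subset hv)⟩

theorem NV.mono {Y : Type*} {k : ℕ} {U : Fin k → Set Y} {A B : Set Y} {l : List (Fin k)}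
    (h : NV U A l) (hAB : A ⊆ B) : NV U B l := by
  obtain ⟨h1, h2, x, hx, h3⟩ := h
  exact ⟨h1, h2, x, hAB hx, h3⟩

theorem exists_min_fin {k : ℕ} {S : Set (Fin k)} (h : S.Nonempty) : ∃ v ∈ S, ∀ u ∈ S, v ≤ u := by
  obtain ⟨v, hv, h⟩ := S.toFinite.exists_minimal h
  exact ⟨v, hv, fun u hu => by
    rcases le_total v u with h' | h'
    · exact h'
    · exact h hu h'⟩

theorem T_main {Y : Type*} [MetricSpace Y] [CompactSpace Y] {n M k : ℕ} (hD : DimLE n Y)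
    (hDD : DimLE M (Y × Y)) (U : Fin k → Set Y) (ho : ∀ i, IsOpen (U i))
    (hc : ∀ x, ∃ i, x ∈ U i) :
    ∃ (k' : ℕ) (U' : Fin k' → Set Y) (t : Fin k' → Fin k), FCov n U' ∧ Monotone t ∧
      (∀ i, U' i ⊆ U (t i)) ∧ ∀ q, M < q → ∃ h : Ch2 (Fin k') →ₗ[ℤ] Ch2 (Fin k),
        ∀ l l', NV U' univ l → NV U' univ l' →
          (l.length + l'.length = q + 2 → mapQ t (sl l ⊗ₜ sl l') =
            dQ (h (sl l ⊗ₜ sl l')) + h (dQ (sl l ⊗ₜ sl l'))) ∧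
          (l.length + l'.length ≤ q + 2 → h (sl l ⊗ₜ sl l') ∈ carQ {v | ∃ a ∈ l, U' a ⊆ U v}
            {v | ∃ a ∈ l', U' a ⊆ U v} (l.length + l'.length - 1)) := by
  obtain ⟨w, W, hW, hWU⟩ := hDD.fintype (fun p : Fin k × Fin k => U p.1 ×ˢ U p.2)
    (fun p => (ho _).prod (ho _)) (fun x => by
      obtain ⟨i, hi⟩ := hc x.1
      obtain ⟨j, hj⟩ := hc x.2
      exact ⟨(i, j), hi, hj⟩)
  choose s hs using hWU
  obtain ⟨T, UT, hTo, hTc, hTW⟩ := exists_cover_prod W hW.1 hW.2.1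
  obtain ⟨k', U', t, hU', ht, hUt, hUT⟩ := hD.monotone_refine U ho hc UT hTo hTc
  refine ⟨k', U', t, hU', ht, hUt, fun q hq => ?_⟩
  have hUW : ∀ a b, ∃ y, U' a ×ˢ U' b ⊆ W y := by
    intro a b
    obtain ⟨a', ha'⟩ := hUT a
    obtain ⟨b', hb'⟩ := hUT b
    obtain ⟨y, hy⟩ := hTW a' b'
    exact ⟨y, (prod_mono ha' hb').trans hy⟩
  let deg : List (Fin k') × List (Fin k') → ℕ := fun p => p.1.length + p.2.length - 2
  let G : List (Fin k') × List (Fin k') → Prop := fun p => NV U' univ p.1 ∧ NV U' univ p.2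
  have hlen : ∀ l : List (Fin k'), NV U' univ l → 1 ≤ l.length := fun l hl =>
    List.length_pos_iff.2 hl.1
  let Mid : List (Fin k') × List (Fin k') → Set (Fin w) := fun p =>
    {y | ∃ a ∈ p.1, ∃ b ∈ p.2, U' a ×ˢ U' b ⊆ W y}
  have hMidne : ∀ p, G p → (Mid p).Nonempty := by
    rintro p ⟨h1, h2⟩
    obtain ⟨a, ha⟩ := List.exists_mem_of_ne_nil _ h1.1
    obtain ⟨b, hb⟩ := List.exists_mem_of_ne_nil _ h2.1
    obtain ⟨y, hy⟩ := hUW a b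
    exact ⟨y, a, ha, b, hb, hy⟩
  have hMidmono : ∀ p r : List (Fin k') × List (Fin k'), r.1.Sublist p.1 → r.2.Sublist p.2 →
      Mid r ⊆ Mid p := by
    rintro p r h1 h2 y ⟨a, ha, b, hb, h⟩
    exact ⟨a, h1.subset ha, b, h2.subset hb, h⟩
  let SS : List (Fin k') → Set (Fin k) := fun l => {v | ∃ a ∈ l, U' a ⊆ U v}
  have hSSne : ∀ l, NV U' univ l → (SS l).Nonempty := by
    intro l hl
    obtain ⟨a, ha⟩ := List.exists_mem_of_ne_nil _ hl.1
    exact ⟨t a, a, ha, hUt a⟩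
  have hSSmono : ∀ l τ : List (Fin k'), τ.Sublist l → SS τ ⊆ SS l := by
    rintro l τ h v ⟨a, ha, h'⟩
    exact ⟨a, h.subset ha, h'⟩
  have hfaces : ∀ p, G p → ∀ R : (List (Fin k') × List (Fin k')) → Prop,
      (∀ r : List (Fin k') × List (Fin k'), r.1.Sublist p.1 → r.2.Sublist p.2 → R r) →
      dQ (bQ _ p) ∈ Submodule.span ℤ (bQ _ '' {r | G r ∧ deg r + 1 = deg p ∧ R r}) := by
    intro p hp R hR
    refine Submodule.span_mono (Set.image_mono ?_) (dQ_mem p hp.1.1 hp.2.1)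
    rintro r ⟨h1, h2, h3, h4, h5⟩
    have g1 := hp.1.sublist h1 h3
    have g2 := hp.2.sublist h2 h4
    refine ⟨⟨g1, g2⟩, ?_, hR r h3 h4⟩
    have := hlen _ g1
    have := hlen _ g2
    simp only [deg]
    omega
  -- first map
  obtain ⟨φ1, hφ1⟩ := carrier_exists (bQ (Fin k')) deg G dQ eQ (dd (V := Fin w)) ep
    (fun p j => carW (Mid p) j)
    (fun p hp => hfaces p hp _ fun r h1 h2 j => carW_mono (hMidmono p r h1 h2) j) dQ_dQ
    (fun p hp j x hx hd he => by
      obtain ⟨v, hv, hv'⟩ := exists_min_fin (hMidne p hp)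
      exact carW_acyc hv hv' j x hx hd he)
    (fun p hp => by
      obtain ⟨v, hv, hv'⟩ := exists_min_fin (hMidne p hp)
      exact carW_point hv)
    (fun p hp hd => by
      have h1 := hlen _ hp.1
      have h2 := hlen _ hp.2
      simp only [deg] at hd
      obtain ⟨a, ha⟩ := List.length_eq_one_iff.1 (show p.1.length = 1 by omega)
      obtain ⟨b, hb⟩ := List.length_eq_one_iff.1 (show p.2.length = 1 by omega)
      rw [bQ_apply, eQ_tmul, ha, hb, ep_singleton, ep_singleton]; rfl)
    (fun p hp hd => eQ_dQ _) (q + 2)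
  -- second map
  let bW : Module.Basis (List (Fin w)) ℤ (Ch (Fin w)) := Finsupp.basisSingleOne
  have hbW : ∀ u, bW u = sl u := fun u => by simp [bW]
  let GW : List (Fin w) → Prop := fun u => u ≠ [] ∧ u.Pairwise (· < ·)
  let S1 : List (Fin w) → Set (Fin k) := fun u => {v | ∃ y ∈ u, (s y).1 = v}
  let S2 : List (Fin w) → Set (Fin k) := fun u => {v | ∃ y ∈ u, (s y).2 = v}
  have hS1ne : ∀ u, GW u → (S1 u).Nonempty := fun u hu => by
    obtain ⟨y, hy⟩ := List.exists_mem_of_ne_nil _ hu.1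
    exact ⟨_, y, hy, rfl⟩
  have hS2ne : ∀ u, GW u → (S2 u).Nonempty := fun u hu => by
    obtain ⟨y, hy⟩ := List.exists_mem_of_ne_nil _ hu.1
    exact ⟨_, y, hy, rfl⟩
  obtain ⟨φ2, hφ2⟩ := carrier_exists bW (fun u => u.length - 1) GW dd ep (dQ (V := Fin k)) eQ
    (fun u j => carQ (S1 u) (S2 u) j)
    (fun u hu => by
      rw [hbW]
      refine Submodule.span_mono ?_ (ddL_mem u)
      rintro _ ⟨τ, ⟨h1, h2, h3⟩, rfl⟩
      refine ⟨τ, ⟨⟨h1, hu.2.sublist h2⟩, ?_, fun j => carQ_mono ?_ ?_ j⟩, hbW τ⟩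
      · have := List.length_pos_iff.2 h1
        omega
      · rintro v ⟨y, hy, h⟩
        exact ⟨y, h2.subset hy, h⟩
      · rintro v ⟨y, hy, h⟩
        exact ⟨y, h2.subset hy, h⟩) dd_dd
    (fun u hu j x hx hd he => by
      obtain ⟨v, hv, hv'⟩ := exists_min_fin (hS1ne u hu)
      obtain ⟨v2, hv2, hv2'⟩ := exists_min_fin (hS2ne u hu)
      exact carQ_acyc hv hv2 hv' hv2' j x hx hd he)
    (fun u hu => by
      obtain ⟨v, hv, hv'⟩ := exists_min_fin (hS1ne u hu)
      obtain ⟨v2, hv2, hv2'⟩ := exists_min_fin (hS2ne u hu)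
      exact carQ_point hv hv2)
    (fun u hu hd => by
      have := List.length_pos_iff.2 hu.1
      obtain ⟨a, ha⟩ := List.length_eq_one_iff.1 (show u.length = 1 by omega)
      rw [hbW, ha, ep_singleton])
    (fun u hu hd => ep_dd _) (q + 2)
  simp only [hbW] at hφ2
  -- elements of the middle carrier
  have hmid : ∀ p, G p → ∀ y ∈ Mid p, (s y).1 ∈ SS p.1 ∧ (s y).2 ∈ SS p.2 := by
    rintro p ⟨⟨-, -, x, -, hx⟩, ⟨-, -, x', -, hx'⟩⟩ y ⟨a, ha, b, hb, hab⟩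
    have h := hab.trans (hs y)
    exact ⟨⟨a, ha, fun z hz => (h (show (z, x') ∈ U' a ×ˢ U' b from ⟨hz, hx' b hb⟩)).1⟩,
      ⟨b, hb, fun z hz => (h (show (x, z) ∈ U' a ×ˢ U' b from ⟨hx a ha, hz⟩)).2⟩⟩
  have hΦmem : ∀ p, G p → deg p < q + 2 → φ2 (φ1 (bQ _ p)) ∈ carQ (SS p.1) (SS p.2) (deg p) := by
    intro p hp hd
    refine map_mem_of_spn φ2 ?_ (hφ1 p hp hd).1
    rintro u ⟨h1, h2, h3⟩
    have hu : GW u := ⟨by rintro rfl; simp at h2, h1⟩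
    have := (hφ2 u hu (by omega)).1
    rw [h2, Nat.add_sub_cancel] at this
    refine carQ_mono ?_ ?_ _ this
    · rintro v ⟨y, hy, rfl⟩
      exact (hmid p hp y (h3 y hy)).1
    · rintro v ⟨y, hy, rfl⟩
      exact (hmid p hp y (h3 y hy)).2
  have hΦd : ∀ p, G p → deg p < q + 2 → dQ (φ2 (φ1 (bQ _ p))) = φ2 (φ1 (dQ (bQ _ p))) := by
    intro p hp hd
    rw [← (hφ1 p hp hd).2.1]
    refine eqOn_of_spn (f := dQ ∘ₗ φ2) (g := φ2 ∘ₗ dd) ?_ (hφ1 p hp hd).1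
    rintro u ⟨h1, h2, h3⟩
    exact (hφ2 u ⟨by rintro rfl; simp at h2, h1⟩ (by omega)).2.1
  have hΦe : ∀ p, G p → deg p = 0 → eQ (φ2 (φ1 (bQ _ p))) = 1 := by
    intro p hp hd
    have := hφ1 p hp (by omega)
    rw [← this.2.2 hd]
    refine eqOn_of_spn (f := eQ ∘ₗ φ2) (g := ep) ?_ this.1
    rintro u ⟨h1, h2, h3⟩
    have hu : GW u := ⟨by rintro rfl; simp at h2, h1⟩
    obtain ⟨a, ha⟩ := List.length_eq_one_iff.1 (show u.length = 1 by omega)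
    rw [LinearMap.comp_apply, (hφ2 u hu (by omega)).2.2 (by omega), ha, ep_singleton]
  have hΦ0 : ∀ p, G p → deg p = q → φ2 (φ1 (bQ _ p)) = 0 := by
    intro p hp hd
    have : φ1 (bQ _ p) = 0 := by
      have h0 : (LinearMap.id : Ch (Fin w) →ₗ[ℤ] Ch (Fin w)) (φ1 (bQ _ p)) = (0 : Ch (Fin w) →ₗ[ℤ] Ch (Fin w)) (φ1 (bQ _ p)) := by
        refine eqOn_of_spn ?_ (hφ1 p hp (by omega)).1
        rintro u ⟨h1, h2, h3⟩
        exfalso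
        obtain ⟨⟨-, -, x, -, hx⟩, ⟨-, -, x', -, hx'⟩⟩ := hp
        have h4 := hW.2.2 (x, x') u.toFinset (by
          intro y hy
          obtain ⟨a, ha, b, hb, hab⟩ := h3 y (List.mem_toFinset.1 hy)
          exact hab ⟨hx a ha, hx' b hb⟩)
        rw [List.toFinset_card_of_nodup (h1.imp fun h => h.ne)] at h4
        omega
      simpa using h0
    rw [this, map_zero]
  obtain ⟨h, hh⟩ := carrier_homotopy (bQ (Fin k')) deg G dQ (dQ (V := Fin k)) eQ
    (fun p j => carQ (SS p.1) (SS p.2) j)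
    (fun p hp => hfaces p hp _ fun r h1 h2 j => carQ_mono (hSSmono _ _ h1) (hSSmono _ _ h2) j) dQ_dQ
    (fun p hp j x hx hd he => by
      obtain ⟨v, hv, hv'⟩ := exists_min_fin (hSSne _ hp.1)
      obtain ⟨v2, hv2, hv2'⟩ := exists_min_fin (hSSne _ hp.2)
      exact carQ_acyc hv hv2 hv' hv2' j x hx hd he) (q + 2) (mapQ t - φ2 ∘ₗ φ1)
    (fun p hp hd => by
      have g1 := hlen _ hp.1
      have g2 := hlen _ hp.2
      refine ⟨?_, ?_, ?_⟩
      · rw [LinearMap.sub_apply, LinearMap.comp_apply]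
        refine Submodule.sub_mem _ ?_ (hΦmem p hp hd)
        rw [bQ_apply, mapQ_tmul, mapC_sl, mapC_sl]
        refine tmul_mem_carQ (by simpa using hp.1.1) (by simpa using hp.2.1)
          (hp.1.2.1.map _ fun _ _ h => ht h) (hp.2.2.1.map _ fun _ _ h => ht h) ?_ ?_ ?_
        · intro v hv
          obtain ⟨a, ha, rfl⟩ := List.mem_map.1 hv
          exact ⟨a, ha, hUt a⟩
        · intro v hv
          obtain ⟨a, ha, rfl⟩ := List.mem_map.1 hv
          exact ⟨a, ha, hUt a⟩
        · simp only [List.length_map, deg]; omega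
      · simp only [LinearMap.sub_apply, LinearMap.comp_apply, map_sub, dQ_mapQ, hΦd p hp hd]
      · intro h0
        have g3 := hΦe p hp h0
        simp only [LinearMap.sub_apply, LinearMap.comp_apply, map_sub, g3]
        simp only [deg] at h0
        obtain ⟨a, ha⟩ := List.length_eq_one_iff.1 (show p.1.length = 1 by omega)
        obtain ⟨b, hb⟩ := List.length_eq_one_iff.1 (show p.2.length = 1 by omega)
        rw [bQ_apply, mapQ_tmul, eQ_tmul, ha, hb, ep_mapC, ep_mapC, ep_singleton, ep_singleton]; rfl)
    (q + 2) le_rfl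
  refine ⟨h, fun l l' hl hl' => ⟨fun hsum => ?_, fun hsum => ?_⟩⟩
  · have hp : G (l, l') := ⟨hl, hl'⟩
    have hd : deg (l, l') = q := by simp only [deg]; omega
    have g1 := (hh (l, l') hp (by omega)).2
    rw [LinearMap.sub_apply, LinearMap.comp_apply, hΦ0 _ hp hd, sub_zero, bQ_apply] at g1
    exact g1.symm
  · have hp : G (l, l') := ⟨hl, hl'⟩
    have g2 := hlen _ hl
    have g3 := hlen _ hl'
    have hd : deg (l, l') + 1 = l.length + l'.length - 1 := by simp only [deg]; omega
    have g1 := (hh (l, l') hp (by omega)).1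
    rw [hd, bQ_apply] at g1
    exact g1

/-- The form of the transfer used below. -/
theorem T_cor {Y : Type*} [MetricSpace Y] [CompactSpace Y] {n M k : ℕ} (hD : DimLE n Y)
    (hDD : DimLE M (Y × Y)) (U : Fin k → Set Y) (ho : ∀ i, IsOpen (U i))
    (hc : ∀ x, ∃ i, x ∈ U i) (A : Set Y) :
    ∃ (k' : ℕ) (U' : Fin k' → Set Y) (t : Fin k' → Fin k), FCov n U' ∧ Monotone t ∧
      (∀ i, U' i ⊆ U (t i)) ∧ ∀ q, M < q → ∀ z : Ch2 (Fin k) →ₗ[ℤ] ℤ,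
        (∀ m m', NV U univ m → NV U univ m' → m.length + m'.length = q + 3 →
          z (dQ (sl m ⊗ₜ sl m')) = 0) →
        (∀ m m', NV U univ m → NV U univ m' → m.length + m'.length = q + 2 →
          (NV U A m ∨ NV U A m') → z (sl m ⊗ₜ sl m') = 0) →
        ∃ e : Ch2 (Fin k') →ₗ[ℤ] ℤ,
          (∀ l l', NV U' univ l → NV U' univ l' → l.length + l'.length = q + 2 →
            z (sl (l.map t) ⊗ₜ sl (l'.map t)) = e (dQ (sl l ⊗ₜ sl l'))) ∧
          (∀ l l', NV U' univ l → NV U' univ l' → l.length + l'.length = q + 1 →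
            (NV U' A l ∨ NV U' A l') → e (sl l ⊗ₜ sl l') = 0) := by
  obtain ⟨k', U', t, h1, h2, h3, h4⟩ := T_main hD hDD U ho hc
  refine ⟨k', U', t, h1, h2, h3, fun q hq z hz hzA => ?_⟩
  obtain ⟨h, hh⟩ := h4 q hq
  have hNV : ∀ (B : Set Y) (l : List (Fin k')) (m : List (Fin k)), NV U' B l → m ≠ [] →
      m.Pairwise (· ≤ ·) → (∀ v ∈ m, v ∈ {v | ∃ a ∈ l, U' a ⊆ U v}) → NV U B m := by
    rintro B l m ⟨-, -, x, hxB, hx⟩ g1 g2 g3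
    refine ⟨g1, g2, x, hxB, fun v hv => ?_⟩
    obtain ⟨a, ha, hav⟩ := g3 v hv
    exact hav (hx a ha)
  refine ⟨z ∘ₗ h, fun l l' hl hl' hsum => ?_, fun l l' hl hl' hsum hA => ?_⟩
  · have g := (hh l l' hl hl').1 hsum
    have g2 := (hh l l' hl hl').2 hsum.le
    have g3 : (z ∘ₗ dQ) (h (sl l ⊗ₜ sl l')) = (0 : Ch2 (Fin k) →ₗ[ℤ] ℤ) (h (sl l ⊗ₜ sl l')) := by
      refine lin_eq_of_span g2 _ _ ?_
      rintro _ ⟨⟨m, m'⟩, ⟨a1, a2, a3, a4, a5, a6, a7⟩, rfl⟩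
      rw [bQ_apply]
      refine hz m m' (hNV _ l m hl a1 a3 a5) (hNV _ l' m' hl' a2 a4 a6) ?_
      simp only at a7
      omega
    rw [mapQ_tmul, mapC_sl, mapC_sl] at g
    rw [g, map_add]
    simp only [LinearMap.comp_apply, LinearMap.zero_apply] at g3 ⊢
    rw [g3, zero_add]
  · have g2 := (hh l l' hl hl').2 (by omega)
    have g3 : z (h (sl l ⊗ₜ sl l')) = (0 : Ch2 (Fin k) →ₗ[ℤ] ℤ) (h (sl l ⊗ₜ sl l')) := by
      refine lin_eq_of_span g2 _ _ ?_
      rintro _ ⟨⟨m, m'⟩, ⟨a1, a2, a3, a4, a5, a6, a7⟩, rfl⟩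
      rw [bQ_apply]
      refine hzA m m' (hNV _ l m hl a1 a3 a5) (hNV _ l' m' hl' a2 a4 a6) ?_ ?_
      · simp only at a7
        have := List.length_pos_iff.2 hl.1
        omega
      · exact hA.imp (fun g => hNV _ l m g a1 a3 a5) (fun g => hNV _ l' m' g a2 a4 a6)
    simpa using g3

end TT

end

section
section Alg

open TensorProduct

theorem om_bd (len : ℕ) : ∀ (a : ℕ) (k : List ℕ), k.Pairwise (· ≤ ·) → k.length = len + 1 →
    (∀ x ∈ k, x < a + len) →
    ((bdL k (List.range' a len) = 1 ∧ ∃ x < a, k = x :: List.range' a len) ∨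
    (bdL k (List.range' a len) = 0 ∧ ¬ ∃ x < a, k = x :: List.range' a len)) := by
  induction len with
  | zero =>
    intro a k h1 h2 h3
    obtain ⟨x, rfl⟩ := List.length_eq_one_iff.1 (show k.length = 1 by omega)
    left
    refine ⟨by simp [bdL], x, by simpa using h3, by simp⟩
  | succ len ih =>
    intro a k h1 h2 h3
    rcases k with _ | ⟨x, k⟩
    · simp at h2
    rw [List.pairwise_cons] at h1
    simp only [List.length_cons] at h2
    have h4 : ∀ y ∈ k, y < a + 1 + len := fun y hy => by
      have := h3 y (by simp [hy]); omega
    have hcons : ∀ (z : Ch ℕ), consL x z (a :: List.range' (a + 1) len) =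
        if x = a then z (List.range' (a + 1) len) else 0 := by
      intro z
      have : Finsupp.lapply (R := ℤ) (a :: List.range' (a + 1) len) ∘ₗ consL x =
          if x = a then Finsupp.lapply (R := ℤ) (List.range' (a + 1) len) else 0 := by
        apply Ch.ext_lin
        intro l
        by_cases hxa : x = a
        · subst hxa
          simp [Finsupp.single_apply]
        · simp [Finsupp.single_apply, hxa]
      have := LinearMap.congr_fun this z
      by_cases hxa : x = a
      · simpa [hxa] using this
      · simpa [hxa] using this
    rw [bdL, Finsupp.sub_apply, List.range'_succ, hcons]
    rcases ih (a + 1) k h1.2 (by omega) h4 with ⟨g1, y, hy, g2⟩ | ⟨g1, g2⟩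
    · rw [g1, Finsupp.single_apply]
      by_cases hxa : x = a
      · have hya : y = a := by
          have := h1.1 y (by simp [g2]); omega
        rw [if_pos hxa, if_pos (by rw [g2, hya])]
        right
        refine ⟨by simp, ?_⟩
        rintro ⟨x', hx', g3⟩
        simp only [List.cons.injEq] at g3
        omega
      · rw [if_neg hxa]
        by_cases hya : y = a
        · left
          rw [if_pos (by rw [g2, hya])]
          refine ⟨by simp, x, ?_, by rw [g2, hya]⟩
          have := h1.1 y (by simp [g2]); omega
        · right
          rw [if_neg (by rw [g2]; simp [hya])]
          refine ⟨by simp, ?_⟩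
          rintro ⟨x', hx', g3⟩
          rw [g2] at g3
          simp only [List.cons.injEq] at g3
          exact hya g3.2.1
    · rw [g1, Finsupp.single_apply]
      right
      have : k ≠ a :: List.range' (a + 1) len := fun h => g2 ⟨a, by omega, h⟩
      rw [if_neg this]
      refine ⟨by simp, ?_⟩
      rintro ⟨x', hx', g3⟩
      simp only [List.cons.injEq] at g3
      exact this g3.2

/-- the obstruction cocycle -/
noncomputable def cC (n : ℕ) {k : ℕ} (χ : Fin k → ℕ) : Ch (Fin k) →ₗ[ℤ] ℤ :=
  Finsupp.lapply (List.range' 1 n) ∘ₗ bd ∘ₗ mapC χ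

theorem cC_sl (n : ℕ) {k : ℕ} (χ : Fin k → ℕ) (l : List (Fin k)) :
    cC n χ (sl l) = bdL (l.map χ) (List.range' 1 n) := by
  simp [cC]

theorem cC_dd (n : ℕ) {k : ℕ} (χ : Fin k → ℕ) (x : Ch (Fin k)) : cC n χ (dd x) = 0 := by
  show (bd (mapC χ (dd x))) (List.range' 1 n) = 0
  rw [bd_mapC, bd_dd]; simp

theorem cC_length (n : ℕ) {k : ℕ} (χ : Fin k → ℕ) (l : List (Fin k)) (h : l.length ≠ n + 1) :
    cC n χ (sl l) = 0 := by
  rw [cC_sl]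
  have : Finsupp.lapply (R := ℤ) (List.range' 1 n) (bdL (l.map χ)) =
      (0 : Ch ℕ →ₗ[ℤ] ℤ) (bdL (l.map χ)) := by
    refine eqOn_of_spn ?_ (bdL_mem _)
    rintro τ ⟨-, h2⟩
    rw [List.length_map] at h2
    simp only [Finsupp.lapply_apply, LinearMap.zero_apply, Finsupp.single_apply]
    rw [if_neg]
    rintro rfl
    simp at h2
    omega
  simpa using this

theorem cC_map (n : ℕ) {k k' : ℕ} (χ : Fin k → ℕ) (t : Fin k' → Fin k) (l : List (Fin k')) :
    cC n χ (sl (l.map t)) = cC n (χ ∘ t) (sl l) := by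
  rw [cC_sl, cC_sl, List.map_map]

variable {Y : Type*} [TopologicalSpace Y] {n k : ℕ}

def IsStage (n : ℕ) (O : ℕ → Set Y) {k : ℕ} (U : Fin k → Set Y) (χ : Fin k → ℕ) : Prop :=
  FCov n U ∧ Monotone χ ∧ (∀ v, χ v ≤ n) ∧ ∀ v, U v ⊆ O (χ v)

theorem IsStage.cC_zero {O : ℕ → Set Y} {U : Fin k → Set Y} {χ : Fin k → ℕ}
    (h : IsStage n O U χ) {A : Set Y} (hA : ∀ x ∈ A, ∃ i ≤ n, x ∉ O i) {l : List (Fin k)}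
    (hl : NV U A l) : cC n χ (sl l) = 0 := by
  by_cases hlen : l.length = n + 1
  · obtain ⟨h1, h2, x, hx, h3⟩ := hl
    rw [cC_sl]
    rcases om_bd n 1 (l.map χ) (h2.map _ fun _ _ h' => h.2.1 h') (by simpa using hlen) (by
      intro y hy
      obtain ⟨v, -, rfl⟩ := List.mem_map.1 hy
      have := h.2.2.1 v
      omega) with ⟨-, y, hy, g⟩ | ⟨g, -⟩
    · obtain ⟨i, hi, hxi⟩ := hA x hx
      have : i ∈ l.map χ := by
        rw [g, List.mem_cons, List.mem_range'_1]
        omega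
      obtain ⟨v, hv, rfl⟩ := List.mem_map.1 this
      exact absurd (h.2.2.2 v (h3 v hv)) hxi
    · exact g
  · exact cC_length n χ l hlen

/-- the top simplices -/
def Top (U : Fin k → Set Y) (n : ℕ) := {l : List (Fin k) // NV U univ l ∧ l.length = n + 1}

instance (U : Fin k → Set Y) (n : ℕ) : Finite (Top U n) :=
  Set.Finite.subset (List.finite_length_eq (Fin k) (n + 1)) fun _ hl => hl.2

/-- relative coboundaries -/
def Bnd (U : Fin k → Set Y) (A : Set Y) (n : ℕ) : Submodule ℤ (Top U n → ℤ) where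
  carrier := {g | ∃ b : Ch (Fin k) →ₗ[ℤ] ℤ, (∀ l, NV U A l → l.length = n → b (sl l) = 0) ∧
    ∀ l : Top U n, g l = b (dd (sl l.1))}
  zero_mem' := ⟨0, fun _ _ _ => rfl, fun _ => rfl⟩
  add_mem' := by
    rintro g g' ⟨b, h1, h2⟩ ⟨b', h1', h2'⟩
    exact ⟨b + b', fun l hl hn => by simp [h1 l hl hn, h1' l hl hn], fun l => by simp [h2, h2']⟩
  smul_mem' := by
    rintro r g ⟨b, h1, h2⟩
    exact ⟨r • b, fun l hl hn => by simp [h1 l hl hn], fun l => by simp [h2]⟩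

noncomputable def cT (U : Fin k → Set Y) (χ : Fin k → ℕ) (n : ℕ) : Top U n → ℤ :=
  fun l => cC n χ (sl l.1)

theorem NV.map {U : Fin k → Set Y} {A : Set Y} {k' : ℕ} {U' : Fin k' → Set Y}
    {t : Fin k' → Fin k} (ht : Monotone t) (hU : ∀ i, U' i ⊆ U (t i)) {l : List (Fin k')}
    (hl : NV U' A l) : NV U A (l.map t) := by
  obtain ⟨h1, h2, x, hx, h3⟩ := hl
  refine ⟨by simpa using h1, h2.map _ fun _ _ h => ht h, x, hx, fun v hv => ?_⟩
  obtain ⟨a, ha, rfl⟩ := List.mem_map.1 hv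
  exact hU a (h3 a ha)

theorem IsStage.refine' {O : ℕ → Set Y} {U : Fin k → Set Y} {χ : Fin k → ℕ}
    (h : IsStage n O U χ) {k' : ℕ} {U' : Fin k' → Set Y} (h' : FCov n U')
    {t : Fin k' → Fin k} (ht : Monotone t) (hU : ∀ i, U' i ⊆ U (t i)) :
    IsStage n O U' (χ ∘ t) :=
  ⟨h', h.2.1.comp ht, fun v => h.2.2.1 _, fun v => (hU v).trans (h.2.2.2 _)⟩

/-- an element of a finitely generated abelian group quotient killed by all functionals is torsion -/
theorem torsion_of_functionals {D : Type*} [AddCommGroup D] [Module.Finite ℤ D]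
    (B : Submodule ℤ D) (c : D) (h : ∀ lam : D →ₗ[ℤ] ℤ, (∀ b ∈ B, lam b = 0) → lam c = 0) :
    ∃ m : ℕ, 1 ≤ m ∧ (m : ℤ) • c ∈ B := by
  let T := Submodule.torsion ℤ (D ⧸ B)
  have hfree : Module.Free ℤ ((D ⧸ B) ⧸ T) := inferInstance
  have h1 : (Submodule.mkQ T) (Submodule.mkQ B c) = 0 := by
    rw [← Module.forall_dual_apply_eq_zero_iff ℤ]
    intro φ
    refine h (φ ∘ₗ Submodule.mkQ T ∘ₗ Submodule.mkQ B) fun b hb => ?_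
    simp only [LinearMap.comp_apply]
    rw [(Submodule.Quotient.mk_eq_zero B).2 hb |> fun h => (show B.mkQ b = 0 from h)]
    simp
  have h2 : B.mkQ c ∈ T := (Submodule.Quotient.mk_eq_zero T).1 h1
  rw [Submodule.mem_torsion_iff] at h2
  obtain ⟨a, ha⟩ := h2
  have ha0 : (a : ℤ) ≠ 0 := nonZeroDivisors.coe_ne_zero a
  have h3 : (a : ℤ) • c ∈ B := by
    rw [← Submodule.Quotient.mk_eq_zero B]
    exact ha
  refine ⟨(a : ℤ).natAbs, by omega, ?_⟩
  rcases Int.natAbs_eq (a : ℤ) with h | h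
  · rw [← h]; exact h3
  · have : ((a : ℤ).natAbs : ℤ) = - (a : ℤ) := by omega
    rw [this, neg_smul]
    exact B.neg_mem h3

end Alg

section Alg2
open TensorProduct

variable {Y : Type*} [MetricSpace Y] [CompactSpace Y] {n k : ℕ}

theorem step_one (hn : 2 ≤ n) (hD : DimLE n Y)
    (hDD : DimLE (2 * n - 2) (Y × Y)) {O : ℕ → Set Y} {A : Set Y}
    (hA : ∀ x ∈ A, ∃ i ≤ n, x ∉ O i) {U : Fin k → Set Y} {χ : Fin k → ℕ}
    (hS : IsStage n O U χ) :
    ∃ (k' : ℕ) (U' : Fin k' → Set Y) (χ' : Fin k' → ℕ), IsStage n O U' χ' ∧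
      ∃ m : ℕ, 1 ≤ m ∧ (m : ℤ) • cT U' χ' n ∈ Bnd U' A n := by
  obtain ⟨k', U', t, h1, h2, h3, h4⟩ := T_cor hD hDD U hS.1.1 hS.1.2.1 A
  obtain ⟨e, he, heA⟩ := h4 (2 * n) (by omega) (LinearMap.mul' ℤ ℤ ∘ₗ
    TensorProduct.map (cC n χ) (cC n χ)) (by
      intro m m' _ _ _
      simp [dQ_tmul, cC_dd]) (by
      intro m m' _ _ _ h
      simp only [LinearMap.comp_apply, TensorProduct.map_tmul, LinearMap.mul'_apply]
      rcases h with h | h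
      · rw [hS.cC_zero hA h, zero_mul]
      · rw [hS.cC_zero hA h, mul_zero])
  refine ⟨k', U', χ ∘ t, hS.refine' h1 h2 h3, ?_⟩
  have he' : ∀ l l' : Top U' n, cT U' (χ ∘ t) n l * cT U' (χ ∘ t) n l' =
      e (dd (sl l.1) ⊗ₜ sl l'.1) + (-1) ^ n * e (sl l.1 ⊗ₜ dd (sl l'.1)) := by
    intro l l'
    have := he l.1 l'.1 l.2.1 l'.2.1 (by rw [l.2.2, l'.2.2]; omega)
    simp only [LinearMap.comp_apply, TensorProduct.map_tmul, LinearMap.mul'_apply, cC_map] at this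
    rw [cT, cT, this, dQ_tmul, map_add, sg_sl, l.2.2, ← smul_tmul', map_smul, smul_eq_mul]
    ring
  by_cases hlam : ∀ lam : (Top U' n → ℤ) →ₗ[ℤ] ℤ, (∀ b ∈ Bnd U' A n, lam b = 0) →
      lam (cT U' (χ ∘ t) n) = 0
  · exact torsion_of_functionals _ _ hlam
  · push Not at hlam
    obtain ⟨lam, hlB, hlc⟩ := hlam
    have key : lam (cT U' (χ ∘ t) n) • cT U' (χ ∘ t) n ∈ Bnd U' A n := by
      let ev : Ch (Fin k') →ₗ[ℤ] (Top U' n → ℤ) := LinearMap.pi fun l =>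
        e ∘ₗ TensorProduct.mk ℤ _ _ (sl l.1)
      have hev : ∀ y l, ev y l = e (sl l.1 ⊗ₜ y) := fun y l => rfl
      refine ⟨((-1) ^ n : ℤ) • (lam ∘ₗ ev), ?_, ?_⟩
      · intro l' hl' hlen
        have : ev (sl l') = 0 := by
          funext l
          rw [hev]
          exact heA l.1 l' l.2.1 (hl'.mono (subset_univ _)) (by rw [l.2.2, hlen]; omega) (Or.inr hl')
        simp [this]
      · intro l'
        have hfun : cT U' (χ ∘ t) n l' • cT U' (χ ∘ t) n =
            (fun l : Top U' n => e (dd (sl l.1) ⊗ₜ sl l'.1)) + ((-1) ^ n : ℤ) • ev (dd (sl l'.1)) := by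
          funext l
          simp only [Pi.smul_apply, Pi.add_apply, smul_eq_mul, hev]
          rw [mul_comm]
          exact he' l l'
        have hB : lam (fun l : Top U' n => e (dd (sl l.1) ⊗ₜ sl l'.1)) = 0 := by
          apply hlB
          refine ⟨e ∘ₗ (TensorProduct.mk ℤ _ _).flip (sl l'.1), ?_, fun l => rfl⟩
          intro τ hτ hlen
          exact heA τ l'.1 (hτ.mono (subset_univ _)) l'.2.1 (by rw [l'.2.2, hlen]; omega) (Or.inl hτ)
        have := congrArg lam hfun
        rw [map_smul, map_add, hB, zero_add, map_smul] at this
        simp only [Pi.smul_apply, smul_eq_mul, LinearMap.smul_apply, LinearMap.comp_apply] at this ⊢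
        rw [← this]; ring
    refine ⟨(lam (cT U' (χ ∘ t) n)).natAbs, by omega, ?_⟩
    rcases Int.natAbs_eq (lam (cT U' (χ ∘ t) n)) with h | h
    · rw [← h]; exact key
    · have : ((lam (cT U' (χ ∘ t) n)).natAbs : ℤ) = - lam (cT U' (χ ∘ t) n) := by omega
      rw [this, neg_smul]
      exact Submodule.neg_mem _ key

end Alg2

end

section
section Alg3
open TensorProduct

theorem square_dvd {D : Type*} [AddCommGroup D] [Module.Finite ℤ D] [Module.Free ℤ D]
    (B : Submodule ℤ D) (c : D) (m : ℕ) (hm : 1 ≤ m) (hg : (m : ℤ) • c ∈ B)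
    (h : ∀ μ : B →ₗ[ℤ] ℤ, μ ⟨(m : ℤ) • c, hg⟩ • c ∈ B) :
    ∃ m0 : ℕ, 1 ≤ m0 ∧ (m0 : ℤ) • c ∈ B ∧ m0 ^ 2 ∣ m := by
  classical
  let I : Ideal ℤ := B.comap (LinearMap.toSpanSingleton ℤ D c)
  have hI : ∀ k : ℤ, k ∈ I ↔ k • c ∈ B := fun k => by simp [I]
  obtain ⟨a, ha⟩ := (IsPrincipalIdealRing.principal I).principal
  have hIa : ∀ k : ℤ, k • c ∈ B ↔ a ∣ k := fun k => by
    rw [← hI, ha, Ideal.submodule_span_eq, Ideal.mem_span_singleton]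
  have ham : a ∣ (m : ℤ) := (hIa _).1 hg
  have ha0 : a ≠ 0 := by
    rintro rfl
    rw [zero_dvd_iff] at ham
    omega
  obtain ⟨r, hr⟩ := ham
  let bb := Module.Free.chooseBasis ℤ B
  have hdiv : ∀ i, a ∣ bb.repr ⟨(m : ℤ) • c, hg⟩ i := fun i => (hIa _).1 (h (bb.coord i))
  choose q hq using hdiv
  let y : B := ∑ i, q i • bb i
  have hy : (⟨(m : ℤ) • c, hg⟩ : B) = a • y := by
    conv_lhs => rw [← bb.sum_repr ⟨(m : ℤ) • c, hg⟩]
    simp only [y, Finset.smul_sum, smul_smul, hq]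
  have hy' : (m : ℤ) • c = a • (y : D) := congrArg Subtype.val hy
  have hrc : r • c = (y : D) := by
    rw [hr, mul_smul] at hy'
    exact smul_right_injective D ha0 hy'
  have har : a ∣ r := (hIa _).1 (hrc ▸ y.2)
  refine ⟨a.natAbs, by omega, ?_, ?_⟩
  · rw [hIa]; exact Int.dvd_natAbs.2 dvd_rfl
  · obtain ⟨r', rfl⟩ := har
    refine ⟨r'.natAbs, ?_⟩
    have := congrArg Int.natAbs hr
    rw [Int.natAbs_natCast, Int.natAbs_mul, Int.natAbs_mul] at this
    rw [this]; ring

variable {Y : Type*} [MetricSpace Y] [CompactSpace Y] {n k : ℕ}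

theorem step_two (hn : 2 ≤ n) (hD : DimLE n Y)
    (hDD : DimLE (2 * n - 2) (Y × Y)) {O : ℕ → Set Y} {A : Set Y}
    (hA : ∀ x ∈ A, ∃ i ≤ n, x ∉ O i) {U : Fin k → Set Y} {χ : Fin k → ℕ}
    (hS : IsStage n O U χ) (m : ℕ) (hm : 1 ≤ m) (hmc : (m : ℤ) • cT U χ n ∈ Bnd U A n) :
    ∃ (k' : ℕ) (U' : Fin k' → Set Y) (χ' : Fin k' → ℕ), IsStage n O U' χ' ∧
      ∃ m0 : ℕ, 1 ≤ m0 ∧ (m0 : ℤ) • cT U' χ' n ∈ Bnd U' A n ∧ m0 ^ 2 ∣ m := by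
  classical
  obtain ⟨k', U', t, h1, h2, h3, h4⟩ := T_cor hD hDD U hS.1.1 hS.1.2.1 A
  obtain ⟨b, hbA, hb⟩ := hmc
  let d : Ch (Fin k) →ₗ[ℤ] ℤ := lin fun l => if NV U univ l ∧ l.length = n then b (sl l) else 0
  have hd : ∀ l, d (sl l) = if NV U univ l ∧ l.length = n then b (sl l) else 0 := fun l => by
    simp [d]
  have hdA : ∀ l, NV U A l → d (sl l) = 0 := by
    intro l hl
    rw [hd]
    split_ifs with h
    · exact hbA l hl h.2
    · rfl
  have hdlen : ∀ l, l.length ≠ n → d (sl l) = 0 := fun l hl => by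
    rw [hd, if_neg (fun h => hl h.2)]
  have hface : ∀ {j : ℕ} {V : Fin j → Set Y} {l : List (Fin j)}, NV V univ l → l.length = n + 1 →
      dd (sl l) ∈ spn fun τ => NV V univ τ ∧ τ.length = n := by
    intro j V l hl hlen
    refine spn_mono ?_ (ddL_mem l)
    rintro τ ⟨g1, g2, g3⟩
    exact ⟨hl.sublist g1 g2, by omega⟩
  have hddd : ∀ l, NV U univ l → d (dd (sl l)) = m * cC n χ (sl l) := by
    intro l hl
    by_cases hlen : l.length = n + 1
    · have g1 : d (dd (sl l)) = b (dd (sl l)) := by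
        refine eqOn_of_spn (fun τ hτ => ?_) (hface hl hlen)
        rw [hd, if_pos hτ]
      rw [g1, ← hb ⟨l, hl, hlen⟩]; rfl
    · rw [cC_length n χ l hlen, mul_zero]
      have : d (dd (sl l)) = (0 : Ch (Fin k) →ₗ[ℤ] ℤ) (dd (sl l)) := by
        refine eqOn_of_spn ?_ (ddL_mem l)
        rintro τ ⟨-, -, h⟩
        rw [hdlen τ (by omega)]; rfl
      simpa using this
  obtain ⟨e, he, heA⟩ := h4 (2 * n - 1) (by omega) (LinearMap.mul' ℤ ℤ ∘ₗ
    TensorProduct.map (cC n χ) d + ((-1) ^ (n + 1) : ℤ) • (LinearMap.mul' ℤ ℤ ∘ₗ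
    TensorProduct.map d (cC n χ))) (by
      intro l l' hl hl' _
      simp only [dQ_tmul, map_add, LinearMap.add_apply, LinearMap.smul_apply, LinearMap.comp_apply,
        TensorProduct.map_tmul, LinearMap.mul'_apply, cC_dd, zero_mul, mul_zero, smul_zero,
        hddd l hl, hddd l' hl', sg_sl, map_smul, smul_eq_mul]
      by_cases hlen : l.length = n + 1
      · rw [hlen]; ring
      · rw [cC_length n χ l hlen]; ring) (by
      intro m m' _ _ _ h
      simp only [LinearMap.add_apply, LinearMap.smul_apply, LinearMap.comp_apply,
        TensorProduct.map_tmul, LinearMap.mul'_apply]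
      rcases h with h | h
      · rw [hS.cC_zero hA h, hdA _ h]; simp
      · rw [hS.cC_zero hA h, hdA _ h]; simp)
  refine ⟨k', U', χ ∘ t, hS.refine' h1 h2 h3, ?_⟩
  have hNV : ∀ {l : List (Fin k')} {B : Set Y}, NV U' B l → NV U B (l.map t) := fun h => h.map h2 h3
  have hg : (m : ℤ) • cT U' (χ ∘ t) n ∈ Bnd U' A n := by
    refine ⟨d ∘ₗ mapC t, ?_, ?_⟩
    · intro l hl _
      simp only [LinearMap.comp_apply, mapC_sl]
      exact hdA _ (hNV hl)
    · intro l
      simp only [LinearMap.comp_apply, Pi.smul_apply, smul_eq_mul]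
      rw [← dd_mapC, mapC_sl, hddd _ (hNV l.2.1), cC_map]; rfl
  have hee : ∀ l l' : Top U' n, e (dd (sl l.1) ⊗ₜ dd (sl l'.1)) =
      m * cT U' (χ ∘ t) n l * cT U' (χ ∘ t) n l' := by
    intro l l'
    have key : ((LinearMap.mul' ℤ ℤ ∘ₗ
        TensorProduct.map (cC n χ) d + ((-1) ^ (n + 1) : ℤ) • (LinearMap.mul' ℤ ℤ ∘ₗ
        TensorProduct.map d (cC n χ))) ∘ₗ TensorProduct.mk ℤ _ _ (sl (l.1.map t)) ∘ₗ mapC t)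
          (dd (sl l'.1)) = (e ∘ₗ dQ ∘ₗ TensorProduct.mk ℤ _ _ (sl l.1)) (dd (sl l'.1)) := by
      refine eqOn_of_spn ?_ (hface l'.2.1 l'.2.2)
      rintro τ ⟨g1, g2⟩
      have := he l.1 τ l.2.1 g1 (by rw [l.2.2, g2]; omega)
      simpa only [LinearMap.comp_apply, TensorProduct.mk_apply, mapC_sl] using this
    simp only [LinearMap.comp_apply, TensorProduct.mk_apply, LinearMap.add_apply,
      LinearMap.smul_apply, TensorProduct.map_tmul, LinearMap.mul'_apply, dQ_tmul, dd_dd,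
      TensorProduct.tmul_zero, add_zero] at key
    rw [← key, hdlen (l.1.map t) (by rw [List.length_map, l.2.2]; omega), ← dd_mapC, mapC_sl,
      hddd _ (hNV l'.2.1), cC_map, cC_map]
    simp only [cT]
    ring
  refine square_dvd (Bnd U' A n) (cT U' (χ ∘ t) n) m hm hg ?_
  intro μ
  let π : Ch (Fin k') →ₗ[ℤ] Ch (Fin k') := lin fun τ => if NV U' univ τ ∧ τ.length = n then sl τ else 0
  have hπ : ∀ τ, π (sl τ) = if NV U' univ τ ∧ τ.length = n then sl τ else 0 := fun τ => by
    simp [π]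
  have hπm : ∀ y, π y ∈ spn fun τ => NV U' univ τ ∧ τ.length = n := by
    intro y
    have hy : y ∈ spn (fun _ : List (Fin k') => True) := by
      induction y using Finsupp.induction_linear with
      | zero => exact zero_mem _
      | add f g hf hg => exact add_mem hf hg
      | single a b =>
        have : Finsupp.single a b = b • sl a := by simp
        rw [this]
        exact Submodule.smul_mem _ _ (sl_mem_spn trivial)
    refine map_mem_of_spn π (fun l _ => ?_) hy
    rw [hπ]
    split_ifs with h
    · exact sl_mem_spn h
    · exact zero_mem _
  let ev : Ch (Fin k') →ₗ[ℤ] (Top U' n → ℤ) := LinearMap.pi fun l =>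
        e ∘ₗ TensorProduct.mk ℤ _ _ (dd (sl l.1)) ∘ₗ π
  have hev : ∀ y l, ev y l = e (dd (sl l.1) ⊗ₜ π y) := fun y l => rfl
  have hevB : ∀ y, ev y ∈ Bnd U' A n := by
    intro y
    refine ⟨e ∘ₗ (TensorProduct.mk ℤ _ _).flip (π y), ?_, fun l => rfl⟩
    intro τ hτ hlen
    have : (e ∘ₗ TensorProduct.mk ℤ _ _ (sl τ)) (π y) = (0 : Ch (Fin k') →ₗ[ℤ] ℤ) (π y) := by
      refine eqOn_of_spn ?_ (hπm y)
      rintro σ ⟨g1, g2⟩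
      exact heA τ σ (hτ.mono (subset_univ _)) g1 (by omega) (Or.inl hτ)
    simpa using this
  let E : Ch (Fin k') →ₗ[ℤ] Bnd U' A n := ev.codRestrict _ hevB
  refine ⟨μ ∘ₗ E, ?_, ?_⟩
  · intro l' hl' hlen
    have : E (sl l') = 0 := by
      apply Subtype.ext
      funext l
      show ev (sl l') l = 0
      rw [hev, hπ, if_pos ⟨hl'.mono (subset_univ _), hlen⟩]
      have : (e ∘ₗ (TensorProduct.mk ℤ _ _).flip (sl l')) (dd (sl l.1)) =
          (0 : Ch (Fin k') →ₗ[ℤ] ℤ) (dd (sl l.1)) := by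
        refine eqOn_of_spn ?_ (hface l.2.1 l.2.2)
        rintro σ ⟨g1, g2⟩
        exact heA σ l' g1 (hl'.mono (subset_univ _)) (by omega) (Or.inr hl')
      simpa using this
    simp [this]
  · intro l'
    have hE : E (dd (sl l'.1)) = cT U' (χ ∘ t) n l' • (⟨(m : ℤ) • cT U' (χ ∘ t) n, hg⟩ : Bnd U' A n) := by
      apply Subtype.ext
      funext l
      show ev (dd (sl l'.1)) l = cT U' (χ ∘ t) n l' • ((m : ℤ) • cT U' (χ ∘ t) n l)
      have : π (dd (sl l'.1)) = (LinearMap.id : Ch (Fin k') →ₗ[ℤ] Ch (Fin k')) (dd (sl l'.1)) := by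
        refine eqOn_of_spn ?_ (hface l'.2.1 l'.2.2)
        intro τ hτ
        rw [hπ, if_pos hτ]; rfl
      rw [hev, this, LinearMap.id_apply, hee]
      simp only [smul_eq_mul]; ring
    rw [LinearMap.comp_apply, hE, map_smul, Pi.smul_apply, smul_eq_mul, smul_eq_mul, mul_comm]

theorem alg_main (hn : 2 ≤ n) (hD : DimLE n Y)
    (hDD : DimLE (2 * n - 2) (Y × Y)) (O : ℕ → Set Y) (hO : ∀ i, IsOpen (O i))
    (hOc : ∀ x, ∃ i ≤ n, x ∈ O i) (A : Set Y) (hA : ∀ x ∈ A, ∃ i ≤ n, x ∉ O i) :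
    ∃ (k : ℕ) (U : Fin k → Set Y) (χ : Fin k → ℕ), IsStage n O U χ ∧
      ∃ b : Ch (Fin k) →ₗ[ℤ] ℤ, (∀ l, NV U A l → l.length = n → b (sl l) = 0) ∧
        ∀ l, NV U univ l → l.length = n + 1 → cC n χ (sl l) = b (dd (sl l)) := by
  classical
  have h0 : ∃ (k : ℕ) (U : Fin k → Set Y) (χ : Fin k → ℕ), IsStage n O U χ := by
    obtain ⟨k', U', t, g1, g2, g3, -⟩ := hD.monotone_refine (fun i : Fin (n + 1) => O i)
      (fun i => hO _) (fun x => by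
        obtain ⟨i, hi, hx⟩ := hOc x
        exact ⟨⟨i, by omega⟩, hx⟩) (fun _ : Unit => univ) (fun _ => isOpen_univ) (fun x => ⟨(), trivial⟩)
    exact ⟨k', U', fun i => (t i : ℕ), g1, fun i j h => g2 h, fun v => Nat.lt_succ_iff.1 (t v).2,
      fun v => g3 v⟩
  let p : ℕ → Prop := fun m => ∃ (k : ℕ) (U : Fin k → Set Y) (χ : Fin k → ℕ), IsStage n O U χ ∧
    1 ≤ m ∧ (m : ℤ) • cT U χ n ∈ Bnd U A n
  have hp : ∃ m, p m := by
    obtain ⟨k, U, χ, hS⟩ := h0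
    obtain ⟨k', U', χ', hS', m, hm, h⟩ := step_one hn hD hDD hA hS
    exact ⟨m, k', U', χ', hS', hm, h⟩
  obtain ⟨k, U, χ, hS, hm, hmc⟩ := Nat.find_spec hp
  have hone : Nat.find hp = 1 := by
    obtain ⟨k', U', χ', hS', m0, g1, g2, g3⟩ := step_two hn hD hDD hA hS _ hm hmc
    have hle : Nat.find hp ≤ m0 := Nat.find_min' hp ⟨k', U', χ', hS', g1, g2⟩
    have := Nat.le_of_dvd (by omega) g3
    nlinarith
  rw [hone] at hmc
  obtain ⟨b, hb1, hb2⟩ := hmc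
  refine ⟨k, U, χ, hS, b, hb1, fun l hl hlen => ?_⟩
  have := hb2 ⟨l, hl, hlen⟩
  simpa [cT] using this

end Alg3

end

section
section Comb

def skp (p i : ℕ) : ℕ := if i < p then i else i + 1

def tri (a b : ℤ) (q : ℕ) (c : ℤ) : ℕ → ℤ := fun i =>
  if i = 0 then a else if i = 1 then b else if i = q then c else 0

def vv (j : ℕ) (c : ℤ) : ℕ → ℤ := fun i => if i = j ∨ i = j + 1 then c else 0

variable {n : ℕ} {P : (ℕ → ℤ) → Prop}

theorem comb_move (hext : ∀ x y : ℕ → ℤ, (∀ i ≤ n, x i = y i) → P x → P y)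
    (hA0 : ∀ (i : ℕ) (c : ℤ), i < n → P (vv i c))
    (hA2 : ∀ (κ : ℕ → ℕ → ℤ), (∀ p r, κ p r = κ r p) → ∀ p0 ≤ n + 1,
      (∀ p ≤ n + 1, p ≠ p0 → P (fun i => κ p (skp p i))) → P (fun i => κ p0 (skp p0 i)))
    (q : ℕ) (hq : 2 ≤ q) (hqn : q ≤ n) (t s : ℤ)
    (hR : ∀ y, P (tri y (y + t) q s)) (x : ℕ → ℤ) :
    P x ↔ P (fun i => x i + vv (q - 1) t i) := by
  let κ' : ℕ → ℕ → ℤ := fun lo hi => if lo = 0 then x (hi - 1) else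
    if lo = 1 then x (hi - 1) + (if hi = q ∨ hi = q + 1 then t else 0) else
    if lo = q ∧ hi = q + 1 then s else 0
  let κ : ℕ → ℕ → ℤ := fun p r => κ' (min p r) (max p r)
  have hκs : ∀ p r, κ p r = κ r p := fun p r => by simp only [κ, min_comm, max_comm]
  have h0 : ∀ i ≤ n, κ 0 (skp 0 i) = x i := by
    intro i hi
    simp [κ, κ', skp]
  have h1 : ∀ i ≤ n, κ 1 (skp 1 i) = x i + vv (q - 1) t i := by
    intro i hi
    simp only [κ, κ', skp, vv]
    rcases Nat.eq_zero_or_pos i with rfl | hi0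
    · have : ¬ (0 = q - 1) := by omega
      simp [this]
    · have e1 : ¬ i < 1 := by omega
      have e2 : min 1 (i + 1) = 1 := by omega
      have e3 : max 1 (i + 1) = i + 1 := by omega
      simp only [e1, if_false, e2, e3, Nat.add_sub_cancel]
      have e4 : (i + 1 = q ∨ i + 1 = q + 1) ↔ (i = q - 1 ∨ i = q - 1 + 1) := by omega
      simp only [e4]
      simp
  have h2 : ∀ p, 2 ≤ p → p ≤ n + 1 → P (fun i => κ p (skp p i)) := by
    intro p hp hpn
    by_cases hpq : p = q ∨ p = q + 1
    · refine hext _ _ ?_ (hR (x (p - 1)))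
      intro i hi
      simp only [κ, κ', skp, tri]
      grind
    · refine hext _ _ ?_ (hA0 0 (x (p - 1)) (by omega))
      intro i hi
      simp only [κ, κ', skp, vv]
      grind
  constructor
  · intro hx
    refine hext _ _ h1 (hA2 κ hκs 1 (by omega) ?_)
    intro p hp hp1
    rcases Nat.eq_zero_or_pos p with rfl | hp0
    · exact hext _ _ (fun i hi => (h0 i hi).symm) hx
    · exact h2 p (by omega) hp
  · intro hx
    refine hext _ _ h0 (hA2 κ hκs 0 (by omega) ?_)
    intro p hp hp1
    by_cases hp1 : p = 1
    · subst hp1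
      exact hext _ _ (fun i hi => (h1 i hi).symm) hx
    · exact h2 p (by omega) hp

def asum (n : ℕ) (u : ℕ → ℤ) : ℤ := ∑ i ∈ Finset.range (n + 1), (-1) ^ i * u i

theorem asum_vv (j : ℕ) (hj : j < n) (c : ℤ) (u : ℕ → ℤ) :
    asum n (fun i => u i + vv j c i) = asum n u := by
  have : ∀ i, vv j c i = (if i = j then c else 0) + (if i = j + 1 then c else 0) := by
    intro i
    simp only [vv]
    grind
  simp only [asum, this, mul_add, Finset.sum_add_distrib, mul_ite, mul_zero,
    Finset.sum_ite_eq', Finset.mem_range]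
  rw [if_pos (by omega), if_pos (by omega), pow_succ]
  ring

theorem comb_clear (hext : ∀ x y : ℕ → ℤ, (∀ i ≤ n, x i = y i) → P x → P y)
    (m : ℕ) (hm : m ≤ n) (hn1 : 1 ≤ n)
    (hM : ∀ j, 1 ≤ j → j < m → ∀ t x, P x ↔ P (fun i => x i + vv j t i)) :
    ∀ u : ℕ → ℤ, u 0 = 0 → (∀ i, m < i → i ≤ n → u i = 0) → asum n u = 0 →
      ∀ w, P w ↔ P (fun i => w i + u i) := by
  induction m with
  | zero =>
    intro u h0 h1 _ w
    have : ∀ i ≤ n, u i = 0 := fun i hi => by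
      rcases Nat.eq_zero_or_pos i with rfl | h
      · exact h0
      · exact h1 i h hi
    exact ⟨hext _ _ fun i hi => by simp [this i hi], hext _ _ fun i hi => by simp [this i hi]⟩
  | succ m ih =>
    intro u h0 h1 h2 w
    rcases Nat.eq_zero_or_pos m with rfl | hm0
    · have hu1 : u 1 = 0 := by
        rw [asum, Finset.sum_eq_single 1] at h2
        · simpa using h2
        · intro i hi hi1
          rw [Finset.mem_range] at hi
          rcases Nat.eq_zero_or_pos i with rfl | h
          · simp [h0]
          · rw [h1 i (by omega) (by omega), mul_zero]
        · intro h; simp at h; omega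
      have : ∀ i ≤ n, u i = 0 := fun i hi => by
        rcases Nat.eq_zero_or_pos i with rfl | h
        · exact h0
        · by_cases hi1 : i = 1
          · subst hi1; exact hu1
          · exact h1 i (by omega) hi
      exact ⟨hext _ _ fun i hi => by simp [this i hi], hext _ _ fun i hi => by simp [this i hi]⟩
    · let u' : ℕ → ℤ := fun i => u i + vv m (- u (m + 1)) i
      have := ih (by omega) (fun j h1 h2 => hM j h1 (by omega)) u' (by
        simp only [u', vv, h0]; grind) (by
        intro i hi hin
        simp only [u', vv]
        by_cases him : i = m + 1
        · subst him; simp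
        · rw [h1 i (by omega) hin]; grind) (by rw [asum_vv m (by omega)]; exact h2) w
      rw [this, hM m hm0 (by omega) (u (m + 1))]
      have : (fun i => w i + u' i + vv m (u (m + 1)) i) = fun i => w i + u i := by
        funext i
        simp only [u', vv]
        split_ifs <;> ring
      rw [this]

theorem comb_moves (hn : 2 ≤ n)
    (hext : ∀ x y : ℕ → ℤ, (∀ i ≤ n, x i = y i) → P x → P y)
    (hA0 : ∀ (i : ℕ) (c : ℤ), i < n → P (vv i c))
    (hbase : ∀ c : ℤ, P (tri c (c + 1) 2 1))
    (hA2 : ∀ (κ : ℕ → ℕ → ℤ), (∀ p r, κ p r = κ r p) → ∀ p0 ≤ n + 1,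
      (∀ p ≤ n + 1, p ≠ p0 → P (fun i => κ p (skp p i))) → P (fun i => κ p0 (skp p0 i)))
    (j : ℕ) (h1 : 1 ≤ j) (hj : j < n) :
    ∀ t x, P x ↔ P (fun i => x i + vv j t i) := by
  induction j using Nat.strong_induction_on with
  | _ j ih =>
  by_cases hj1 : j = 1
  · subst hj1
    have hone : ∀ x, P x ↔ P (fun i => x i + vv 1 1 i) :=
      comb_move hext hA0 hA2 2 le_rfl hn 1 1 hbase
    intro t
    induction t using Int.induction_on with
    | zero =>
      intro x
      have : (fun i => x i + vv 1 0 i) = x := by funext i; simp [vv]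
      rw [this]
    | succ a iha =>
      intro x
      rw [iha x, hone]
      have : (fun i => x i + vv 1 (a : ℤ) i + vv 1 1 i) = fun i => x i + vv 1 ((a : ℤ) + 1) i := by
        funext i; simp only [vv]; split_ifs <;> ring
      rw [this]
    | pred a iha =>
      intro x
      rw [iha x, hone (fun i => x i + vv 1 (-(a : ℤ) - 1) i)]
      have : (fun i => x i + vv 1 (-(a : ℤ) - 1) i + vv 1 1 i) = fun i => x i + vv 1 (-(a : ℤ)) i := by
        funext i; simp only [vv]; split_ifs <;> ring
      rw [this]
  · have hcl := comb_clear hext j (by omega) (by omega)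
      (fun i hi hij => ih i hij hi (by omega))
    have hcl2 := comb_clear hext 2 (by omega) (by omega)
      (fun i hi hij => ih i (by omega) hi (by omega))
    -- tuples supported in the first three places
    have hR2 : ∀ a b c : ℤ, a - b + c = 0 → P (tri a b 2 c) := by
      intro a b c habc
      have := (hcl2 (fun i => if i = 1 then c else if i = 2 then c else 0) (by simp)
        (by intro i hi _; grind) (by
          have := asum_vv (n := n) 1 (by omega) c 0
          rw [show asum n (0 : ℕ → ℤ) = 0 by simp [asum]] at this
          refine Eq.trans (congrArg (asum n) ?_) this
          clear hcl hcl2 hA2 hbase hA0 hext ih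
          funext i
          simp only [vv, Pi.zero_apply]
          grind) (vv 0 a)).1 (hA0 0 a (by omega))
      refine hext _ _ (fun i hi => ?_) this
      simp only [vv, tri]
      grind
    -- the relation `T (0, y)`
    have hT0 : ∀ y : ℤ, P (tri 0 y (j + 1) ((-1) ^ (j + 1) * y)) := by
      intro y
      have hsq : ((-1 : ℤ)) ^ (j + 1) * (-1) ^ (j + 1) = 1 := by
        rw [← mul_pow]; norm_num
      have := (hcl (fun i => tri 0 y (j + 1) ((-1) ^ (j + 1) * y) i +
        vv j (-((-1) ^ (j + 1) * y)) i) (by simp [tri, vv]; omega) (by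
          intro i hi hin
          simp only [tri, vv]
          grind) (by
          rw [asum_vv j hj]
          have e : ∀ i, (-1 : ℤ) ^ i * tri 0 y (j + 1) ((-1) ^ (j + 1) * y) i =
              (if i = 1 then (-1) ^ 1 * y else 0) + if i = j + 1 then (-1) ^ (j + 1) *
                ((-1) ^ (j + 1) * y) else 0 := by
            intro i
            simp only [tri]
            grind
          simp only [asum, e, Finset.sum_add_distrib, Finset.sum_ite_eq', Finset.mem_range]
          rw [if_pos (by omega), if_pos (by omega), ← mul_assoc, hsq]
          ring) (vv j ((-1) ^ (j + 1) * y))).1 (hA0 j _ hj)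
      refine hext _ _ (fun i hi => ?_) this
      simp only [vv]
      split_ifs <;> ring
    have hT : ∀ y z : ℤ, P (tri y z (j + 1) ((-1) ^ (j + 1) * (z - y))) := by
      intro y z
      let s : ℤ := (-1) ^ (j + 1)
      let κ' : ℕ → ℕ → ℤ := fun lo hi =>
        if lo = 0 ∧ hi = 2 then y else if lo = 1 ∧ hi = 2 then z else
        if hi = j + 2 then (if lo = 0 then s * y else if lo = 1 then s * z else
          if lo = 2 then s * (z - y) else 0) else 0
      let κ : ℕ → ℕ → ℤ := fun p r => κ' (min p r) (max p r)
      have hκs : ∀ p r, κ p r = κ r p := fun p r => by simp only [κ, min_comm, max_comm]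
      have hj2 : 2 ≤ j := by omega
      refine hext _ _ (fun i hi => ?_) (hA2 κ hκs 2 (by omega) ?_)
      · simp only [κ, κ', skp, tri]
        grind
      · intro p hp hp2
        by_cases p0 : p = 0
        · subst p0
          refine hext _ _ (fun i hi => ?_) (hT0 y)
          simp only [κ, κ', skp, tri]
          grind
        by_cases p1 : p = 1
        · subst p1
          refine hext _ _ (fun i hi => ?_) (hT0 z)
          simp only [κ, κ', skp, tri]
          grind
        by_cases pj : p = j + 2
        · subst pj
          refine hext _ _ (fun i hi => ?_) (hR2 (s * y) (s * z) (s * (z - y)) (by ring))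
          simp only [κ, κ', skp, tri]
          grind
        · refine hext _ _ (fun i hi => ?_) (hA0 0 0 (by omega))
          simp only [κ, κ', skp, vv]
          grind
    intro t x
    have := comb_move hext hA0 hA2 (j + 1) (by omega) (by omega) t ((-1) ^ (j + 1) * t)
      (fun y => by
        have := hT y (y + t)
        rwa [add_sub_cancel_left] at this) x
    simpa using this

theorem comb_main (hn : 2 ≤ n)
    (hext : ∀ x y : ℕ → ℤ, (∀ i ≤ n, x i = y i) → P x → P y)
    (hA0 : ∀ (i : ℕ) (c : ℤ), i < n → P (vv i c))
    (hbase : ∀ c : ℤ, P (tri c (c + 1) 2 1))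
    (hA2 : ∀ (κ : ℕ → ℕ → ℤ), (∀ p r, κ p r = κ r p) → ∀ p0 ≤ n + 1,
      (∀ p ≤ n + 1, p ≠ p0 → P (fun i => κ p (skp p i))) → P (fun i => κ p0 (skp p0 i)))
    (x : ℕ → ℤ) (hx : asum n x = 0) : P x := by
  have hcl := comb_clear hext n le_rfl (by omega)
    (fun i hi hij => comb_moves hn hext hA0 hbase hA2 i hi hij)
    (fun i => x i + vv 0 (- x 0) i) (by simp [vv]) (by intro i h1 h2; omega)
    (by rw [asum_vv 0 (by omega)]; exact hx) (vv 0 (x 0))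
  refine hext _ _ (fun i hi => ?_) (hcl.1 (hA0 0 _ (by omega)))
  simp only [vv]
  split_ifs <;> ring

end Comb

end

section
section Horn

/-- the minimum of the coordinates -/
noncomputable def mn {N : ℕ} (x : Fin (N + 1) → ℝ) : ℝ := Finset.univ.inf' Finset.univ_nonempty x

theorem mn_le {N : ℕ} (x : Fin (N + 1) → ℝ) (i : Fin (N + 1)) : mn x ≤ x i :=
  Finset.inf'_le _ (Finset.mem_univ i)

theorem exists_mn {N : ℕ} (x : Fin (N + 1) → ℝ) : ∃ i, x i = mn x := by
  obtain ⟨i, -, h⟩ := Finset.exists_mem_eq_inf' Finset.univ_nonempty x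
  exact ⟨i, h.symm⟩

theorem continuous_mn {N : ℕ} : Continuous (mn : (Fin (N + 1) → ℝ) → ℝ) :=
  Continuous.finset_inf'_apply _ fun i _ => continuous_apply i

abbrev Sx (N : ℕ) : Set (Fin N → ℝ) := stdSimplex ℝ (Fin N)

theorem isClosed_Sx (N : ℕ) : IsClosed (Sx N) := isClosed_stdSimplex ℝ (Fin N)

def rem {N : ℕ} (p : Fin (N + 1)) (y : Fin (N + 1) → ℝ) : Fin N → ℝ := fun i => y (p.succAbove i)

noncomputable def ins {N : ℕ} (p : Fin (N + 1)) (w : Fin N → ℝ) : Fin (N + 1) → ℝ :=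
  Fin.insertNth (α := fun _ => ℝ) p 0 w

theorem continuous_rem {N : ℕ} (p : Fin (N + 1)) : Continuous (rem p) := by
  unfold rem; fun_prop

theorem ins_same {N : ℕ} (p : Fin (N + 1)) (w : Fin N → ℝ) : ins p w p = 0 := by
  simp [ins]

theorem ins_succAbove {N : ℕ} (p : Fin (N + 1)) (w : Fin N → ℝ) (i : Fin N) :
    ins p w (p.succAbove i) = w i := by
  simp [ins]

theorem rem_ins {N : ℕ} (p : Fin (N + 1)) (w : Fin N → ℝ) : rem p (ins p w) = w := by
  funext i; simp [rem, ins]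

theorem ins_rem {N : ℕ} (p : Fin (N + 1)) (y : Fin (N + 1) → ℝ) (h : y p = 0) :
    ins p (rem p y) = y := by
  funext i
  rcases Fin.eq_self_or_eq_succAbove p i with rfl | ⟨j, rfl⟩
  · rw [ins_same, h]
  · rw [ins_succAbove]; rfl

theorem continuous_ins {N : ℕ} (p : Fin (N + 1)) : Continuous (ins p) := by
  refine continuous_pi fun i => ?_
  rcases Fin.eq_self_or_eq_succAbove p i with rfl | ⟨j, rfl⟩
  · simp only [ins_same]; fun_prop
  · simp only [ins_succAbove]; fun_prop

theorem rem_mem {N : ℕ} {p : Fin (N + 1)} {y : Fin (N + 1) → ℝ} (hy : y ∈ Sx (N + 1)) (h : y p = 0) :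
    rem p y ∈ Sx N := by
  refine ⟨fun i => hy.1 _, ?_⟩
  have := hy.2
  rw [Fin.sum_univ_succAbove _ p, h, zero_add] at this
  exact this

theorem ins_mem {N : ℕ} {p : Fin (N + 1)} {w : Fin N → ℝ} (hw : w ∈ Sx N) : ins p w ∈ Sx (N + 1) := by
  refine ⟨fun i => ?_, ?_⟩
  · rcases Fin.eq_self_or_eq_succAbove p i with rfl | ⟨j, rfl⟩
    · rw [ins_same]
    · rw [ins_succAbove]; exact hw.1 j
  · rw [Fin.sum_univ_succAbove _ p, ins_same, zero_add]
    simp only [ins_succAbove]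
    exact hw.2

theorem rem_rem {N : ℕ} (y : Fin (N + 2) → ℝ) (p q : Fin (N + 2)) (i j : Fin (N + 1))
    (hq : q = p.succAbove i) (hp : p = q.succAbove j) : rem i (rem p y) = rem j (rem q y) := by
  have h := Fin.removeNth_removeNth_eq_swap y i p
  rw [← hq] at h
  have : j = i.predAbove p := by
    apply q.succAbove_right_injective
    rw [← hp, hq, Fin.succAbove_succAbove_predAbove]
  rw [this]
  exact h

/-- the retraction to the horn -/
noncomputable def hr {M : ℕ} (p : Fin (M + 2)) (x : Fin (M + 2) → ℝ) : Fin (M + 2) → ℝ := fun j =>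
  if j = p then x p + (M + 1) * mn (rem p x) else x j - mn (rem p x)

theorem continuous_hr {M : ℕ} (p : Fin (M + 2)) : Continuous (hr p) := by
  refine continuous_pi fun j => ?_
  have := continuous_mn.comp (continuous_rem p)
  simp only [Function.comp_def] at this
  by_cases h : j = p
  · simp only [hr, h, if_true]; fun_prop
  · simp only [hr, h, if_false]; fun_prop

theorem hr_mem {M : ℕ} (p : Fin (M + 2)) {x : Fin (M + 2) → ℝ} (hx : x ∈ Sx (M + 2)) :
    hr p x ∈ Sx (M + 2) := by
  have h0 : 0 ≤ mn (rem p x) := by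
    obtain ⟨i, hi⟩ := exists_mn (rem p x)
    rw [← hi]; exact hx.1 _
  refine ⟨fun j => ?_, ?_⟩
  · simp only [hr]
    split_ifs with h
    · have := hx.1 p; positivity
    · obtain ⟨i, rfl⟩ := Fin.exists_succAbove_eq h
      have : mn (rem p x) ≤ x (p.succAbove i) := mn_le (rem p x) i
      linarith
  · have := hx.2
    rw [Fin.sum_univ_succAbove _ p] at this ⊢
    simp only [hr, if_true, Fin.succAbove_ne, if_false, Finset.sum_sub_distrib, Finset.sum_const,
      Finset.card_univ, Fintype.card_fin, nsmul_eq_mul]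
    push_cast
    linarith

theorem hr_zero {M : ℕ} (p : Fin (M + 2)) (x : Fin (M + 2) → ℝ) : ∃ i, i ≠ p ∧ hr p x i = 0 := by
  obtain ⟨i, hi⟩ := exists_mn (rem p x)
  refine ⟨p.succAbove i, Fin.succAbove_ne _ _, ?_⟩
  simp only [hr, Fin.succAbove_ne, if_false]
  rw [← hi]; simp [rem]

theorem hr_eq {M : ℕ} (p : Fin (M + 2)) {x : Fin (M + 2) → ℝ} (hx : x ∈ Sx (M + 2)) {i : Fin (M + 2)}
    (hi : i ≠ p) (h : x i = 0) : hr p x = x := by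
  have h0 : mn (rem p x) = 0 := by
    apply le_antisymm
    · obtain ⟨j, rfl⟩ := Fin.exists_succAbove_eq hi
      rw [← h]; exact mn_le (rem p x) j
    · obtain ⟨j, hj⟩ := exists_mn (rem p x)
      rw [← hj]; exact hx.1 _
  funext j
  simp only [hr, h0]
  split_ifs with h
  · rw [h]; ring
  · ring

variable {T : Type*} [TopologicalSpace T]

theorem horn_fill {M : ℕ} (p : Fin (M + 2)) (H : (Fin (M + 2) → ℝ) → T)
    (hH : ∀ i, i ≠ p → ContinuousOn H {y | y ∈ Sx (M + 2) ∧ y i = 0}) :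
    ∃ G : (Fin (M + 2) → ℝ) → T, ContinuousOn G (Sx (M + 2)) ∧
      ∀ y ∈ Sx (M + 2), ∀ i, i ≠ p → y i = 0 → G y = H y := by
  refine ⟨fun y => H (hr p y), ?_, ?_⟩
  · have hU : Sx (M + 2) = ⋃ i : {i // i ≠ p}, {y | y ∈ Sx (M + 2) ∧ hr p y i = 0} := by
      ext y
      simp only [mem_iUnion, mem_ofPred_eq]
      constructor
      · intro hy
        obtain ⟨i, hi, h⟩ := hr_zero p y
        exact ⟨⟨i, hi⟩, hy, h⟩
      · rintro ⟨i, hy, -⟩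
        exact hy
    rw [hU]
    refine LocallyFinite.continuousOn_iUnion (locallyFinite_of_finite _) ?_ ?_
    · intro i
      exact (isClosed_Sx _).inter (isClosed_eq ((continuous_apply _).comp (continuous_hr p))
        continuous_const)
    · intro i
      exact (hH i i.2).comp (continuous_hr p).continuousOn fun y hy => ⟨hr_mem p hy.1, hy.2⟩
  · intro y hy i hi h
    simp only [hr_eq p hy hi h]

theorem horn_faces {M : ℕ} (p0 : Fin (M + 2)) (z : Fin (M + 2) → (Fin (M + 1) → ℝ) → T)
    (hz : ∀ p, p ≠ p0 → ContinuousOn (z p) (Sx (M + 1)))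
    (hc : ∀ y ∈ Sx (M + 2), ∀ p q, p ≠ p0 → q ≠ p0 → p ≠ q → y p = 0 → y q = 0 →
      z p (rem p y) = z q (rem q y)) :
    ∃ G : (Fin (M + 2) → ℝ) → T, ContinuousOn G (Sx (M + 2)) ∧
      ∀ y ∈ Sx (M + 2), ∀ i, i ≠ p0 → y i = 0 → G y = z i (rem i y) := by
  classical
  let H : (Fin (M + 2) → ℝ) → T := fun y => if h : ∃ p, p ≠ p0 ∧ y p = 0 then
    z h.choose (rem h.choose y) else z p0 (rem p0 y)
  have hH : ∀ y ∈ Sx (M + 2), ∀ p, p ≠ p0 → y p = 0 → H y = z p (rem p y) := by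
    intro y hy p hp h
    have hex : ∃ p, p ≠ p0 ∧ y p = 0 := ⟨p, hp, h⟩
    simp only [H, hex, dif_pos]
    by_cases heq : hex.choose = p
    · rw [heq]
    · exact hc y hy _ _ hex.choose_spec.1 hp heq hex.choose_spec.2 h
  obtain ⟨G, h1, h2⟩ := horn_fill p0 H (by
    intro i hi
    refine ContinuousOn.congr (f := fun y => z i (rem i y)) ?_ ?_
    · exact (hz i hi).comp (continuous_rem i).continuousOn fun y hy => rem_mem hy.1 hy.2
    · intro y hy
      exact hH y hy.1 i hi hy.2)
  exact ⟨G, h1, fun y hy i hi h => (h2 y hy i hi h).trans (hH y hy i hi h)⟩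

/-- continuous on the simplex and constant on the boundary -/
def IsBased (pt : T) {N : ℕ} (a : (Fin N → ℝ) → T) : Prop :=
  ContinuousOn a (Sx N) ∧ ∀ y ∈ Sx N, ∀ i, y i = 0 → a y = pt

def Fill {N : ℕ} (z : Fin (N + 1) → (Fin N → ℝ) → T) : Prop :=
  ∃ G : (Fin (N + 1) → ℝ) → T, ContinuousOn G (Sx (N + 1)) ∧
    ∀ y ∈ Sx (N + 1), ∀ i, y i = 0 → G y = z i (rem i y)

theorem isBased_const (pt : T) {N : ℕ} : IsBased pt (fun _ : Fin N → ℝ => pt) :=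
  ⟨continuousOn_const, fun _ _ _ _ => rfl⟩

theorem based_compat {pt : T} {M : ℕ} {z : Fin (M + 2) → (Fin (M + 1) → ℝ) → T}
    {y : Fin (M + 2) → ℝ} (hy : y ∈ Sx (M + 2)) {p q : Fin (M + 2)} (hpq : p ≠ q)
    (hz : IsBased pt (z p)) (h1 : y p = 0) (h2 : y q = 0) : z p (rem p y) = pt := by
  obtain ⟨i, rfl⟩ := Fin.exists_succAbove_eq hpq.symm
  exact hz.2 _ (rem_mem hy h1) i h2

theorem fill_A1 {pt : T} {M : ℕ} (p : Fin (M + 2)) (z : Fin (M + 2) → (Fin (M + 1) → ℝ) → T)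
    (hz : ∀ i, i ≠ p → IsBased pt (z i)) :
    ∃ a, IsBased pt a ∧ Fill (Function.update z p a) := by
  obtain ⟨G, h1, h2⟩ := horn_faces p z (fun i hi => (hz i hi).1) (by
    intro y hy i j hi hj hij h1 h2
    rw [based_compat hy hij (hz i hi) h1 h2, based_compat hy hij.symm (hz j hj) h2 h1])
  refine ⟨fun w => G (ins p w), ⟨?_, ?_⟩, G, h1, ?_⟩
  · exact h1.comp (continuous_ins p).continuousOn fun w hw => ins_mem hw
  · intro w hw j hj
    have hy := ins_mem (p := p) hw
    have e1 : ins p w (p.succAbove j) = 0 := by rw [ins_succAbove, hj]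
    show G (ins p w) = pt
    rw [h2 _ hy (p.succAbove j) (Fin.succAbove_ne _ _) e1]
    exact based_compat hy (Fin.succAbove_ne _ _) (hz _ (Fin.succAbove_ne _ _)) e1 (ins_same p w)
  · intro y hy i hi
    by_cases hip : i = p
    · subst hip
      rw [Function.update_self, ins_rem _ _ hi]
    · rw [Function.update_of_ne hip]
      exact h2 y hy i hip hi

theorem fill_A2 {M : ℕ} (κ : Fin (M + 3) → Fin (M + 3) → (Fin (M + 1) → ℝ) → T)
    (hs : ∀ p q, κ p q = κ q p) (p0 : Fin (M + 3))
    (h : ∀ p, p ≠ p0 → Fill fun i => κ p (p.succAbove i)) : Fill fun i => κ p0 (p0.succAbove i) := by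
  classical
  have : Nonempty T := ⟨κ p0 p0 0⟩
  choose! G hG1 hG2 using h
  have hdouble : ∀ y ∈ Sx (M + 3), ∀ p q, p ≠ q → p ≠ p0 → y p = 0 → y q = 0 → ∀ j,
      p = q.succAbove j → G p (rem p y) = κ q (q.succAbove j) (rem j (rem q y)) := by
    intro y hy p q hpq hp0 h1 h2 j hj
    obtain ⟨i, hi⟩ := Fin.exists_succAbove_eq hpq.symm
    rw [hG2 p hp0 _ (rem_mem hy h1) i (by simpa [rem, hi] using h2), rem_rem y p q i j hi.symm hj]
    show κ p (p.succAbove i) _ = _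
    rw [hi, ← hj, hs]
  obtain ⟨G', h1, h2⟩ := horn_faces p0 G hG1 (by
    intro y hy p q hp hq hpq h1 h2
    obtain ⟨j, hj⟩ := Fin.exists_succAbove_eq hpq
    rw [hdouble y hy p q hpq hp h1 h2 j hj.symm,
      hG2 q hq _ (rem_mem hy h2) j (by simpa [rem, hj] using h1)])
  refine ⟨fun w => G' (ins p0 w), ?_, ?_⟩
  · exact h1.comp (continuous_ins p0).continuousOn fun w hw => ins_mem hw
  · intro w hw i hi
    have hy := ins_mem (p := p0) hw
    have e1 : ins p0 w (p0.succAbove i) = 0 := by rw [ins_succAbove, hi]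
    show G' (ins p0 w) = _
    rw [h2 _ hy _ (Fin.succAbove_ne p0 i) e1, hdouble _ hy _ p0 (Fin.succAbove_ne p0 i)
      (Fin.succAbove_ne p0 i) e1 (ins_same p0 w) i rfl, rem_ins]

theorem predAbove_val {N : ℕ} (i : Fin N) (k : Fin (N + 1)) :
    (i.predAbove k : ℕ) = if (i : ℕ) < k then (k : ℕ) - 1 else k := by
  simp only [Fin.predAbove, Fin.lt_def, Fin.val_castSucc]
  split_ifs <;> simp

theorem succAbove_val {N : ℕ} (p : Fin (N + 1)) (k : Fin N) :
    (p.succAbove k : ℕ) = if (k : ℕ) < p then (k : ℕ) else k + 1 := by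
  simp only [Fin.succAbove, Fin.lt_def, Fin.val_castSucc]
  split_ifs <;> simp

/-- merging two neighbouring coordinates -/
noncomputable def mrg {N : ℕ} (i : Fin N) (y : Fin (N + 1) → ℝ) : Fin N → ℝ := fun j =>
  ∑ k with i.predAbove k = j, y k

theorem fill_A0 {pt : T} {N : ℕ} (i : Fin N) {a : (Fin N → ℝ) → T} (ha : IsBased pt a) :
    Fill (fun k : Fin (N + 1) => if k = i.castSucc ∨ k = i.succ then a else fun _ => pt) := by
  have hmem : ∀ y ∈ Sx (N + 1), mrg i y ∈ Sx N := by
    intro y hy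
    refine ⟨fun j => Finset.sum_nonneg fun k _ => hy.1 k, ?_⟩
    rw [← hy.2]
    exact Finset.sum_fiberwise Finset.univ (fun k => i.predAbove k) y
  refine ⟨fun y => a (mrg i y), ?_, ?_⟩
  · refine ha.1.comp ?_ hmem
    unfold mrg
    fun_prop
  · intro y hy k hk
    by_cases h : k = i.castSucc ∨ k = i.succ
    · simp only [h, if_true]
      congr 1
      funext j
      simp only [mrg, rem]
      have : Finset.univ.filter (fun l => i.predAbove l = j) =
          if j = i then {i.castSucc, i.succ} else {k.succAbove j} := by
        ext l
        simp only [Finset.mem_filter, Finset.mem_univ, true_and]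
        split_ifs with hji
        · subst hji
          simp only [Finset.mem_insert, Finset.mem_singleton, Fin.ext_iff, predAbove_val,
            Fin.val_castSucc, Fin.val_succ]
          split_ifs <;> omega
        · simp only [Finset.mem_singleton, Fin.ext_iff, predAbove_val, succAbove_val,
            Fin.val_castSucc, Fin.val_succ] at *
          split_ifs <;> omega
      rw [this]
      split_ifs with hji
      · rw [Finset.sum_pair (Fin.castSucc_lt_succ).ne, hji]
        rcases h with rfl | rfl
        · rw [hk, Fin.succAbove_castSucc_self, zero_add]
        · rw [hk, Fin.succAbove_succ_self, add_zero]
      · simp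
    · simp only [h, if_false]
      refine ha.2 _ (hmem y hy) (i.predAbove k) ?_
      simp only [mrg]
      rw [Finset.sum_eq_single k, hk]
      · intro l hl hlk
        exfalso
        simp only [Finset.mem_filter, Finset.mem_univ, true_and, Fin.ext_iff, predAbove_val,
          Fin.val_castSucc, Fin.val_succ] at hl hlk h
        split_ifs at hl <;> omega
      · intro h; simp at h

/-- a family of based maps indexed by the integers, for which the homotopy addition theorem holds -/
theorem fill_main {pt : T} {M : ℕ} (hM : 1 ≤ M) {a : (Fin (M + 1) → ℝ) → T} (ha : IsBased pt a) :
    ∃ f : ℤ → (Fin (M + 1) → ℝ) → T, (∀ k, IsBased pt (f k)) ∧ f 0 = (fun _ => pt) ∧ f 1 = a ∧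
      ∀ k : Fin (M + 2) → ℤ, ∑ i : Fin (M + 2), (-1) ^ (i : ℕ) * k i = 0 → Fill fun i => f (k i) := by
  classical
  let B := {b : (Fin (M + 1) → ℝ) → T // IsBased pt b}
  let cst : B := ⟨fun _ => pt, isBased_const pt⟩
  let tup : B → B → Fin (M + 2) → B := fun b c i =>
    if (i : ℕ) = 0 then b else if (i : ℕ) = 1 then c else if (i : ℕ) = 2 then ⟨a, ha⟩ else cst
  have hS : ∀ b : B, ∃ c : B, Fill fun i => (tup b c i).1 := by
    intro b
    obtain ⟨c, hc, h⟩ := fill_A1 (pt := pt) (1 : Fin (M + 2)) (fun i => (tup b b i).1)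
      fun i _ => (tup b b i).2
    refine ⟨⟨c, hc⟩, ?_⟩
    convert h using 1
    funext i
    by_cases hi : i = 1
    · subst hi; rw [Function.update_self]; simp [tup]
    · have hi' : ¬ (i : ℕ) = 1 := fun h => hi (Fin.ext (by simpa using h))
      rw [Function.update_of_ne hi]
      simp only [tup, hi', if_false]
  have hP : ∀ c : B, ∃ b : B, Fill fun i => (tup b c i).1 := by
    intro c
    obtain ⟨b, hb, h⟩ := fill_A1 (pt := pt) (0 : Fin (M + 2)) (fun i => (tup c c i).1)
      fun i _ => (tup c c i).2
    refine ⟨⟨b, hb⟩, ?_⟩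
    convert h using 1
    funext i
    by_cases hi : i = 0
    · subst hi; rw [Function.update_self]; simp [tup]
    · have hi' : ¬ (i : ℕ) = 0 := fun h => hi (Fin.ext (by simpa using h))
      rw [Function.update_of_ne hi]
      simp only [tup, hi', if_false]
  choose S hS using hS
  choose Q hQ using hP
  let g : ℤ → B := fun k => match k with
    | Int.ofNat 0 => cst
    | Int.ofNat (j + 1) => S^[j] ⟨a, ha⟩
    | Int.negSucc j => Q^[j + 1] cst
  have hbase : ∀ k : ℤ, Fill fun i => (tup (g k) (g (k + 1)) i).1 := by
    intro k
    match k with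
    | Int.ofNat 0 =>
      have h := fill_A0 (⟨1, by omega⟩ : Fin (M + 1)) ha
      convert h using 1
      funext i
      show (tup cst ⟨a, ha⟩ i).1 = _
      simp only [tup, Fin.ext_iff, Fin.val_castSucc, Fin.val_succ]
      by_cases h0 : (i : ℕ) = 0
      · simp [h0, cst]
      · by_cases h1 : (i : ℕ) = 1
        · simp [h1]
        · by_cases h2 : (i : ℕ) = 2
          · simp [h2]
          · simp [h0, h1, h2, cst]
    | Int.ofNat (j + 1) =>
      have e : g (Int.ofNat (j + 1) + 1) = S (g (Int.ofNat (j + 1))) := by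
        show S^[j + 1] _ = S (S^[j] _)
        rw [Function.iterate_succ_apply']
      rw [e]; exact hS _
    | Int.negSucc 0 => exact hQ cst
    | Int.negSucc (j + 1) =>
      have e : g (Int.negSucc (j + 1)) = Q (g (Int.negSucc (j + 1) + 1)) := by
        show Q^[j + 1 + 1] _ = Q (Q^[j + 1] _)
        rw [Function.iterate_succ_apply']
      rw [e]; exact hQ _
  refine ⟨fun k => (g k).1, fun k => (g k).2, rfl, rfl, ?_⟩
  let P : (ℕ → ℤ) → Prop := fun x => Fill fun i : Fin (M + 2) => (g (x i)).1
  have hcomb := comb_main (n := M + 1) (P := P) (by omega) (by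
      intro x y hxy hx
      have : (fun i : Fin (M + 2) => (g (x i)).1) = fun i : Fin (M + 2) => (g (y i)).1 := by
        funext i
        rw [hxy i (by omega)]
      show Fill _
      rw [← this]; exact hx) (by
      intro i c hi
      have h := fill_A0 (⟨i, hi⟩ : Fin (M + 1)) (g c).2
      show Fill _
      convert h using 1
      funext k
      simp only [vv, Fin.ext_iff, Fin.val_castSucc, Fin.val_succ]
      split_ifs
      · rfl
      · rfl) (by
      intro c
      show Fill _
      convert hbase c using 1
      funext i
      simp only [tri, tup]
      split_ifs <;> rfl) (by
      intro κ hκ p0 hp0 h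
      have := fill_A2 (fun p q : Fin (M + 3) => (g (κ p q)).1) (fun p q => by rw [hκ])
        ⟨p0, by omega⟩ (by
          intro p hp
          have h' := h p (by omega) (fun h => hp (Fin.ext h))
          change Fill _ at h'
          convert h' using 4 with i
          exact congrArg (κ p) (succAbove_val _ _))
      show Fill _
      convert this using 4 with i
      exact congrArg (κ p0) (succAbove_val (⟨p0, by omega⟩ : Fin (M + 3)) i).symm)
  intro k hk
  have := hcomb (fun i => if h : i < M + 2 then k ⟨i, h⟩ else 0) (by
    rw [asum, Finset.sum_range, ← hk]
    refine Finset.sum_congr rfl fun i _ => ?_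
    simp)
  change Fill _ at this
  simpa using this

end Horn

end

section
section Skel

theorem bdL_ofFn {V : Type*} : ∀ {N : ℕ} (e : Fin (N + 1) → V),
    bdL (List.ofFn e) = ∑ i : Fin (N + 1), (-1 : ℤ) ^ (i : ℕ) • sl (List.ofFn fun j => e (i.succAbove j)) := by
  intro N
  induction N with
  | zero => intro e; simp [bdL]
  | succ N ih =>
    intro e
    rw [List.ofFn_succ, bdL, ih, map_sum]
    conv_rhs => rw [Fin.sum_univ_succ]
    simp only [Fin.val_zero, pow_zero, one_smul, Fin.zero_succAbove, Fin.val_succ, map_smul, consL_sl,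
      sub_eq_add_neg]
    congr 1
    rw [← Finset.sum_neg_distrib]
    refine Finset.sum_congr rfl fun i _ => ?_
    rw [List.ofFn_succ (f := fun j => e (i.succ.succAbove j)), pow_succ]
    simp only [Fin.succ_succAbove_zero, Fin.succ_succAbove_succ, mul_neg, mul_one, neg_smul]

noncomputable def spt {k : ℕ} (w : Fin k → ℝ) : Finset (Fin k) := Finset.univ.filter fun v => w v ≠ 0

theorem mem_spt {k : ℕ} {w : Fin k → ℝ} {v : Fin k} : v ∈ spt w ↔ w v ≠ 0 := by simp [spt]

/-- the face spanned by the range of `e` -/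
def face {k N : ℕ} (e : Fin N → Fin k) : Set (Fin k → ℝ) :=
  {w | w ∈ Sx k ∧ ∀ v, v ∉ range e → w v = 0}

theorem face_comp {k N : ℕ} {e : Fin N → Fin k} (he : Function.Injective e) {w : Fin k → ℝ}
    (hw : w ∈ face e) : w ∘ e ∈ Sx N := by
  refine ⟨fun i => hw.1.1 _, ?_⟩
  rw [← hw.1.2]
  simp only [Function.comp_apply]
  rw [← Finset.sum_image (s := Finset.univ) (g := e) (f := w) (fun _ _ _ _ h => he h)]
  refine Finset.sum_subset (Finset.subset_univ _) fun v _ hv => hw.2 v ?_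
  simpa using hv

theorem spt_subset_of_face {k N : ℕ} {e : Fin N → Fin k} {w : Fin k → ℝ}
    (hw : w ∈ face e) : spt w ⊆ Finset.univ.image e := by
  intro v hv
  by_contra h
  exact mem_spt.1 hv (hw.2 v (by simpa using h))

variable {T : Type*} [TopologicalSpace T] {pt : T} {k M : ℕ}

theorem skel_exists {f : ℤ → (Fin (M + 1) → ℝ) → T} (hf : ∀ k, IsBased pt (f k))
    (u : Ch (Fin k) →ₗ[ℤ] ℤ) :
    ∃ S : (Fin k → ℝ) → T,
      (∀ e : Fin (M + 1) → Fin k, StrictMono e → ∀ w ∈ face e, S w = f (u (sl (List.ofFn e))) (w ∘ e)) ∧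
      ∀ w, (spt w).card ≠ M + 1 → S w = pt := by
  classical
  refine ⟨fun w => if h : (spt w).card = M + 1 then
    f (u (sl (List.ofFn ((spt w).orderEmbOfFin h)))) (w ∘ (spt w).orderEmbOfFin h) else pt, ?_, ?_⟩
  · intro e he w hw
    have hsub := spt_subset_of_face hw
    have hcard : (Finset.univ.image e).card = M + 1 := by
      rw [Finset.card_image_of_injective _ he.injective]; simp
    by_cases h : (spt w).card = M + 1
    · have heq : spt w = Finset.univ.image e := Finset.eq_of_subset_of_card_le hsub (by omega)
      have : e = (spt w).orderEmbOfFin h :=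
        Finset.orderEmbOfFin_unique h (fun x => by rw [heq]; simp) he
      simp only [h, dif_pos]
      rw [← this]
    · simp only [h, dif_neg, not_false_eq_true]
      symm
      have : ∃ i, w (e i) = 0 := by
        by_contra hcon
        push Not at hcon
        apply h
        rw [← hcard]
        congr 1
        refine Finset.Subset.antisymm hsub fun v hv => ?_
        obtain ⟨i, -, rfl⟩ := Finset.mem_image.1 hv
        exact mem_spt.2 (hcon i)
      obtain ⟨i, hi⟩ := this
      exact (hf _).2 _ (face_comp he.injective hw) i hi
  · intro w h
    simp only [h, dif_neg, not_false_eq_true]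

theorem simplex_fill {f : ℤ → (Fin (M + 1) → ℝ) → T}
    (hfill : ∀ k : Fin (M + 2) → ℤ, ∑ i : Fin (M + 2), (-1) ^ (i : ℕ) * k i = 0 → Fill fun i => f (k i))
    (u : Ch (Fin k) →ₗ[ℤ] ℤ) {S : (Fin k → ℝ) → T}
    (hS : ∀ e : Fin (M + 1) → Fin k, StrictMono e → ∀ w ∈ face e,
      S w = f (u (sl (List.ofFn e))) (w ∘ e))
    {e : Fin (M + 2) → Fin k} (he : StrictMono e) (hu : u (bdL (List.ofFn e)) = 0) :
    ∃ G : (Fin k → ℝ) → T, ContinuousOn G (face e) ∧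
      ∀ w ∈ face e, ∀ i, w (e i) = 0 → G w = S w := by
  obtain ⟨G, h1, h2⟩ := hfill (fun i => u (sl (List.ofFn fun j => e (i.succAbove j)))) (by
    rw [bdL_ofFn, map_sum] at hu
    simpa only [map_smul, smul_eq_mul] using hu)
  refine ⟨fun w => G (w ∘ e), ?_, ?_⟩
  · refine h1.comp ?_ fun w hw => face_comp he.injective hw
    have : Continuous fun w : Fin k → ℝ => w ∘ e := continuous_pi fun i => continuous_apply _
    exact this.continuousOn
  · intro w hw i hi
    have := h2 (w ∘ e) (face_comp he.injective hw) i hi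
    show G (w ∘ e) = S w
    rw [this, hS (fun j => e (i.succAbove j)) (he.comp (Fin.strictMono_succAbove i)) w ?_]
    · rfl
    · refine ⟨hw.1, fun v hv => ?_⟩
      by_cases hv' : v ∈ range e
      · obtain ⟨j, rfl⟩ := hv'
        rcases Fin.eq_self_or_eq_succAbove i j with rfl | ⟨j', rfl⟩
        · exact hi
        · exact absurd ⟨j', rfl⟩ hv
      · exact hw.2 v (by exact hv')

/-- extension of a map from the skeleton, for a partition of unity of a cover of small order -/
theorem skel_extend {Y : Type*} [TopologicalSpace Y] {f : ℤ → (Fin (M + 1) → ℝ) → T}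
    (hf : ∀ k, IsBased pt (f k)) {u : Ch (Fin k) →ₗ[ℤ] ℤ} {S : (Fin k → ℝ) → T}
    (hS : ∀ e : Fin (M + 1) → Fin k, StrictMono e → ∀ w ∈ face e,
      S w = f (u (sl (List.ofFn e))) (w ∘ e))
    (hS' : ∀ w, (spt w).card ≠ M + 1 → S w = pt)
    (N : (Fin (M + 2) → Fin k) → Prop) (G : (Fin (M + 2) → Fin k) → (Fin k → ℝ) → T)
    (hG1 : ∀ e, StrictMono e → N e → ContinuousOn (G e) (face e))
    (hG2 : ∀ e, StrictMono e → N e → ∀ w ∈ face e, ∀ i, w (e i) = 0 → G e w = S w)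
    (φ : Y → Fin k → ℝ) (hφ : Continuous φ) (hφs : ∀ x, φ x ∈ Sx k)
    (hφc : ∀ x, (spt (φ x)).card ≤ M + 2)
    (hφN : ∀ x (e : Fin (M + 2) → Fin k), StrictMono e → (∀ v, v ∈ spt (φ x) ↔ v ∈ range e) → N e) :
    ∃ h : Y → T, Continuous h ∧ (∀ x, (spt (φ x)).card ≤ M + 1 → h x = S (φ x)) ∧
      ∀ x (e : Fin (M + 2) → Fin k), StrictMono e → (∀ v, v ∈ spt (φ x) ↔ v ∈ range e) →
        h x = G e (φ x) := by
  classical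
  let h : Y → T := fun x => if hc : (spt (φ x)).card = M + 2 then
    G ((spt (φ x)).orderEmbOfFin hc) (φ x) else S (φ x)
  have hh1 : ∀ x, (spt (φ x)).card ≤ M + 1 → h x = S (φ x) := by
    intro x hx
    have : ¬ (spt (φ x)).card = M + 2 := by omega
    simp only [h, this, dif_neg, not_false_eq_true]
  have hh2 : ∀ x (e : Fin (M + 2) → Fin k), StrictMono e → (∀ v, v ∈ spt (φ x) ↔ v ∈ range e) →
        h x = G e (φ x) := by
    intro x e he hx
    have heq : spt (φ x) = Finset.univ.image e := by ext v; rw [hx]; simp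
    have hc : (spt (φ x)).card = M + 2 := by
      rw [heq, Finset.card_image_of_injective _ he.injective]; simp
    have : e = (spt (φ x)).orderEmbOfFin hc :=
      Finset.orderEmbOfFin_unique hc (fun x => by rw [hx]; simp) he
    simp only [h, hc, dif_pos]
    rw [← this]
  refine ⟨h, ?_, hh1, hh2⟩
  let I := {s : Finset (Fin k) // s.card ≤ M + 2 ∧ ∀ e : Fin (M + 2) → Fin k, StrictMono e →
    (∀ v, v ∈ s ↔ v ∈ range e) → N e}
  let C : I → Set Y := fun s => {x | ∀ v, v ∉ s.1 → φ x v = 0}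
  refine LocallyFinite.continuous (f := C) (locallyFinite_of_finite _) ?_ ?_ ?_
  · refine eq_univ_of_forall fun x => mem_iUnion.2 ⟨⟨spt (φ x), hφc x, hφN x⟩, fun v hv => ?_⟩
    simpa [mem_spt] using hv
  · intro s
    have : C s = ⋂ v, ⋂ (_ : v ∉ s.1), {x | φ x v = 0} := by ext x; simp [C]
    rw [this]
    exact isClosed_iInter fun v => isClosed_iInter fun _ =>
      isClosed_eq ((continuous_apply v).comp hφ) continuous_const
  · intro s
    have hsub : ∀ x ∈ C s, spt (φ x) ⊆ s.1 := by
      intro x hx v hv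
      by_contra hvs
      exact mem_spt.1 hv (hx v hvs)
    rcases lt_trichotomy s.1.card (M + 1) with hlt | heq | hgt
    · refine (continuousOn_const (c := pt)).congr fun x hx => ?_
      have := Finset.card_le_card (hsub x hx)
      rw [hh1 x (by omega), hS' _ (by omega)]
    · let e := s.1.orderEmbOfFin heq
      have hrange : range e = s.1 := Finset.range_orderEmbOfFin s.1 heq
      have hface : ∀ x ∈ C s, φ x ∈ face e := fun x hx => ⟨hφs x, fun v hv => hx v (by
        rw [hrange] at hv; simpa using hv)⟩
      have hcont : ContinuousOn (fun x => f (u (sl (List.ofFn e))) (φ x ∘ e)) (C s) := by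
        refine (hf _).1.comp ?_ fun x hx => face_comp e.injective (hface x hx)
        have : Continuous fun x => φ x ∘ e := continuous_pi fun i => (continuous_apply (e i)).comp hφ
        exact this.continuousOn
      refine hcont.congr fun x hx => ?_
      have := Finset.card_le_card (hsub x hx)
      rw [hh1 x (by omega), hS e e.strictMono _ (hface x hx)]
    · have hc : s.1.card = M + 2 := by have := s.2.1; omega
      let e := s.1.orderEmbOfFin hc
      have hrange : range e = s.1 := Finset.range_orderEmbOfFin s.1 hc
      have hN : N e := s.2.2 e e.strictMono fun v => by rw [hrange]; simp
      have hface : ∀ x ∈ C s, φ x ∈ face e := fun x hx => ⟨hφs x, fun v hv => hx v (by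
        rw [hrange] at hv; simpa using hv)⟩
      have hcont : ContinuousOn (fun x => G e (φ x)) (C s) :=
        (hG1 e e.strictMono hN).comp hφ.continuousOn hface
      refine hcont.congr fun x hx => ?_
      by_cases hx' : spt (φ x) = s.1
      · exact hh2 x e e.strictMono fun v => by rw [hrange, hx']; simp
      · have hlt := Finset.card_lt_card (Finset.ssubset_iff_subset_ne.2 ⟨hsub x hx, hx'⟩)
        rw [hh1 x (by omega)]
        have : ∃ v ∈ s.1, v ∉ spt (φ x) := by
          by_contra hcon
          push Not at hcon
          exact hx' (Finset.Subset.antisymm (hsub x hx) hcon)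
        obtain ⟨v, hv, hv'⟩ := this
        have hv2 : v ∈ range e := by rw [hrange]; exact hv
        obtain ⟨i, rfl⟩ := hv2
        exact (hG2 e e.strictMono hN _ (hface x hx) i (by simpa [mem_spt] using hv')).symm

end Skel

end

section
section Target

variable {M : ℕ}

/-- non-constant vectors -/
def NC (x : Fin (M + 2) → ℝ) : Prop := ¬ ∀ i j, x i = x j

abbrev TT (M : ℕ) := {x : Fin (M + 2) → ℝ // NC x}

theorem mn_nonneg {N : ℕ} {y : Fin (N + 1) → ℝ} (h : ∀ i, 0 ≤ y i) : 0 ≤ mn y := by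
  obtain ⟨i, hi⟩ := exists_mn y
  rw [← hi]; exact h i

theorem mn_eq_zero {N : ℕ} {y : Fin (N + 1) → ℝ} (h : ∀ i, 0 ≤ y i) {i : Fin (N + 1)} (hi : y i = 0) :
    mn y = 0 := le_antisymm (hi ▸ mn_le y i) (mn_nonneg h)

noncomputable def rho (y : Fin (M + 1) → ℝ) : Fin (M + 2) → ℝ :=
  Fin.cons (1 - 2 * ((M + 1) * mn y)) (fun i => (M + 1) * mn y * (y i - mn y))

theorem rho_zero (y : Fin (M + 1) → ℝ) : rho y 0 = 1 - 2 * ((M + 1) * mn y) := rfl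

theorem rho_succ (y : Fin (M + 1) → ℝ) (i : Fin (M + 1)) :
    rho y i.succ = (M + 1) * mn y * (y i - mn y) := rfl

theorem continuous_rho : Continuous (rho : (Fin (M + 1) → ℝ) → _) := by
  have := continuous_mn (N := M)
  refine continuous_pi fun i => ?_
  refine Fin.cases ?_ (fun j => ?_) i
  · simp only [rho_zero]; fun_prop
  · simp only [rho_succ]; fun_prop

noncomputable def e0 : Fin (M + 2) → ℝ := Fin.cons 1 (fun _ => 0)

theorem NC_e0 : NC (e0 : Fin (M + 2) → ℝ) := by
  intro h
  have := h 0 (Fin.succ 0)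
  simp [e0] at this

noncomputable def ptT : TT M := ⟨e0, NC_e0⟩

theorem rho_eq_e0 {y : Fin (M + 1) → ℝ} (h : mn y = 0) : rho y = e0 := by
  funext i
  refine Fin.cases ?_ (fun j => ?_) i
  · simp [rho_zero, h, e0]
  · simp [rho_succ, h, e0]

theorem rho_const {y : Fin (M + 1) → ℝ} (h : ∀ i j, rho y i = rho y j) :
    (M + 1) * mn y = 1 / 2 ∧ ∀ i, y i = mn y := by
  obtain ⟨i, hi⟩ := exists_mn y
  have h0 : rho y i.succ = 0 := by rw [rho_succ, hi]; ring
  have h1 : (M + 1) * mn y = 1 / 2 := by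
    have := h 0 i.succ
    rw [h0, rho_zero] at this
    linarith
  refine ⟨h1, fun j => ?_⟩
  have := h j.succ i.succ
  rw [h0, rho_succ, h1] at this
  linarith

theorem NC_rho_base {y : Fin (M + 1) → ℝ} (hy : y ∈ Sx (M + 1)) : NC (rho y) := by
  intro h
  obtain ⟨h1, h2⟩ := rho_const h
  have := hy.2
  simp only [h2, Finset.sum_const, Finset.card_univ, Fintype.card_fin, nsmul_eq_mul] at this
  push_cast at this
  linarith

/-- the boundary of the simplex -/
def Bd (M : ℕ) : Set (Fin (M + 2) → ℝ) := {z | z ∈ Sx (M + 2) ∧ ∃ i, z i = 0}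

theorem NC_of_Bd {z : Fin (M + 2) → ℝ} (hz : z ∈ Bd M) : NC z := by
  intro h
  obtain ⟨hz, i, hi⟩ := hz
  have := hz.2
  have h0 : ∀ j, z j = 0 := fun j => by rw [h j i, hi]
  simp [h0] at this

/-- the segments from the identity to `rho` avoid the diagonal -/
theorem NC_seg {z : Fin (M + 2) → ℝ} (hz : z ∈ Bd M) {s : ℝ} (hs0 : 0 ≤ s) (hs1 : s ≤ 1) :
    NC (fun i => (1 - s) * z i + s * rho (Fin.tail z) i) := by
  obtain ⟨hz, i, hi⟩ := hz
  intro h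
  have hsum := hz.2
  have hnn := hz.1
  have htn : ∀ i, 0 ≤ Fin.tail z i := fun i => hnn _
  rw [Fin.sum_univ_succ] at hsum
  have hmn := mn_nonneg htn
  rcases hmn.eq_or_lt with h0 | hpos
  · have he := rho_eq_e0 h0.symm
    rw [he] at h
    obtain ⟨j, hj⟩ := exists_mn (Fin.tail z)
    have hz0 := h 0 j.succ
    have hjs : z j.succ = 0 := by rw [← h0] at hj; exact hj
    simp only [e0, Fin.cons_zero, Fin.cons_succ, hjs] at hz0
    have hnn0 := hnn 0
    have hs : s = 0 := by nlinarith
    have hz00 : z 0 = 0 := by rw [hs] at hz0; linarith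
    have : ∀ m : Fin (M + 1), z m.succ = 0 := by
      intro m
      have := h m.succ j.succ
      simp only [e0, Fin.cons_succ, hjs, hs] at this
      linarith
    simp [this, hz00] at hsum
  · have hz0 : z 0 = 0 := by
      revert hi
      refine Fin.cases (fun h => h) (fun j hj => ?_) i
      have : mn (Fin.tail z) ≤ z j.succ := mn_le (Fin.tail z) j
      linarith
    set μ := mn (Fin.tail z) with hμ
    obtain ⟨j, hj⟩ := exists_mn (Fin.tail z)
    have hj' : z j.succ = μ := hj
    have hall : ∀ m : Fin (M + 1), z m.succ = μ := by
      intro m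
      have h3 := h m.succ j.succ
      simp only [rho_succ, ← hμ] at h3
      have h4 : Fin.tail z m = z m.succ := rfl
      have h5 : Fin.tail z j = z j.succ := rfl
      rw [h4, h5, hj'] at h3
      have h6 : ((1 - s) + s * ((M + 1) * μ)) * (z m.succ - μ) = 0 := by linarith
      rcases mul_eq_zero.1 h6 with h7 | h7
      · exfalso
        have : 0 < (M + 1 : ℝ) * μ := by positivity
        rcases hs0.eq_or_lt with h8 | h8
        · rw [← h8] at h7; linarith
        · nlinarith [mul_pos h8 this]
      · linarith
    simp only [hall, Finset.sum_const, Finset.card_univ, Fintype.card_fin, nsmul_eq_mul, hz0] at hsum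
    push_cast at hsum
    have h9 := h 0 j.succ
    have h5 : Fin.tail z j = z j.succ := rfl
    simp only [rho_succ, rho_zero, ← hμ, hz0, h5, hj'] at h9
    have h10 : (M + 1 : ℝ) * μ = 1 := by linarith
    rw [h10] at h9
    nlinarith

theorem NC_rho_bd {z : Fin (M + 2) → ℝ} (hz : z ∈ Bd M) : NC (rho (Fin.tail z)) := by
  have := NC_seg hz (s := 1) zero_le_one le_rfl
  simpa using this

open Classical in
noncomputable def toT (x : Fin (M + 2) → ℝ) : TT M := if h : NC x then ⟨x, h⟩ else ptT

theorem toT_val {x : Fin (M + 2) → ℝ} (h : NC x) : (toT x).1 = x := by simp [toT, h]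

theorem continuousOn_toT {Z : Type*} [TopologicalSpace Z] {f : Z → Fin (M + 2) → ℝ} {s : Set Z}
    (hf : ContinuousOn f s) (hs : ∀ x ∈ s, NC (f x)) : ContinuousOn (fun x => toT (f x)) s := by
  have hind : Topology.IsInducing (Subtype.val : TT M → Fin (M + 2) → ℝ) := ⟨rfl⟩
  rw [hind.continuousOn_iff]
  exact hf.congr fun x hx => toT_val (hs x hx)

theorem isBased_rho : IsBased (ptT : TT M) fun y : Fin (M + 1) → ℝ => toT (rho y) := by
  refine ⟨continuousOn_toT continuous_rho.continuousOn fun y hy => NC_rho_base hy, fun y hy i hi => ?_⟩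
  apply Subtype.ext
  show (toT (rho y)).1 = _
  rw [rho_eq_e0 (mn_eq_zero hy.1 hi), toT_val NC_e0]
  rfl

/-- the boundary map -/
noncomputable def RR (z : Fin (M + 2) → ℝ) : TT M := toT (rho (Fin.tail z))

theorem RR_val {z : Fin (M + 2) → ℝ} (hz : z ∈ Bd M) : (RR z).1 = rho (Fin.tail z) :=
  toT_val (NC_rho_bd hz)

theorem continuousOn_RR : ContinuousOn (RR : _ → TT M) (Bd M) := by
  refine continuousOn_toT ?_ fun z hz => NC_rho_bd hz
  have : Continuous (Fin.tail : (Fin (M + 2) → ℝ) → (Fin (M + 1) → ℝ)) :=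
    continuous_pi fun i => continuous_apply i.succ
  exact (continuous_rho.comp this).continuousOn

theorem RR_eq_pt {z : Fin (M + 2) → ℝ} (hz : ∀ i, 0 ≤ z i) {i : Fin (M + 1)} (hi : z i.succ = 0) :
    RR z = ptT := by
  apply Subtype.ext
  rw [RR, rho_eq_e0 (mn_eq_zero (y := Fin.tail z) (fun i => hz _) hi), toT_val NC_e0]
  rfl

/-- the simplicial map induced by `χ` -/
noncomputable def pw (M : ℕ) {k : ℕ} (χ : Fin k → ℕ) (w : Fin k → ℝ) : Fin (M + 2) → ℝ := fun i =>
  ∑ v, if χ v = i then w v else 0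

theorem continuous_pw {k : ℕ} (χ : Fin k → ℕ) : Continuous (pw M χ) := by
  refine continuous_pi fun i => continuous_finsetSum _ fun v _ => ?_
  split_ifs <;> fun_prop

theorem pw_mem {k : ℕ} {χ : Fin k → ℕ} (hχ : ∀ v, χ v ≤ M + 1) {w : Fin k → ℝ} (hw : w ∈ Sx k) :
    pw M χ w ∈ Sx (M + 2) := by
  refine ⟨fun i => Finset.sum_nonneg fun v _ => ?_, ?_⟩
  · split_ifs
    · exact hw.1 v
    · exact le_rfl
  · rw [← hw.2]
    simp only [pw]
    rw [Finset.sum_comm]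
    refine Finset.sum_congr rfl fun v _ => ?_
    rw [Finset.sum_eq_single (⟨χ v, by have := hχ v; omega⟩ : Fin (M + 2))]
    · simp
    · intro b _ hb
      rw [if_neg]
      intro h
      exact hb (Fin.ext h.symm)
    · simp

theorem pw_eq_zero {k : ℕ} {χ : Fin k → ℕ} {w : Fin k → ℝ} {i : Fin (M + 2)}
    (h : ∀ v, w v ≠ 0 → χ v ≠ i) : pw M χ w i = 0 := by
  refine Finset.sum_eq_zero fun v _ => ?_
  by_cases hv : w v = 0
  · simp [hv]
  · simp [h v hv]

end Target

end

section
section Hopf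

variable {M k : ℕ} {Y : Type*}

theorem NV_ofFn {U : Fin k → Set Y} {A : Set Y} {N : ℕ} {e : Fin (N + 1) → Fin k} (he : StrictMono e) :
    NV U A (List.ofFn e) ↔ ∃ x ∈ A, ∀ i, x ∈ U (e i) := by
  constructor
  · rintro ⟨-, -, x, hx, h⟩
    exact ⟨x, hx, fun i => h _ (List.mem_ofFn.2 ⟨i, rfl⟩)⟩
  · rintro ⟨x, hx, h⟩
    refine ⟨by simp, ?_, x, hx, ?_⟩
    · rw [List.pairwise_ofFn]
      exact fun i j hij => (he hij).le
    · intro v hv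
      obtain ⟨i, rfl⟩ := List.mem_ofFn.1 hv
      exact h i

/-- the degree functional -/
noncomputable def om (M : ℕ) (χ : Fin k → ℕ) : Ch (Fin k) →ₗ[ℤ] ℤ :=
  Finsupp.lapply (List.range' 1 (M + 1)) ∘ₗ mapC χ

theorem om_sl (χ : Fin k → ℕ) (l : List (Fin k)) :
    om M χ (sl l) = if l.map χ = List.range' 1 (M + 1) then 1 else 0 := by
  classical
  simp only [om, LinearMap.comp_apply, mapC_sl, Finsupp.lapply_apply, Finsupp.single_apply]

theorem om_bdL (χ : Fin k → ℕ) (l : List (Fin k)) : om M χ (bdL l) = cC (M + 1) χ (sl l) := by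
  show (mapC χ (bdL l)) _ = (bd (mapC χ (sl l))) _
  rw [bd_mapC, bd_sl]

/-- on the part of the nerve coming from `A`, the map on the skeleton is the boundary map -/
theorem skel_eq_RR {U : Fin k → Set Y} {χ : Fin k → ℕ} (hmono : Monotone χ)
    {A : Set Y} {b : Ch (Fin k) →ₗ[ℤ] ℤ}
    (hb : ∀ l, NV U A l → l.length = M + 1 → b (sl l) = 0)
    {f : ℤ → (Fin (M + 1) → ℝ) → TT M}
    (hf0 : f 0 = fun _ => ptT) (hf1 : f 1 = fun y => toT (rho y))
    {S : (Fin k → ℝ) → TT M}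
    (hS : ∀ e : Fin (M + 1) → Fin k, StrictMono e → ∀ w ∈ face e,
      S w = f ((om M χ - b) (sl (List.ofFn e))) (w ∘ e))
    (hS' : ∀ w, (spt w).card ≠ M + 1 → S w = ptT)
    {w : Fin k → ℝ} (hw : w ∈ Sx k) (hwA : ∃ x ∈ A, ∀ v, w v ≠ 0 → x ∈ U v)
    (hc : (spt w).card ≤ M + 1) : S w = RR (pw M χ w) := by
  classical
  have hpn : ∀ i, 0 ≤ pw M χ w i := by
    intro i
    refine Finset.sum_nonneg fun v _ => ?_
    split_ifs
    · exact hw.1 v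
    · exact le_rfl
  have hmain : (spt w).card = M + 1 → ∃ e : Fin (M + 1) → Fin k, StrictMono e ∧ w ∈ face e ∧
      (∀ v, v ∈ spt w ↔ v ∈ range e) ∧ b (sl (List.ofFn e)) = 0 := by
    intro hcard
    have hr : range ((spt w).orderEmbOfFin hcard) = spt w := Finset.range_orderEmbOfFin _ hcard
    refine ⟨(spt w).orderEmbOfFin hcard, ((spt w).orderEmbOfFin hcard).strictMono, ⟨hw, ?_⟩, ?_, ?_⟩
    · intro v hv
      rw [hr] at hv
      by_contra h
      exact hv (mem_spt.2 h)
    · intro v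
      rw [hr]; simp
    · refine hb _ ((NV_ofFn ((spt w).orderEmbOfFin hcard).strictMono).2 ?_) (by simp)
      obtain ⟨x, hx, h⟩ := hwA
      exact ⟨x, hx, fun i => h _ (mem_spt.1 (Finset.orderEmbOfFin_mem _ hcard i))⟩
  by_cases hall : ∀ j : Fin (M + 1), ∃ v, w v ≠ 0 ∧ χ v = j + 1
  · choose g hg1 hg2 using hall
    have hginj : Function.Injective g := by
      intro i j hij
      have h1 := hg2 i
      rw [hij, hg2 j] at h1
      exact Fin.ext (by omega)
    have himg : Finset.univ.image g ⊆ spt w := by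
      intro v hv
      obtain ⟨i, -, rfl⟩ := Finset.mem_image.1 hv
      exact mem_spt.2 (hg1 i)
    have hicard : (Finset.univ.image g).card = M + 1 := by
      rw [Finset.card_image_of_injective _ hginj]; simp
    have hcard : (spt w).card = M + 1 := le_antisymm hc (hicard ▸ Finset.card_le_card himg)
    have hieq : Finset.univ.image g = spt w := Finset.eq_of_subset_of_card_le himg (by omega)
    have hgm : StrictMono g := by
      intro i j hij
      by_contra h
      have := hmono (not_lt.1 h)
      rw [hg2, hg2] at this
      have : (i : ℕ) < j := hij
      omega
    obtain ⟨e, he, hwe, hsp, hbe⟩ := hmain hcard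
    have hge : g = e := by
      have h1 := Finset.orderEmbOfFin_unique hcard (fun i => mem_spt.2 (hg1 i)) hgm
      have h2 := Finset.orderEmbOfFin_unique hcard (fun i => (hsp _).2 ⟨i, rfl⟩) he
      rw [h1, h2]
    have hu : (om M χ - b) (sl (List.ofFn e)) = 1 := by
      rw [LinearMap.sub_apply, hbe, om_sl, if_pos, sub_zero]
      rw [List.map_ofFn]
      apply List.ext_getElem
      · simp
      · intro i h1 h2
        simp only [List.getElem_ofFn, Function.comp_apply, List.getElem_range', one_mul, ← hge, hg2]
        omega
    rw [hS e he w hwe, hu, hf1]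
    show toT (rho _) = toT (rho _)
    congr 2
    funext j
    show w (e j) = ∑ v, if χ v = (j.succ : Fin (M + 2)) then w v else 0
    rw [Finset.sum_eq_single (e j)]
    · rw [if_pos]; rw [← hge, hg2]; simp
    · intro v _ hv
      by_cases hwv : w v = 0
      · simp [hwv]
      · obtain ⟨j', rfl⟩ := (hsp v).1 (mem_spt.2 hwv)
        rw [if_neg]
        rw [← hge, hg2]
        intro h
        apply hv
        congr 1
        apply Fin.ext
        simpa using h
    · simp
  · push Not at hall
    obtain ⟨j, hj⟩ := hall
    rw [RR_eq_pt hpn (i := j) (pw_eq_zero fun v hv => by simpa using hj v hv)]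
    by_cases hcard : (spt w).card = M + 1
    · obtain ⟨e, he, hwe, hsp, hbe⟩ := hmain hcard
      rw [hS e he w hwe, LinearMap.sub_apply, hbe, om_sl, if_neg, sub_zero, hf0]
      intro h
      have h1 : (j : ℕ) + 1 ∈ List.range' 1 (M + 1) := by
        rw [List.mem_range'_1]; have := j.2; omega
      rw [← h, List.mem_map] at h1
      obtain ⟨v, hv, hv'⟩ := h1
      exact hj v (mem_spt.1 ((hsp v).2 (List.mem_ofFn.1 hv))) hv'
    · exact hS' w hcard

theorem hopf [TopologicalSpace Y] (hM : 1 ≤ M) {U : Fin k → Set Y} {χ : Fin k → ℕ}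
    (hF : FCov (M + 1) U) (hmono : Monotone χ) (hχ : ∀ v, χ v ≤ M + 1) {A : Set Y}
    (hA : ∀ x ∈ A, ∃ i ≤ M + 1, ∀ v, x ∈ U v → χ v ≠ i)
    {b : Ch (Fin k) →ₗ[ℤ] ℤ}
    (hb : ∀ l, NV U A l → l.length = M + 1 → b (sl l) = 0)
    (hcb : ∀ l, NV U univ l → l.length = M + 2 → cC (M + 1) χ (sl l) = b (dd (sl l)))
    {φ : Y → Fin k → ℝ} (hφ : Continuous φ) (hφs : ∀ x, φ x ∈ Sx k)
    (hφU : ∀ x v, φ x v ≠ 0 ↔ x ∈ U v) :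
    ∃ h : Y → TT M, Continuous h ∧ ∀ x ∈ A, h x = RR (pw M χ (φ x)) := by
  classical
  obtain ⟨f, hf, hf0, hf1, hfill⟩ := fill_main hM (isBased_rho (M := M))
  obtain ⟨S, hS, hS'⟩ := skel_exists hf (om M χ - b)
  have hfil : ∀ e : Fin (M + 2) → Fin k, StrictMono e → NV U univ (List.ofFn e) →
      ∃ G : (Fin k → ℝ) → TT M, ContinuousOn G (face e) ∧
      ∀ w ∈ face e, ∀ i, w (e i) = 0 → G w = S w := by
    intro e he hN
    refine simplex_fill hfill _ hS he ?_
    rw [LinearMap.sub_apply, om_bdL, hcb _ hN (by simp), dd_apply, ep_of_length (by simp), bd_sl]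
    simp
  let G : (Fin (M + 2) → Fin k) → (Fin k → ℝ) → TT M := fun e =>
    if NV U A (List.ofFn e) then fun w => RR (pw M χ w) else
      if h : StrictMono e ∧ NV U univ (List.ofFn e) then (hfil e h.1 h.2).choose else fun _ => ptT
  have hsw : ∀ {N : ℕ} {e : Fin N → Fin k} {w : Fin k → ℝ}, w ∈ face e → ∀ v, w v ≠ 0 → v ∈ range e := by
    intro N e w hw v hv
    by_contra h
    exact hv (hw.2 v h)
  obtain ⟨h, h1, h2, h3⟩ := skel_extend hf hS hS' (fun e => NV U univ (List.ofFn e)) G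
    (by
      intro e he hN
      by_cases hNA : NV U A (List.ofFn e)
      · simp only [G, hNA, if_true]
        refine continuousOn_RR.comp (continuous_pw χ).continuousOn ?_
        intro w hw
        refine ⟨pw_mem hχ hw.1, ?_⟩
        obtain ⟨x, hx, h⟩ := (NV_ofFn he).1 hNA
        obtain ⟨i, hi, h'⟩ := hA x hx
        refine ⟨⟨i, by omega⟩, pw_eq_zero fun v hv => ?_⟩
        obtain ⟨j, rfl⟩ := hsw hw v hv
        exact h' _ (h j)
      · simp only [G, hNA, if_false, he, hN, and_self, dif_pos]
        exact (hfil e he hN).choose_spec.1)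
    (by
      intro e he hN w hw i hi
      by_cases hNA : NV U A (List.ofFn e)
      · simp only [G, hNA, if_true]
        symm
        refine skel_eq_RR hmono hb hf0 hf1 hS hS' hw.1 ?_ ?_
        · obtain ⟨x, hx, h⟩ := (NV_ofFn he).1 hNA
          refine ⟨x, hx, fun v hv => ?_⟩
          obtain ⟨j, rfl⟩ := hsw hw v hv
          exact h j
        · have h1 := spt_subset_of_face hw
          have h2 : (Finset.univ.image e).card = M + 2 := by
            rw [Finset.card_image_of_injective _ he.injective]; simp
          have h3 : spt w ⊂ Finset.univ.image e := by
            refine Finset.ssubset_iff_subset_ne.2 ⟨h1, fun h => ?_⟩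
            have : e i ∈ spt w := by rw [h]; simp
            exact mem_spt.1 this hi
          have := Finset.card_lt_card h3
          omega
      · simp only [G, hNA, if_false, he, hN, and_self, dif_pos]
        exact (hfil e he hN).choose_spec.2 w hw i hi)
    φ hφ hφs
    (fun x => hF.2.2 x _ fun v hv => (hφU x v).1 (mem_spt.1 hv))
    (fun x e he hx => (NV_ofFn he).2 ⟨x, mem_univ _, fun i =>
      (hφU x _).1 (mem_spt.1 ((hx _).2 ⟨i, rfl⟩))⟩)
  refine ⟨h, h1, fun x hx => ?_⟩
  by_cases hc : (spt (φ x)).card ≤ M + 1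
  · rw [h2 x hc]
    exact skel_eq_RR hmono hb hf0 hf1 hS hS' (hφs x) ⟨x, hx, fun v hv => (hφU x v).1 hv⟩ hc
  · have hcard : (spt (φ x)).card = M + 2 := by
      have : (spt (φ x)).card ≤ M + 2 := hF.2.2 x _ fun v hv => (hφU x v).1 (mem_spt.1 hv)
      omega
    have hr : range ((spt (φ x)).orderEmbOfFin hcard) = spt (φ x) := Finset.range_orderEmbOfFin _ hcard
    have hN : NV U A (List.ofFn ((spt (φ x)).orderEmbOfFin hcard)) :=
      (NV_ofFn ((spt (φ x)).orderEmbOfFin hcard).strictMono).2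
        ⟨x, hx, fun i => (hφU x _).1 (mem_spt.1 (Finset.orderEmbOfFin_mem _ hcard i))⟩
    rw [h3 x ((spt (φ x)).orderEmbOfFin hcard) ((spt (φ x)).orderEmbOfFin hcard).strictMono
      (fun v => by rw [hr]; simp)]
    simp only [G, hN, if_true]

end Hopf

end

section
section Ess

variable {M : ℕ} {Y : Type*}

theorem exists_pou [MetricSpace Y] {k : ℕ} {U : Fin k → Set Y} (hU : ∀ i, IsOpen (U i))
    (hc : ∀ x, ∃ i, x ∈ U i) : ∃ φ : Y → Fin k → ℝ, Continuous φ ∧ (∀ x, φ x ∈ Sx k) ∧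
      ∀ x v, φ x v ≠ 0 ↔ x ∈ U v := by
  choose p hp0 hp1 hp2 using fun v => exists_pos_fun (U v) (hU v)
  have hpos : ∀ x, 0 < ∑ v, p v x := by
    intro x
    obtain ⟨i, hi⟩ := hc x
    exact Finset.sum_pos' (fun v _ => hp1 v x) ⟨i, Finset.mem_univ _, (hp2 i x).2 hi⟩
  refine ⟨fun x v => p v x / ∑ v, p v x, ?_, ?_, ?_⟩
  · refine continuous_pi fun v => (hp0 v).div ?_ fun x => (hpos x).ne'
    exact continuous_finsetSum _ fun v _ => hp0 v
  · intro x
    refine ⟨fun v => div_nonneg (hp1 v x) (hpos x).le, ?_⟩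
    rw [← Finset.sum_div, div_self (hpos x).ne']
  · intro x v
    rw [← hp2 v x, (hp1 v x).lt_iff_ne']
    simp [(hpos x).ne']

theorem isClosed_not_NC : IsClosed {x : Fin (M + 2) → ℝ | ¬ NC x} := by
  have : {x : Fin (M + 2) → ℝ | ¬ NC x} = ⋂ i, ⋂ j, {x | x i = x j} := by
    ext x; simp [NC]
  rw [this]
  exact isClosed_iInter fun i => isClosed_iInter fun j =>
    isClosed_eq (continuous_apply i) (continuous_apply j)

theorem hep [MetricSpace Y] {A : Set Y} (hA : IsClosed A) {f : Y → Fin (M + 2) → ℝ} (hf : Continuous f)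
    {h : Y → TT M} (hh : Continuous h)
    (hseg : ∀ x ∈ A, ∀ s : ℝ, 0 ≤ s → s ≤ 1 → NC (fun i => (1 - s) * f x i + s * (h x).1 i)) :
    ∃ F : Y → TT M, Continuous F ∧ ∀ x ∈ A, (F x).1 = f x := by
  let H : Y × Icc (0 : ℝ) 1 → Fin (M + 2) → ℝ := fun p i =>
    (1 - (p.2 : ℝ)) * f p.1 i + p.2 * (h p.1).1 i
  have hv : Continuous fun x => (h x).1 := continuous_subtype_val.comp hh
  have hfi : ∀ i, Continuous fun x => f x i := fun i => (continuous_apply i).comp hf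
  have hvi : ∀ i, Continuous fun x => (h x).1 i := fun i => (continuous_apply i).comp hv
  have hH : Continuous H := by
    refine continuous_pi fun i => ?_
    have h1 := (hfi i).comp (continuous_fst (X := Y) (Y := Icc (0 : ℝ) 1))
    have h2 := (hvi i).comp (continuous_fst (X := Y) (Y := Icc (0 : ℝ) 1))
    have h3 := continuous_subtype_val.comp (continuous_snd (X := Y) (Y := Icc (0 : ℝ) 1))
    exact ((continuous_const.sub h3).mul h1).add (h3.mul h2)
  let B : Set Y := Prod.fst '' (H ⁻¹' {x | ¬ NC x})
  have hB : IsClosed B := isClosedMap_fst_of_compactSpace _ (isClosed_not_NC.preimage hH)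
  have hAB : Disjoint A B := by
    rw [Set.disjoint_left]
    rintro x hx ⟨⟨y, s⟩, hys, rfl⟩
    exact hys (hseg _ hx s s.2.1 s.2.2)
  obtain ⟨θ, h0, h1, h01⟩ := exists_continuous_zero_one_of_isClosed hA hB hAB
  have hNC : ∀ x, NC (fun i => (1 - θ x) * f x i + θ x * (h x).1 i) := by
    intro x
    by_cases hx : x ∈ B
    · have : θ x = 1 := h1 hx
      rw [this]
      simpa using (h x).2
    · by_contra hcon
      exact hx ⟨(x, ⟨θ x, h01 x⟩), hcon, rfl⟩
  refine ⟨fun x => ⟨_, hNC x⟩, ?_, ?_⟩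
  · refine Continuous.subtype_mk (continuous_pi fun i => ?_) _
    exact ((continuous_const.sub θ.continuous).mul (hfi i)).add (θ.continuous.mul (hvi i))
  · intro x hx
    have : θ x = 0 := h0 hx
    funext i
    simp [this]

noncomputable def rt (x : Fin (M + 2) → ℝ) : Fin (M + 2) → ℝ := fun i => (x i - mn x) / ∑ j, (x j - mn x)

theorem rt_pos {x : Fin (M + 2) → ℝ} (hx : NC x) : 0 < ∑ j, (x j - mn x) := by
  refine Finset.sum_pos' (fun j _ => sub_nonneg.2 (mn_le x j)) ?_
  by_contra hcon
  push Not at hcon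
  apply hx
  have : ∀ i, x i = mn x := fun i => le_antisymm (by
    have := hcon i (Finset.mem_univ _); linarith) (mn_le x i)
  intro i j
  rw [this i, this j]

theorem rt_mem {x : Fin (M + 2) → ℝ} (hx : NC x) : rt x ∈ Bd M := by
  refine ⟨⟨fun i => div_nonneg (sub_nonneg.2 (mn_le x i)) (rt_pos hx).le, ?_⟩, ?_⟩
  · simp only [rt]
    rw [← Finset.sum_div, div_self (rt_pos hx).ne']
  · obtain ⟨i, hi⟩ := exists_mn x
    exact ⟨i, by simp [rt, hi]⟩

theorem rt_eq {x : Fin (M + 2) → ℝ} (hx : x ∈ Bd M) : rt x = x := by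
  obtain ⟨h1, i, hi⟩ := hx
  have := mn_eq_zero h1.1 hi
  have h2 := h1.2
  funext j
  simp [rt, this, h2]

theorem continuous_rt : Continuous fun x : TT M => rt x.1 := by
  have h1 := (continuous_mn (N := M + 1)).comp (continuous_subtype_val (p := NC (M := M)))
  have h2 : ∀ i, Continuous fun x : TT M => x.1 i := fun i =>
    (continuous_apply i).comp continuous_subtype_val
  refine continuous_pi fun i => ?_
  refine ((h2 i).sub h1).div ?_ fun x => (rt_pos x.2).ne'
  exact continuous_finsetSum _ fun j _ => (h2 j).sub h1

theorem ess [MetricSpace Y] [CompactSpace Y] (hM : 1 ≤ M) (hD : DimLE (M + 1) Y)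
    (hDD : DimLE (2 * (M + 1) - 2) (Y × Y)) {f : Y → Fin (M + 2) → ℝ} (hf : Continuous f)
    (hfs : ∀ x, f x ∈ Sx (M + 2)) :
    ∃ f' : Y → Fin (M + 2) → ℝ, Continuous f' ∧ (∀ x, f' x ∈ Bd M) ∧ ∀ x, f x ∈ Bd M → f' x = f x := by
  have hfi : ∀ i, Continuous fun x => f x i := fun i => (continuous_apply i).comp hf
  let O : ℕ → Set Y := fun i => {x | ∃ h : i < M + 2, 0 < f x ⟨i, h⟩}
  let A : Set Y := {x | ∃ i, f x i = 0}
  have hAc : IsClosed A := by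
    have : A = ⋃ i, {x | f x i = 0} := by ext x; simp [A]
    rw [this]
    exact isClosed_iUnion_of_finite fun i => isClosed_eq (hfi i) continuous_const
  have hO : ∀ i, IsOpen (O i) := by
    intro i
    by_cases h : i < M + 2
    · have : O i = {x | 0 < f x ⟨i, h⟩} := by ext x; simp [O, h]
      rw [this]
      exact isOpen_lt continuous_const (hfi _)
    · have : O i = ∅ := by ext x; simp [O, h]
      rw [this]
      exact isOpen_empty
  have hOc : ∀ x, ∃ i ≤ M + 1, x ∈ O i := by
    intro x
    by_contra hcon
    push Not at hcon
    have : ∀ i, f x i = 0 := by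
      intro i
      by_contra hi
      exact hcon i (by have := i.2; omega) ⟨i.2, ((hfs x).1 i).lt_of_ne' hi⟩
    have h2 := (hfs x).2
    simp [this] at h2
  have hA : ∀ x ∈ A, ∃ i ≤ M + 1, x ∉ O i := by
    rintro x ⟨i, hi⟩
    refine ⟨i, by have := i.2; omega, ?_⟩
    rintro ⟨h, h'⟩
    exact h'.ne' hi
  obtain ⟨k, U, χ, ⟨hF, hmono, hχ, hUO⟩, b, hb, hcb⟩ :=
    alg_main (n := M + 1) (by omega) hD hDD O hO hOc A hA
  obtain ⟨φ, hφ, hφs, hφU⟩ := exists_pou hF.1 hF.2.1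
  obtain ⟨h, hh, hhA⟩ := hopf hM hF hmono hχ (A := A) (fun x hx => by
    obtain ⟨i, hi, hxi⟩ := hA x hx
    refine ⟨i, hi, fun v hv hvi => hxi (hvi ▸ hUO v hv)⟩) hb hcb hφ hφs hφU
  have hgz : ∀ x i, f x i = 0 → pw M χ (φ x) i = 0 := by
    intro x i hi
    refine pw_eq_zero fun v hv hvi => ?_
    obtain ⟨h1, h2⟩ := hUO v ((hφU x v).1 hv)
    have : (⟨χ v, h1⟩ : Fin (M + 2)) = i := Fin.ext hvi
    rw [this] at h2
    exact h2.ne' hi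
  have hgB : ∀ x ∈ A, pw M χ (φ x) ∈ Bd M := by
    rintro x ⟨i, hi⟩
    exact ⟨pw_mem hχ (hφs x), i, hgz x i hi⟩
  obtain ⟨h', hh', hhA'⟩ := hep hAc ((continuous_pw (M := M) χ).comp hφ) hh (by
    intro x hx s hs0 hs1
    rw [hhA x hx, RR_val (hgB x hx)]
    exact NC_seg (hgB x hx) hs0 hs1)
  obtain ⟨F, hF1, hF2⟩ := hep hAc hf hh' (by
    intro x hx s hs0 hs1
    rw [hhA' x hx]
    apply NC_of_Bd
    obtain ⟨i, hi⟩ := hx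
    refine ⟨?_, i, ?_⟩
    · exact (convex_stdSimplex ℝ (Fin (M + 2))) (hfs x) (pw_mem hχ (hφs x)) (by linarith) hs0 (by ring)
    · simp [hi, hgz x i hi])
  refine ⟨fun x => rt (F x).1, continuous_rt.comp hF1, fun x => rt_mem (F x).2, fun x hx => ?_⟩
  show rt (F x).1 = f x
  rw [hF2 x hx.2, rt_eq hx]

end Ess

section Drop

variable {M : ℕ} {Y : Type*} [MetricSpace Y] [CompactSpace Y]

theorem ess_face (hM : 1 ≤ M) (hD : DimLE (M + 1) Y) (hDD : DimLE (2 * (M + 1) - 2) (Y × Y))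
    {k : ℕ} {φ : Y → Fin k → ℝ} (hφ : Continuous φ) (hφs : ∀ x, φ x ∈ Sx k)
    {e : Fin (M + 2) → Fin k} (he : StrictMono e) :
    ∃ g : Y → Fin k → ℝ, ContinuousOn g {x | φ x ∈ face e} ∧ ∀ x, φ x ∈ face e →
      g x ∈ Sx k ∧ (∀ v, v ∉ range e → g x v = 0) ∧ (∃ i, g x (e i) = 0) ∧
      ((∃ i, φ x (e i) = 0) → g x = φ x) := by
  classical
  let C : Set Y := {x | φ x ∈ face e}
  have hC : IsClosed C := by
    have : C = ⋂ v, ⋂ (_ : v ∉ range e), {x | φ x v = 0} := by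
      ext x; simp [C, face, hφs]
    rw [this]
    exact isClosed_iInter fun v => isClosed_iInter fun _ =>
      isClosed_eq ((continuous_apply v).comp hφ) continuous_const
  have : CompactSpace C := isCompact_iff_compactSpace.1 hC.isCompact
  have hD' : DimLE (M + 1) C := hD.closedEmbedding hC.isClosedEmbedding_subtypeVal
  have hDD' : DimLE (2 * (M + 1) - 2) (C × C) := by
    refine hDD.closedEmbedding (f := Prod.map Subtype.val Subtype.val) ?_
    exact (continuous_subtype_val.prodMap continuous_subtype_val).isClosedEmbedding
      (Subtype.val_injective.prodMap Subtype.val_injective)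
  obtain ⟨f', h1, h2, h3⟩ := ess hM hD' hDD' (f := fun x => φ x.1 ∘ e) (by
    refine continuous_pi fun i => ?_
    exact (continuous_apply (e i)).comp (hφ.comp continuous_subtype_val))
    (fun x => face_comp he.injective x.2)
  let ex : (Fin (M + 2) → ℝ) → Fin k → ℝ := fun z v => ∑ i, if e i = v then z i else 0
  have hex : Continuous ex := by
    refine continuous_pi fun v => continuous_finsetSum _ fun i _ => ?_
    split_ifs <;> fun_prop
  have hexe : ∀ z i, ex z (e i) = z i := by
    intro z i
    show ∑ j, (if e j = e i then z j else 0) = z i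
    rw [Finset.sum_eq_single i]
    · simp
    · intro j _ hj
      rw [if_neg fun h => hj (he.injective h)]
    · simp
  have hexn : ∀ z v, v ∉ range e → ex z v = 0 := by
    intro z v hv
    refine Finset.sum_eq_zero fun i _ => ?_
    rw [if_neg fun h => hv ⟨i, h⟩]
  let g : Y → Fin k → ℝ := fun x => if h : x ∈ C then ex (f' ⟨x, h⟩) else 0
  have hg : ∀ x (h : x ∈ C), g x = ex (f' ⟨x, h⟩) := fun x h => by simp only [g, h, dif_pos]
  refine ⟨g, ?_, fun x hx => ?_⟩
  · rw [continuousOn_iff_continuous_restrict]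
    have : C.restrict g = fun x => ex (f' x) := by
      funext x
      exact hg x.1 x.2
    show Continuous (C.restrict g)
    rw [this]
    exact hex.comp h1
  · rw [hg x hx]
    obtain ⟨hs, i, hi⟩ := h2 ⟨x, hx⟩
    refine ⟨⟨fun v => Finset.sum_nonneg fun i _ => ?_, ?_⟩, hexn _, ⟨i, by rw [hexe, hi]⟩, ?_⟩
    · split_ifs
      · exact hs.1 i
      · exact le_rfl
    · show ∑ v, ∑ i, (if e i = v then f' ⟨x, hx⟩ i else 0) = 1
      rw [Finset.sum_comm]
      simpa using hs.2
    · rintro ⟨j, hj⟩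
      rw [h3 ⟨x, hx⟩ ⟨face_comp he.injective hx, j, hj⟩]
      funext v
      by_cases hv : v ∈ range e
      · obtain ⟨m, rfl⟩ := hv
        rw [hexe]; rfl
      · rw [hexn _ _ hv, hx.2 v hv]

theorem dim_drop (hM : 1 ≤ M) (hD : DimLE (M + 1) Y) (hDD : DimLE (2 * (M + 1) - 2) (Y × Y)) :
    DimLE M Y := by
  classical
  intro k0 U0 ho0 hc0
  obtain ⟨k, U, hF, hUU⟩ := hD k0 U0 ho0 hc0
  obtain ⟨φ, hφ, hφs, hφU⟩ := exists_pou hF.1 hF.2.1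
  choose g hg1 hg2 using fun (e : Fin (M + 2) → Fin k) (he : StrictMono e) =>
    ess_face hM hD hDD hφ hφs he
  have hcard : ∀ x, (spt (φ x)).card ≤ M + 2 := fun x =>
    hF.2.2 x _ fun v hv => (hφU x v).1 (mem_spt.1 hv)
  let oe : ∀ s : Finset (Fin k), s.card = M + 2 → Fin (M + 2) → Fin k := fun s hs => s.orderEmbOfFin hs
  have hoe : ∀ s hs, StrictMono (oe s hs) := fun s hs => (s.orderEmbOfFin hs).strictMono
  have hor : ∀ s hs, range (oe s hs) = (s : Set (Fin k)) := fun s hs => Finset.range_orderEmbOfFin s hs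
  have hface : ∀ x s (hs : s.card = M + 2), φ x ∈ face (oe s hs) ↔ spt (φ x) ⊆ s := by
    intro x s hs
    constructor
    · intro h v hv
      by_contra hvs
      exact mem_spt.1 hv (h.2 v (by rw [hor]; exact hvs))
    · intro h
      refine ⟨hφs x, fun v hv => ?_⟩
      rw [hor] at hv
      by_contra hvs
      exact hv (h (mem_spt.2 hvs))
  let ψ : Y → Fin k → ℝ := fun x => if hc : (spt (φ x)).card = M + 2 then
    g (oe _ hc) (hoe _ hc) x else φ x
  have hψ1 : ∀ x, (spt (φ x)).card ≠ M + 2 → ψ x = φ x := fun x hx => by simp only [ψ, hx, dif_neg,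
    not_false_eq_true]
  have hψ2 : ∀ x s (hs : s.card = M + 2), spt (φ x) ⊆ s → ψ x = g (oe s hs) (hoe s hs) x := by
    intro x s hs hsub
    by_cases hx : spt (φ x) = s
    · subst hx
      simp only [ψ, hs, dif_pos]
    · have hlt := Finset.card_lt_card (Finset.ssubset_iff_subset_ne.2 ⟨hsub, hx⟩)
      rw [hψ1 x (by omega)]
      have : ∃ v ∈ s, v ∉ spt (φ x) := by
        by_contra hcon
        push Not at hcon
        exact hx (Finset.Subset.antisymm hsub hcon)
      obtain ⟨v, hv, hv'⟩ := this
      have hv2 : v ∈ range (oe s hs) := by rw [hor]; exact hv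
      obtain ⟨i, rfl⟩ := hv2
      exact ((hg2 _ (hoe s hs) x ((hface x s hs).2 hsub)).2.2.2 ⟨i, by simpa [mem_spt] using hv'⟩).symm
  have hψc : Continuous ψ := by
    let I := {s : Finset (Fin k) // s.card ≤ M + 2}
    let C : I → Set Y := fun s => {x | ∀ v, v ∉ s.1 → φ x v = 0}
    have hsub : ∀ s, ∀ x ∈ C s, spt (φ x) ⊆ s.1 := by
      intro s x hx v hv
      by_contra hvs
      exact mem_spt.1 hv (hx v hvs)
    refine LocallyFinite.continuous (f := C) (locallyFinite_of_finite _) ?_ ?_ ?_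
    · refine eq_univ_of_forall fun x => mem_iUnion.2 ⟨⟨spt (φ x), hcard x⟩, fun v hv => ?_⟩
      simpa [mem_spt] using hv
    · intro s
      have : C s = ⋂ v, ⋂ (_ : v ∉ s.1), {x | φ x v = 0} := by ext x; simp [C]
      rw [this]
      exact isClosed_iInter fun v => isClosed_iInter fun _ =>
        isClosed_eq ((continuous_apply v).comp hφ) continuous_const
    · intro s
      by_cases hs : s.1.card = M + 2
      · refine ((hg1 (oe s.1 hs) (hoe s.1 hs)).mono ?_).congr fun x hx => hψ2 x s.1 hs (hsub s x hx)
        exact fun x hx => (hface x s.1 hs).2 (hsub s x hx)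
      · refine hφ.continuousOn.congr fun x hx => hψ1 x ?_
        have h1 := Finset.card_le_card (hsub s x hx)
        have h2 := s.2
        omega
  have hψp : ∀ x, ψ x ∈ Sx k ∧ (∀ v, ψ x v ≠ 0 → φ x v ≠ 0) ∧ (spt (ψ x)).card ≤ M + 1 := by
    intro x
    by_cases hc : (spt (φ x)).card = M + 2
    · obtain ⟨h1, h2, ⟨i, hi⟩, -⟩ := hg2 _ (hoe _ hc) x ((hface x _ hc).2 subset_rfl)
      rw [hψ2 x _ hc subset_rfl]
      have hsupp : ∀ v, g (oe _ hc) (hoe _ hc) x v ≠ 0 → φ x v ≠ 0 := by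
        intro v hv
        by_contra h
        refine hv (h2 v ?_)
        rw [hor]
        simpa [mem_spt] using h
      refine ⟨h1, hsupp, ?_⟩
      have hlt : spt (g (oe _ hc) (hoe _ hc) x) ⊂ spt (φ x) := by
        refine Finset.ssubset_iff_subset_ne.2 ⟨fun v hv => mem_spt.2 (hsupp v (mem_spt.1 hv)), fun h => ?_⟩
        have : oe _ hc i ∈ spt (φ x) := by
          have h3 : oe _ hc i ∈ range (oe _ hc) := ⟨i, rfl⟩
          rw [hor] at h3
          exact h3
        exact mem_spt.1 (h.symm.subset this) hi
      have := Finset.card_lt_card hlt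
      omega
    · rw [hψ1 x hc]
      have := hcard x
      exact ⟨hφs x, fun v h => h, by omega⟩
  refine ⟨k, fun v => {x | 0 < ψ x v}, ⟨?_, ?_, ?_⟩, ?_⟩
  · intro v
    exact isOpen_lt continuous_const ((continuous_apply v).comp hψc)
  · intro x
    by_contra hcon
    push Not at hcon
    have h1 := (hψp x).1
    have h0 : ∀ v, ψ x v = 0 := fun v => le_antisymm (not_lt.1 (hcon v)) (h1.1 v)
    have h2 := h1.2
    simp [h0] at h2
  · intro x s hs
    refine (Finset.card_le_card fun v hv => ?_).trans (hψp x).2.2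
    exact mem_spt.2 (hs v hv).ne'
  · intro v
    obtain ⟨j, hj⟩ := hUU v
    refine ⟨j, fun x hx => hj ((hφU x v).1 ((hψp x).2.1 v ?_))⟩
    exact (show 0 < ψ x v from hx).ne'

end Drop

end

/-- every finite dimensional compact metric space `K` satisfies
`2 dim K - 1 ≤ dim K² ≤ 2 dim K` (the first inequality stated additively as
`2 dim K ≤ dim K² + 1`); consequently either `dim K² = 2 dim K` or
`dim K² = 2 dim K - 1` (stated additively). -/
theorem topDim_sq_dichotomy {K : Type*} [MetricSpace K] [CompactSpace K]
    (hfin : topDim K ≠ ⊤) :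
    2 * topDim K ≤ topDim (K × K) + 1 ∧ topDim (K × K) ≤ 2 * topDim K ∧
      (topDim (K × K) = 2 * topDim K ∨ topDim (K × K) + 1 = 2 * topDim K) := by
  obtain ⟨n, hn⟩ := ENat.ne_top_iff_exists.1 hfin
  have hD : DimLE n K := DimLE.of_topDim hn.symm.le
  have hup : topDim (K × K) ≤ ((2 * n : ℕ) : ℕ∞) := hD.prod_self.topDim_le
  obtain ⟨m, hm⟩ := ENat.ne_top_iff_exists.1 (ne_top_of_le_ne_top (ENat.coe_ne_top _) hup)
  have hm2 : m ≤ 2 * n := by rw [← hm] at hup; exact_mod_cast hup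
  have hDD : DimLE m (K × K) := DimLE.of_topDim hm.symm.le
  have hmin : ∀ j, DimLE j K → n ≤ j := by
    intro j hj
    have := hj.topDim_le
    rw [← hn] at this
    exact_mod_cast this
  have hlow : 2 * n ≤ m + 1 := by
    by_contra hcon
    push Not at hcon
    rcases Nat.lt_or_ge n 2 with h2 | h2
    · have h1 : n = 1 := by omega
      have h0 : m = 0 := by omega
      subst h0
      have hdiag : DimLE 0 K := hDD.closedEmbedding (f := fun x => (x, x))
        ((continuous_id.prodMk continuous_id).isClosedEmbedding fun x y h => congrArg Prod.fst h)
      have := hmin 0 hdiag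
      omega
    · obtain ⟨M, rfl⟩ : ∃ M, n = M + 1 := ⟨n - 1, by omega⟩
      have hDD' : DimLE (2 * (M + 1) - 2) (K × K) := by
        apply DimLE.of_topDim
        rw [← hm]
        exact_mod_cast (by omega : m ≤ 2 * (M + 1) - 2)
      have := hmin M (dim_drop (by omega) hD hDD')
      omega
  rw [← hn, ← hm]
  refine ⟨by exact_mod_cast hlow, by exact_mod_cast hm2, ?_⟩
  rcases (by omega : m = 2 * n ∨ m + 1 = 2 * n) with h | h
  · left; exact_mod_cast h
  · right; exact_mod_cast h

end MeanDimPaper
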